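/- arXiv:2104.01354 — 2 statements merged into one kernel-verified Lean document; each statement's English description precedes it below -/
import Mathlib

section
/- Let α ≤ β ≤ −1 be negative integers, let M = (M_i)_{i≥0} be real parameters with M_i ∉ {0,1}, and let F be a finite set of positive integers with {−β, …, −α−β−1} ⊆ F. Assume Ω_{M,F}^{α,β}(x) ≠ 0 for all x ∈ [−1,1]. Then for every n ∈ ℕ with n ∉ F, the squared L²-norm ∫_{−1}^{1} (P_{n+u_F}^{α,β;M,F}(x))² · (1−x)^{α+n_F}(1+x)^{β+n_F}/(Ω_{M,F}^{α,β}(x))² dx equals 2^{α+β+1}·ϱ_n^M·(∏_{f∈F}(n−f))·(∏_{u∈U_F}(n+u+1))·∏_{i=1}^{−α}(n+α+β+i) / (2n+α+β+1), where ϱ_n^M = −(1−M_{−β−1−n})²/M_{−β−1−n} if 0 ≤ n ≤ −β−1 and ϱ_n^M = 1 otherwise, and U_F = {f+α+β : f ∈ F, 1 ≤ f ≤ −β−1} ∪ {f+α+β : f ∈ F, f ≥ −α−β}. -/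
open Finset MeasureTheory

noncomputable section ExceptionalHahnJacobi

/-- Pochhammer symbol `(z)_m = z (z+1) ⋯ (z+m-1)`. -/
def poch (z : ℝ) (m : ℕ) : ℝ := ∏ i ∈ Finset.range m, (z + (i : ℝ))

/-- Pochhammer symbol with integer exponent; `(z)_{-k} = 1 / ((z-1)(z-2)⋯(z-k))`. -/
def pochZ (z : ℝ) (m : ℤ) : ℝ :=
  if 0 ≤ m then poch z m.toNat else 1 / poch (z - ((-m).toNat : ℝ)) (-m).toNat

/-- Generalized binomial coefficient `C(z, k) = z(z-1)⋯(z-k+1)/k!`. -/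
def genBinom (z : ℝ) (k : ℕ) : ℝ := (∏ i ∈ Finset.range k, (z - (i : ℝ))) / (k.factorial : ℝ)

/-- `λ^{a,b}(x) = x (x + a + b + 1)`. -/
def lam (a b x : ℝ) : ℝ := x * (x + a + b + 1)

/-- Hahn polynomial `h_n^{a,b,N}(x)`. -/
def hahn (a b N : ℝ) (n : ℕ) (x : ℝ) : ℝ :=
  ∑ j ∈ Finset.range (n + 1),
    poch (-(n : ℝ)) j * poch (a + b + (n : ℝ) + 1) j * poch (-N + (j : ℝ)) (n - j) *
      poch (a + (j : ℝ) + 1) (n - j) * poch (-x) j / (j.factorial : ℝ)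

/-- Dual Hahn polynomial `R_n^{a,b,N}(x)`. -/
def dualHahn (a b N : ℝ) (n : ℕ) (x : ℝ) : ℝ :=
  ∑ j ∈ Finset.range (n + 1),
    poch (-(n : ℝ)) j * poch (-N + (j : ℝ)) (n - j) * poch (a + (j : ℝ) + 1) (n - j) /
        ((n.factorial : ℝ) * (-1 : ℝ) ^ j * (j.factorial : ℝ)) *
      ∏ i ∈ Finset.range j, (x - (i : ℝ) * (a + b + 1 + (i : ℝ)))

/-- Dual Hahn polynomial with integer degree; zero for negative degree. -/
def dualHahnZ (a b N : ℝ) (m : ℤ) (x : ℝ) : ℝ :=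
  if 0 ≤ m then dualHahn a b N m.toNat x else 0

/-- Jacobi polynomial `P_n^{a,b}(x)`. -/
def jacobiP (a b : ℝ) (n : ℕ) (x : ℝ) : ℝ :=
  (2 : ℝ)⁻¹ ^ n * ∑ j ∈ Finset.range (n + 1),
    genBinom ((n : ℝ) + a) j * genBinom ((n : ℝ) + b) (n - j) * (x - 1) ^ (n - j) * (x + 1) ^ j

/-- The function `φ_u^{α,β,N}(s,x)`, a normalized terminating ₃F₂. -/
def phiH (α β : ℤ) (N : ℝ) (u : ℕ) (s x : ℝ) : ℝ :=
  poch ((α : ℝ) + 1) (max u (-α - β - (u : ℤ) - 1).toNat) *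
    poch (-N) (max u (-α - β - (u : ℤ) - 1).toNat) *
    ∑ j ∈ Finset.range (u + 1),
      poch (-(u : ℝ)) j * poch ((u : ℝ) - s + (α : ℝ) + (β : ℝ) + 1) j * poch (-x) j /
        (poch ((α : ℝ) - s + 1) j * poch (-N) j * (j.factorial : ℝ))

/-- The polynomials `Ĥ_n^{α,β,N;M}(x)`. -/
def Hhat (α β : ℤ) (N : ℝ) (M : ℕ → ℝ) (n : ℕ) (x : ℝ) : ℝ :=
  if ⌈((-α - β : ℤ) : ℚ) / 2⌉ ≤ (n : ℤ) ∧ (n : ℤ) ≤ -α - 1 then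
    deriv (fun s => phiH α β N n s x) 0 -
      deriv (fun s => phiH α β N (-α - β - (n : ℤ) - 1).toNat s x) 0
  else if -α ≤ (n : ℤ) ∧ (n : ℤ) ≤ -α - β - 1 then
    (-1 : ℝ) ^ ((β : ℤ) + (n : ℤ)) * ((β + (n : ℤ)).toNat.factorial : ℝ) *
      (((-α - β - (n : ℤ) - 1).toNat.factorial : ℝ) * poch (-x) (-α).toNat *
          hahn (-(α : ℝ)) (β : ℝ) ((α : ℝ) + N) ((α + (n : ℤ)).toNat) (x + (α : ℝ)) +
        (((α + (n : ℤ)).toNat.factorial : ℝ)) *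
            poch (-N - (α : ℝ) - (β : ℝ) - (n : ℝ) - 1) (2 * (n : ℤ) + α + β + 1).toNat /
            (M ((α + (n : ℤ)).toNat) - 1) *
          hahn (α : ℝ) (β : ℝ) N ((-α - β - (n : ℤ) - 1).toNat) x)
  else hahn (α : ℝ) (β : ℝ) N n x

/-- The function `φ_u^{α,β}(s,x)`, a normalized terminating ₂F₁. -/
def phiJ (α β : ℤ) (u : ℕ) (s x : ℝ) : ℝ :=
  poch ((α : ℝ) + 1) (max u (-α - β - (u : ℤ) - 1).toNat) /
      ((max u.factorial (-α - β - (u : ℤ) - 1).toNat.factorial : ℕ) : ℝ) *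
    ∑ j ∈ Finset.range (u + 1),
      poch (-(u : ℝ)) j * poch ((u : ℝ) - s + (α : ℝ) + (β : ℝ) + 1) j /
          (poch ((α : ℝ) - s + 1) j * (j.factorial : ℝ)) * ((1 - x) / 2) ^ j

/-- The polynomials `P̂_n^{α,β;M}(x)`. -/
def Phat (α β : ℤ) (M : ℕ → ℝ) (n : ℕ) (x : ℝ) : ℝ :=
  if ⌈((-α - β : ℤ) : ℚ) / 2⌉ ≤ (n : ℤ) ∧ (n : ℤ) ≤ -α - 1 then
    deriv (fun s => phiJ α β n s x) 0 -
      deriv (fun s => phiJ α β (-α - β - (n : ℤ) - 1).toNat s x) 0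
  else if -α ≤ (n : ℤ) ∧ (n : ℤ) ≤ -α - β - 1 then
    (-1 : ℝ) ^ ((β : ℤ) + (n : ℤ)) *
      ((((n : ℤ) + α).toNat.factorial : ℝ) * (((n : ℤ) + β).toNat.factorial : ℝ) *
        ((-α - β - (n : ℤ) - 1).toNat.factorial : ℝ)) / (n.factorial : ℝ) *
      ((M ((α + (n : ℤ)).toNat) - 1)⁻¹ * jacobiP (α : ℝ) (β : ℝ) ((-α - β - (n : ℤ) - 1).toNat) x +
        ((1 - x) / 2) ^ (-α).toNat * jacobiP (-(α : ℝ)) (β : ℝ) ((α + (n : ℤ)).toNat) x)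
  else jacobiP (α : ℝ) (β : ℝ) n x

/-- `u_F = Σ_{f ∈ F} f - C(n_F + 1, 2)`. -/
def uF (F : Finset ℕ) : ℕ := (∑ f ∈ F, f) - (F.card + 1).choose 2

/-- `n ∈ σ_F = {u_F, u_F + 1, …} \ {u_F + f : f ∈ F}`. -/
def inSigma (F : Finset ℕ) (n : ℕ) : Prop := uF F ≤ n ∧ n - uF F ∉ F

/-- The `i`-th element of `F` in increasing order. -/
def elemOf (F : Finset ℕ) (i : Fin F.card) : ℕ := ((F.orderIsoOfFin rfl i : {x // x ∈ F}) : ℕ)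

/-- The `i`-th element of a finite set of integers, in increasing order. -/
def elemOfZ (S : Finset ℤ) (i : Fin S.card) : ℤ := ((S.orderIsoOfFin rfl i : {x // x ∈ S}) : ℤ)

/-- Exceptional Hahn polynomial `h_n^{α,β,N;M,F}(x)`. -/
def exHahn (α β : ℤ) (N : ℝ) (M : ℕ → ℝ) (F : Finset ℕ) (n : ℕ) (x : ℝ) : ℝ :=
  Matrix.det (Matrix.of fun i j : Fin (F.card + 1) =>
    Fin.cases (Hhat α β N M (n - uF F) (x + ((j : ℕ) : ℝ)))
      (fun k => Hhat α β N M (elemOf F k) (x + ((j : ℕ) : ℝ))) i)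

/-- The polynomial `Ω_{M,F}^{α,β,N}(x)`. -/
def OmegaH (α β : ℤ) (N : ℝ) (M : ℕ → ℝ) (F : Finset ℕ) (x : ℝ) : ℝ :=
  Matrix.det (Matrix.of fun i j : Fin F.card =>
    Hhat α β N M (elemOf F i) (x + ((j : ℕ) : ℝ)))

/-- The polynomial `Λ_{M,F}^{α,β,N}(x)` (columns `j ∈ {1,…,n_F+1}`, `j ≠ n_F`). -/
def LambdaH (α β : ℤ) (N : ℝ) (M : ℕ → ℝ) (F : Finset ℕ) (x : ℝ) : ℝ :=
  Matrix.det (Matrix.of fun i j : Fin F.card =>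
    Hhat α β N M (elemOf F i)
      (x + ((if (j : ℕ) = F.card - 1 then F.card else (j : ℕ) : ℕ) : ℝ)))

/-- Exceptional Jacobi polynomial `P_n^{α,β;M,F}(x)`. -/
def exJacobi (α β : ℤ) (M : ℕ → ℝ) (F : Finset ℕ) (n : ℕ) (x : ℝ) : ℝ :=
  Matrix.det (Matrix.of fun i j : Fin (F.card + 1) =>
    Fin.cases (iteratedDeriv (j : ℕ) (Phat α β M (n - uF F)) x)
      (fun k => iteratedDeriv (j : ℕ) (Phat α β M (elemOf F k)) x) i)

/-- The polynomial `Ω_{M,F}^{α,β}(x)`. -/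
def OmegaJ (α β : ℤ) (M : ℕ → ℝ) (F : Finset ℕ) (x : ℝ) : ℝ :=
  Matrix.det (Matrix.of fun i j : Fin F.card =>
    iteratedDeriv (j : ℕ) (Phat α β M (elemOf F i)) x)

/-- `F_ext = F \ {-β, …, -α-β-1}`. -/
def Fext (α β : ℤ) (F : Finset ℕ) : Finset ℕ :=
  F.filter fun f : ℕ => ((f : ℤ) < -β ∨ -α - β ≤ (f : ℤ))

/-- Admissibility of the data `α, β, M, F`. -/
def IsAdmissible (α β : ℤ) (M : ℕ → ℝ) (F : Finset ℕ) : Prop :=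
  (∀ i : ℕ, (i : ℤ) ≤ -β - 1 → (∀ f ∈ F, (i : ℤ) ≠ -β - (f : ℤ) - 1) →
      Real.sign (M i) =
        Real.sign (∏ f ∈ Fext α β F, (((i : ℝ) - (f : ℝ) - (α : ℝ)) * ((i : ℝ) + (f : ℝ) + (β : ℝ) + 1)))) ∧
  (∀ x : ℤ, 0 ≤ x → (∃ f ∈ F, x ≤ (f : ℤ) + α + β) →
      0 ≤ ∏ f ∈ F.filter (fun f : ℕ => -α - β ≤ (f : ℤ)), (x - (f : ℤ) - α - β))

/-- `U_{F-} = {f + α + β : f ∈ F, 1 ≤ f ≤ -β-1}`. -/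
def UFm (α β : ℤ) (F : Finset ℕ) : Finset ℤ :=
  (F.filter fun f : ℕ => (1 ≤ f ∧ (f : ℤ) ≤ -β - 1)).image fun f : ℕ => (f : ℤ) + α + β

/-- `U_{F+} = {f + α + β : f ∈ F, f ≥ -α-β}`. -/
def UFp (α β : ℤ) (F : Finset ℕ) : Finset ℤ :=
  (F.filter fun f : ℕ => -α - β ≤ (f : ℤ)).image fun f : ℕ => (f : ℤ) + α + β

/-- `U_F = U_{F-} ∪ U_{F+}`. -/
def UF (α β : ℤ) (F : Finset ℕ) : Finset ℤ := UFm α β F ∪ UFp α β F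

/-- The weight of the measure `ω_{α,β,N}^{M,F}` at the point `x`. -/
def wH (α β : ℤ) (N : ℕ) (M : ℕ → ℝ) (F : Finset ℕ) (x : ℕ) : ℝ :=
  genBinom ((α : ℝ) + (F.card : ℝ) + (x : ℝ)) x *
      genBinom ((β : ℝ) + (N : ℝ) - (x : ℝ)) (N - F.card - x) /
    (OmegaH α β (N : ℝ) M F (x : ℝ) * OmegaH α β (N : ℝ) M F ((x : ℝ) + 1))

/-- The weight `ω_{α,β;M,F}(x)` on `[-1,1]`. -/
def wJ (α β : ℤ) (M : ℕ → ℝ) (F : Finset ℕ) (x : ℝ) : ℝ :=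
  (1 - x) ^ (α + (F.card : ℤ)) * (1 + x) ^ (β + (F.card : ℤ)) / (OmegaJ α β M F x) ^ 2

/-- The measure on `[-1,1]` with density `ω_{α,β;M,F}`. -/
def jacobiMeasure (α β : ℤ) (M : ℕ → ℝ) (F : Finset ℕ) : Measure ℝ :=
  (volume.restrict (Set.Icc (-1 : ℝ) 1)).withDensity fun x => ENNReal.ofReal (wJ α β M F x)

/-- Mass of the dual Hahn measure `ρ_{b,a,N̂}` at `λ^{a,b}(x)`. -/
def rhoMass (a b Nh : ℤ) (x : ℕ) : ℝ :=
  (2 * (x : ℝ) + (a : ℝ) + (b : ℝ) + 1) * poch ((b : ℝ) + 1) x * poch (-(Nh : ℝ)) x *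
      (Nh.toNat.factorial : ℝ) /
    ((-1 : ℝ) ^ x * poch ((x : ℝ) + (a : ℝ) + (b : ℝ) + 1) (Nh + 1).toNat *
      poch ((a : ℝ) + 1) x * (x.factorial : ℝ))

/-- Mass of the measure `ν_{a,b,N̂}^{M}` at `λ^{a,b}(s)`. -/
def nuMass (a b Nh : ℤ) (M : ℕ → ℝ) (s : ℤ) : ℝ :=
  if -b ≤ s ∧ s ≤ -1 then
    (2 * (s : ℝ) + (a : ℝ) + (b : ℝ) + 1) * poch ((Nh : ℝ) + 1 - (s : ℝ)) (s + b).toNat /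
        poch ((Nh : ℝ) + (b : ℝ) + 1) (s + a + 1).toNat * M ((s + b).toNat)
  else if 0 ≤ s ∧ s ≤ Nh then
    poch ((Nh : ℝ) + 1) b.toNat ^ 2 / poch ((b : ℝ) + 1) (a - b).toNat * rhoMass a b Nh s.toNat /
      ∏ i ∈ Finset.range b.toNat, (((s : ℝ) + (a : ℝ) + (i : ℝ) + 1) * ((s : ℝ) + (b : ℝ) - (i : ℝ)))
  else 0

/-- `ζ_v` (defined for any integer `v` via `pochZ`). -/
def zetaH (α β : ℤ) (N : ℝ) (v : ℤ) : ℝ :=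
  pochZ (-N - (α : ℝ) - (β : ℝ)) v * poch ((v : ℝ) + 1) (-α).toNat *
    ((v - α - β).toNat.factorial : ℝ)

/-- `θ_v^M`. -/
def thetaM (β : ℤ) (M : ℕ → ℝ) (v : ℕ) : ℝ :=
  if (v : ℤ) ≤ -β - 1 then 1 - M ((-β - 1 - (v : ℤ)).toNat) else 1

/-- `τ_v = ∏_{u ∈ U_F} (λ^{a,b}(v+α+β) - λ^{a,b}(u))` with `a = -α`, `b = -β`. -/
def tauH (α β : ℤ) (F : Finset ℕ) (v : ℕ) : ℝ :=
  ∏ u ∈ UF α β F,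
    (lam ((-α : ℤ) : ℝ) ((-β : ℤ) : ℝ) ((v : ℝ) + (α : ℝ) + (β : ℝ)) -
      lam ((-α : ℤ) : ℝ) ((-β : ℤ) : ℝ) ((u : ℤ) : ℝ))

/-- `ξ_n`. -/
def xiH (α β : ℤ) (N : ℝ) (F : Finset ℕ) (n : ℕ) : ℝ :=
  pochZ (N - (n : ℝ) + 1) ((n : ℤ) + α + β) ^ (α + (F.card : ℤ) + 1) *
    ∏ j ∈ Finset.range (F.card + 1), poch (N - (n : ℝ) - (j : ℝ) + 1) j

/-- `κ_M`. -/
def kappaM (α β : ℤ) (N : ℝ) (M : ℕ → ℝ) (F : Finset ℕ) : ℝ :=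
  (∏ u ∈ UFm α β F, (1 - M ((-u + α - 1).toNat))) * ∏ u ∈ UF α β F, zetaH α β N u

/-- Entry `(i,j)` (0-based) of the determinant defining `q_n^{a,b,N̂;M,U_F}`. -/
def qEntry (α β : ℤ) (N : ℝ) (M : ℕ → ℝ) (F : Finset ℕ) (n : ℕ) (x : ℝ) (i j : ℕ) : ℝ :=
  if i = 0 then
    (-1 : ℝ) ^ j * dualHahnZ (((-α).toNat : ℝ)) (((-β).toNat : ℝ)) (N + (α : ℝ) + (β : ℝ))
      ((n : ℤ) - (-α).toNat + j) x
  else if h1 : i - 1 < (UFm α β F).card then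
    (-1 : ℝ) ^ j * dualHahnZ (((-α).toNat : ℝ)) (((-β).toNat : ℝ)) (N + (α : ℝ) + (β : ℝ))
      ((n : ℤ) - (-α).toNat + j)
      (lam (((-α).toNat : ℝ)) (((-β).toNat : ℝ)) ((elemOfZ (UFm α β F) ⟨i - 1, h1⟩ : ℤ) : ℝ))
  else if i - 1 - (UFm α β F).card < (-α).toNat then
    poch (((-α).toNat : ℝ) + ((-β).toNat : ℝ) + (N + (α : ℝ) + (β : ℝ)) - (n : ℝ) - (j : ℝ) + 1) j *
      Hhat α β (-2 - (N + (α : ℝ) + (β : ℝ))) M ((-β).toNat + (i - 1 - (UFm α β F).card))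
        (-(n : ℝ) + ((-α).toNat : ℝ) - (j : ℝ) - 1)
  else if h3 : i - 1 - (UFm α β F).card - (-α).toNat < (UFp α β F).card then
    (-1 : ℝ) ^ j * dualHahnZ (((-α).toNat : ℝ)) (((-β).toNat : ℝ)) (N + (α : ℝ) + (β : ℝ))
      ((n : ℤ) - (-α).toNat + j)
      (lam (((-α).toNat : ℝ)) (((-β).toNat : ℝ))
        ((elemOfZ (UFp α β F) ⟨i - 1 - (UFm α β F).card - (-α).toNat, h3⟩ : ℤ) : ℝ))
  else 0

/-- The Krall dual Hahn orthogonal polynomial `q_n^{a,b,N̂;M,U_F}(x)`. -/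
def qKrall (α β : ℤ) (N : ℝ) (M : ℕ → ℝ) (F : Finset ℕ) (n : ℕ) (x : ℝ) : ℝ :=
  Matrix.det (Matrix.of fun i j : Fin (1 + (UFm α β F).card + (-α).toNat + (UFp α β F).card) =>
      qEntry α β N M F n x (i : ℕ) (j : ℕ)) /
    ((-1 : ℝ) ^ ((n + (-α).toNat + (-β).toNat) * ((UF α β F).card + 1) +
        ((-α).toNat + (-β).toNat).choose 2 + ((-β).toNat).choose 2 + (-α).toNat) *
      ∏ u ∈ UF α β F, (x - lam (((-α).toNat : ℝ)) (((-β).toNat : ℝ)) ((u : ℤ) : ℝ)))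

/-- Row used in the renormalized determinant `P̄`: for `-α ≤ g ≤ -α-β-1` it is
`(M_{α+g} - 1) · P̂_g` written without the division by `M_{α+g} - 1`. -/
def PhatBarRow (α β : ℤ) (M : ℕ → ℝ) (g : ℕ) (x : ℝ) : ℝ :=
  if -α ≤ (g : ℤ) ∧ (g : ℤ) ≤ -α - β - 1 then
    (-1 : ℝ) ^ ((β : ℤ) + (g : ℤ)) *
      ((((g : ℤ) + α).toNat.factorial : ℝ) * (((g : ℤ) + β).toNat.factorial : ℝ) *
        ((-α - β - (g : ℤ) - 1).toNat.factorial : ℝ)) / (g.factorial : ℝ) *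
      (jacobiP (α : ℝ) (β : ℝ) ((-α - β - (g : ℤ) - 1).toNat) x +
        (M ((α + (g : ℤ)).toNat) - 1) * ((1 - x) / 2) ^ (-α).toNat *
          jacobiP (-(α : ℝ)) (β : ℝ) ((α + (g : ℤ)).toNat) x)
  else Phat α β M g x

/-- The renormalized exceptional Jacobi polynomial
`P̄_n^{α,β;M,F} = (∏_{i=0}^{-β-1} (M_i - 1)) · P_n^{α,β;M,F}`
(written so that the factors `M_i - 1` are distributed into the corresponding rows of the
determinant; this agrees with the product formula whenever all `M_i ≠ 1`). -/
def Pbar (α β : ℤ) (M : ℕ → ℝ) (F : Finset ℕ) (n : ℕ) (x : ℝ) : ℝ :=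
  (∏ i ∈ (Finset.range (-β).toNat).filter
      (fun i : ℕ => (((i : ℤ) - α).toNat ∉ F ∧ ((i : ℤ) - α).toNat ≠ n - uF F)), (M i - 1)) *
    Matrix.det (Matrix.of fun r j : Fin (F.card + 1) =>
      Fin.cases (iteratedDeriv (j : ℕ) (PhatBarRow α β M (n - uF F)) x)
        (fun k => iteratedDeriv (j : ℕ) (PhatBarRow α β M (elemOf F k)) x) r)

end ExceptionalHahnJacobi

/-!
The `P̂_f` are triangular for the Jacobi operator, so the Wronskian with all `f ∈ F` is an iterated
Darboux (Crum) transform `A`, up to the factor `Ω`. Let `w` be the Jacobi weight and `-λ_n` the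
eigenvalue of `u = P̂_n`. Integrating by parts, `∫ (A u)² (1 - x²)^{n_F} w` equals
`∏_{f ∈ F} (λ_n - λ_f) ∫ u² w` plus boundary values of a rational bilinear concomitant, which has
no poles on `[-1, 1]` because `Ω` has no zeros there.

If `n ≥ -α - β`, then `(1 - x)^{-α} (1 + x)^{-β}` divides `P_n^{α,β}`. The boundary values vanish,
and the norm of `P_n^{α,β}` is the classical one for the parameters `-α, -β`.

If `n < -β`, then `λ_n = λ_k` for `k = -α - β - 1 - n ∈ F`, and only boundary values survive. Here
`P̂_k` is proportional to `(M - 1)⁻¹ P_n^{α,β} + S`, where `S` is a second eigenfunction such that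
`(1 - x)^{-α}` divides `S` and `(1 + x)^{-β}` divides `P_n^{α,β} - S`. At `P̂_k` the concomitant is
`(1 - x²) w` times the Wronskian of `P̂_k` and `P_n^{α,β}`, a constant. Up to terms that vanish at
the endpoint, `P̂_k` is `(M - 1)⁻¹ P_n^{α,β}` at `1` and `M (M - 1)⁻¹ P_n^{α,β}` at `-1`, so the
boundary values carry the factors `M - 1` and `(M - 1) / M`, with difference `(1 - M)² / M`.
-/

section Crum

open scoped Matrix

variable {k K : Type*} [CommRing k] [Field K] [Algebra k K] (D : Derivation k K K) (f : ℕ → K)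

/-- The iterated Darboux (Crum) operators `A₀ = id`, `A_{n+1} = (D - D φₙ / φₙ) ∘ Aₙ` with
`φₙ = Aₙ fₙ`: the monic differential operators annihilating `f₀, …, f_{n-1}`. If `φₙ = 0` the
logarithmic derivative is the junk value `0`, and `A_{n+1}` still annihilates `fₙ`. -/
def crumOp : ℕ → K →ₗ[k] K
  | 0 => LinearMap.id
  | n + 1 => D.toLinearMap ∘ₗ crumOp n -
      LinearMap.mulLeft k (D (crumOp n (f n)) / crumOp n (f n)) ∘ₗ crumOp n

/-- The logarithmic derivative `D φₙ / φₙ` used in the `n`-th Darboux step. -/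
def crumRate (n : ℕ) : K := D (crumOp D f n (f n)) / crumOp D f n (f n)

theorem crumOp_zero (y : K) : crumOp D f 0 y = y := rfl

theorem crumOp_succ (n : ℕ) (y : K) :
    crumOp D f (n + 1) y = D (crumOp D f n y) - crumRate D f n * crumOp D f n y := rfl

theorem crumRate_mul {n : ℕ} (h : crumOp D f n (f n) ≠ 0) :
    crumRate D f n * crumOp D f n (f n) = D (crumOp D f n (f n)) :=
  div_mul_cancel₀ _ h

theorem crumOp_apply_of_lt {i n : ℕ} (h : i < n) : crumOp D f n (f i) = 0 := by
  induction n, h using Nat.le_induction with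
  | base =>
    by_cases hφ : crumOp D f i (f i) = 0
    · rw [crumOp_succ, hφ, map_zero, mul_zero, sub_zero]
    · rw [Nat.succ_eq_add_one, crumOp_succ, crumRate_mul D f hφ, sub_self]
  | succ n _ ih => rw [crumOp_succ, ih, map_zero, mul_zero, sub_zero]

theorem crumOp_congr {f g : ℕ → K} {n : ℕ} (h : ∀ i < n, f i = g i) :
    crumOp D f n = crumOp D g n := by
  induction n with
  | zero => rfl
  | succ n ih =>
    have ih := ih fun i hi => h i (by lia)
    simp only [crumOp, ih, h n n.lt_succ_self]

/-- The coefficient of `D^j` in the Crum operator `Aₙ`. -/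
def crumCoeff : ℕ → ℕ → K
  | 0, 0 => 1
  | 0, _ + 1 => 0
  | n + 1, 0 => D (crumCoeff n 0) - crumRate D f n * crumCoeff n 0
  | n + 1, j + 1 => crumCoeff n j + D (crumCoeff n (j + 1)) - crumRate D f n * crumCoeff n (j + 1)

theorem crumCoeff_of_lt {n j : ℕ} (h : n < j) : crumCoeff D f n j = 0 := by
  induction n generalizing j with
  | zero => obtain ⟨j, rfl⟩ := Nat.exists_eq_succ_of_ne_zero h.ne'; rfl
  | succ n ih =>
    obtain ⟨j, rfl⟩ := Nat.exists_eq_succ_of_ne_zero (Nat.ne_zero_of_lt h)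
    simp [crumCoeff, ih (show n < j by lia), ih (show n < j + 1 by lia)]

theorem crumCoeff_self (n : ℕ) : crumCoeff D f n n = 1 := by
  induction n with
  | zero => rfl
  | succ n ih => simp [crumCoeff, ih, crumCoeff_of_lt D f n.lt_succ_self]

theorem crumOp_eq_sum {n m : ℕ} (h : n < m) (y : K) :
    crumOp D f n y = ∑ j ∈ range m, crumCoeff D f n j * D^[j] y := by
  induction n generalizing m with
  | zero =>
    rw [sum_eq_single_of_mem 0 (mem_range.2 h) fun j _ hj => by
      rw [crumCoeff_of_lt D f (Nat.pos_of_ne_zero hj), zero_mul]]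
    simp [crumCoeff, crumOp_zero]
  | succ n ih =>
    obtain ⟨m, rfl⟩ := Nat.exists_eq_succ_of_ne_zero (Nat.ne_zero_of_lt h)
    have shift : ∑ j ∈ range m, crumCoeff D f n j * D^[j + 1] y =
        ∑ j ∈ range (m + 1), crumCoeff D f n j * D^[j + 1] y := by
      rw [sum_range_succ _ m, crumCoeff_of_lt D f (show n < m by lia), zero_mul, add_zero]
    calc crumOp D f (n + 1) y
        = ∑ j ∈ range (m + 1), crumCoeff D f n j * D^[j + 1] y +
            ∑ j ∈ range (m + 1),
              (D (crumCoeff D f n j) - crumRate D f n * crumCoeff D f n j) * D^[j] y := by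
          rw [crumOp_succ, ih (show n < m + 1 by lia), map_sum, mul_sum, ← sum_sub_distrib,
            ← sum_add_distrib]
          refine sum_congr rfl fun j _ => ?_
          rw [Derivation.leibniz, smul_eq_mul, smul_eq_mul, Function.iterate_succ_apply']
          ring
      _ = _ := by
          rw [← shift, sum_range_succ', sum_range_succ', ← add_assoc, ← sum_add_distrib]
          congr 1
          refine sum_congr rfl fun j _ => ?_
          rw [crumCoeff]
          ring

/-- The Wronskian matrix `(D^j fᵢ)` of `f₀, …, f_{n-1}`. -/
def wronskianMatrix {R : Type*} (D : R → R) (f : ℕ → R) (n : ℕ) : Matrix (Fin n) (Fin n) R :=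
  Matrix.of fun i j => D^[j] (f i)

theorem det_wronskianMatrix (n : ℕ) :
    (wronskianMatrix D f n).det = ∏ i ∈ range n, crumOp D f i (f i) := by
  let coeff : Matrix (Fin n) (Fin n) K := Matrix.of fun j i => crumCoeff D f i j
  have det_coeff : coeff.det = 1 := by
    have upper : coeff.IsUpperTriangular := fun _ _ h => crumCoeff_of_lt D f h
    rw [Matrix.det_of_isUpperTriangular upper]
    exact prod_eq_one fun i _ => crumCoeff_self D f i
  have mul_coeff (i j : Fin n) : (wronskianMatrix D f n * coeff) i j = crumOp D f j (f i) := by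
    rw [crumOp_eq_sum D f j.isLt, ← Fin.sum_univ_eq_sum_range, Matrix.mul_apply]
    exact sum_congr rfl fun _ _ => mul_comm _ _
  rw [← mul_one (Matrix.det _), ← det_coeff, ← Matrix.det_mul, Matrix.det_of_isLowerTriangular,
    ← Fin.prod_univ_eq_prod_range]
  · exact prod_congr rfl fun i _ => mul_coeff i i
  · exact fun i j h => (mul_coeff i j).trans (crumOp_apply_of_lt D f h)

theorem crumOp_self_ne_zero {n i : ℕ} (h : (wronskianMatrix D f n).det ≠ 0) (hi : i < n) :
    crumOp D f i (f i) ≠ 0 := by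
  rw [det_wronskianMatrix, prod_ne_zero_iff] at h
  exact h i (mem_range.2 hi)

theorem det_wronskianMatrix_update (n : ℕ) (y : K) :
    (wronskianMatrix D (Function.update f n y) (n + 1)).det =
      (wronskianMatrix D f n).det * crumOp D f n y := by
  have agree (i : ℕ) (hi : i < n) : Function.update f n y i = f i :=
    Function.update_of_ne hi.ne _ _
  rw [det_wronskianMatrix, det_wronskianMatrix, prod_range_succ, crumOp_congr D agree,
    Function.update_self]
  congr 1
  refine prod_congr rfl fun i hi => ?_
  rw [mem_range] at hi
  rw [agree i hi, crumOp_congr D fun j hj => agree j (hj.trans hi)]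

theorem wronskianMatrix_mulVec_crumCoeff (n : ℕ) :
    wronskianMatrix D f n *ᵥ (fun j => crumCoeff D f n j) = fun i : Fin n => -D^[n] (f i) := by
  ext i
  have h0 := crumOp_apply_of_lt D f i.2
  rw [crumOp_eq_sum D f n.lt_succ_self, sum_range_succ, crumCoeff_self, one_mul,
    ← Fin.sum_univ_eq_sum_range (fun j => crumCoeff D f n j * D^[j] (f i))] at h0
  simpa [Matrix.mulVec, dotProduct, wronskianMatrix, mul_comm] using
    eq_neg_of_add_eq_zero_left h0

theorem crumCoeff_mem {S : Subring K} {n : ℕ} (hf : ∀ i < n, ∀ j, D^[j] (f i) ∈ S)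
    (hdet : (wronskianMatrix D f n).det ≠ 0) (hinv : (wronskianMatrix D f n).det⁻¹ ∈ S) (j : ℕ) :
    crumCoeff D f n j ∈ S := by
  rcases lt_trichotomy n j with h | rfl | h
  · exact crumCoeff_of_lt D f h ▸ S.zero_mem
  · exact crumCoeff_self D f n ▸ S.one_mem
  let W : Matrix (Fin n) (Fin n) S := Matrix.of fun i j => ⟨D^[j] (f i), hf i i.2 j⟩
  have adjugate_mem (i j : Fin n) : (wronskianMatrix D f n).adjugate i j ∈ S := by
    rw [show wronskianMatrix D f n = S.subtype.mapMatrix W from rfl, ← RingHom.map_adjugate]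
    exact (W.adjugate i j).2
  have cramer := congrArg ((wronskianMatrix D f n).adjugate *ᵥ ·)
    (wronskianMatrix_mulVec_crumCoeff D f n)
  simp only [Matrix.mulVec_mulVec, Matrix.adjugate_mul, Matrix.smul_mulVec, Matrix.one_mulVec]
    at cramer
  have entry : (wronskianMatrix D f n).det * crumCoeff D f n j ∈ S := by
    refine Set.mem_of_eq_of_mem (congrFun cramer ⟨j, h⟩) ?_
    rw [Matrix.mulVec, dotProduct]
    exact S.sum_mem fun i _ => S.mul_mem (adjugate_mem _ _) (S.neg_mem (hf i i.2 n))
  simpa [hdet] using S.mul_mem hinv entry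

end Crum

section CrumConcomitant

variable {k K : Type*} [CommRing k] [Field K] [Algebra k K] (D : Derivation k K K) (f : ℕ → K)
  (γ : ℕ → K) (c : ℕ → k)

/-- The bilinear concomitant of the Crum operator `Aₙ` against a multiplier `γₙ`, where the
multipliers of consecutive levels satisfy `-D γ_{n+1} - (D φₙ / φₙ) γ_{n+1} = cₙ γₙ`: it is the
expression whose derivative is `γₙ Aₙ v - (∏ᵢ cᵢ) γ₀ v`, see `deriv_crumConcomitant`. -/
def crumConcomitant : ℕ → K →ₗ[k] K
  | 0 => 0
  | n + 1 => LinearMap.mulLeft k (γ (n + 1)) ∘ₗ crumOp D f n + c n • crumConcomitant n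

theorem crumConcomitant_succ (n : ℕ) (v : K) :
    crumConcomitant D f γ c (n + 1) v =
      γ (n + 1) * crumOp D f n v + c n • crumConcomitant D f γ c n v := rfl

/-- The coefficient of `D^j v` in the concomitant `crumConcomitant n v`. -/
def concomitantCoeff : ℕ → ℕ → K
  | 0, _ => 0
  | n + 1, j => γ (n + 1) * crumCoeff D f n j + c n • concomitantCoeff n j

theorem concomitantCoeff_of_le {n j : ℕ} (h : n ≤ j) : concomitantCoeff D f γ c n j = 0 := by
  induction n with
  | zero => rfl
  | succ n ih => rw [concomitantCoeff, crumCoeff_of_lt D f h, ih (by lia), mul_zero, smul_zero,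
      add_zero]

theorem crumConcomitant_eq_sum {n m : ℕ} (h : n ≤ m) (v : K) :
    crumConcomitant D f γ c n v = ∑ j ∈ range m, concomitantCoeff D f γ c n j * D^[j] v := by
  induction n with
  | zero => simp [crumConcomitant, concomitantCoeff]
  | succ n ih =>
    rw [crumConcomitant_succ, crumOp_eq_sum D f h, ih (by lia), mul_sum, smul_sum,
      ← sum_add_distrib]
    refine sum_congr rfl fun j _ => ?_
    rw [concomitantCoeff, add_mul, smul_mul_assoc, mul_assoc]

variable {D f γ c}

theorem concomitantCoeff_add_deriv {n : ℕ}
    (hγ : ∀ i < n, D (γ (i + 1)) = -(crumRate D f i * γ (i + 1)) - c i • γ i) (j : ℕ) :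
    concomitantCoeff D f γ c n j + D (concomitantCoeff D f γ c n (j + 1)) =
      γ n * crumCoeff D f n (j + 1) := by
  induction n with
  | zero => simp [concomitantCoeff, crumCoeff]
  | succ n ih =>
    have ih := ih fun i hi => hγ i (by lia)
    simp only [concomitantCoeff, crumCoeff, map_add, Derivation.leibniz, Derivation.map_smul,
      hγ n n.lt_succ_self, smul_eq_mul]
    simp only [Algebra.smul_def]
    linear_combination algebraMap k K (c n) * ih

theorem deriv_crumConcomitant {n : ℕ}
    (hγ : ∀ i < n, D (γ (i + 1)) = -(crumRate D f i * γ (i + 1)) - c i • γ i) (v : K) :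
    D (crumConcomitant D f γ c n v) =
      γ n * crumOp D f n v - (∏ i ∈ range n, c i) • (γ 0 * v) := by
  induction n with
  | zero => simp [crumConcomitant, crumOp_zero]
  | succ n ih =>
    have ih := ih fun i hi => hγ i (by lia)
    simp only [crumConcomitant_succ, crumOp_succ, map_add, Derivation.leibniz,
      Derivation.map_smul, hγ n n.lt_succ_self, smul_eq_mul, prod_range_succ]
    simp only [Algebra.smul_def, map_mul] at ih ⊢
    linear_combination algebraMap k K (c n) * ih

end CrumConcomitant

section SturmLiouville

variable {k K : Type*} [CommRing k] [Field K] [Algebra k K] (D : Derivation k K K) (p s : K)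

/-- The Sturm–Liouville operator `y ↦ p y″ + (s + p′) y′`, which equals `w⁻¹ (p w y′)′` for any
`w` with `p w′ = s w`. -/
def sturmLiouville : K →ₗ[k] K :=
  LinearMap.mulLeft k p ∘ₗ D.toLinearMap ∘ₗ D.toLinearMap +
    LinearMap.mulLeft k (s + D p) ∘ₗ D.toLinearMap

theorem sturmLiouville_apply (y : K) :
    sturmLiouville D p s y = p * D (D y) + (s + D p) * D y := rfl

variable (f : ℕ → K) (Λ : ℕ → k)

/-- The functions `f₀, …, f_{n-1}` form a triangular system for the Sturm–Liouville operator with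
diagonal entries `-Λᵢ`, and their Wronskians do not vanish. -/
structure IsCrumSystem (n : ℕ) : Prop where
  triangular : ∀ i < n,
    sturmLiouville D p s (f i) + Λ i • f i ∈ Submodule.span k (f '' Set.Iio i)
  ne_zero : ∀ i < n, crumOp D f i (f i) ≠ 0

variable {D p s f Λ}

theorem IsCrumSystem.mono {m n : ℕ} (h : IsCrumSystem D p s f Λ n) (hmn : m ≤ n) :
    IsCrumSystem D p s f Λ m where
  triangular i hi := h.triangular i (hi.trans_le hmn)
  ne_zero i hi := h.ne_zero i (hi.trans_le hmn)

theorem crumOp_sturmLiouville_self {n i : ℕ} (h : IsCrumSystem D p s f Λ n) (hi : i < n) :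
    crumOp D f i (sturmLiouville D p s (f i)) = -(Λ i • crumOp D f i (f i)) := by
  have hle : Submodule.span k (f '' Set.Iio i) ≤ LinearMap.ker (crumOp D f i) :=
    Submodule.span_le.2 (by rintro _ ⟨j, hj, rfl⟩; exact crumOp_apply_of_lt D f hj)
  have := LinearMap.mem_ker.1 (hle (h.triangular i hi))
  rw [map_add, map_smul] at this
  exact eq_neg_of_add_eq_zero_left this

/-- One Darboux step: conjugating `p D² + q D + r` by `D - h`, where `h` is the logarithmic
derivative of an eigenfunction, expressed by the Riccati equation for `h`. -/
theorem darboux_step {q r h y : K} {μ : k}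
    (riccati : p * (D h + h ^ 2) + q * h + r = algebraMap k K μ) :
    D (p * D (D y) + q * D y + r * y) - h * (p * D (D y) + q * D y + r * y) =
      p * D (D (D y - h * y)) + (q + D p) * D (D y - h * y) +
        (r + D q + D p * h + 2 * (p * D h)) * (D y - h * y) := by
  have deriv_riccati := congrArg D riccati
  simp only [map_add, map_sub, Derivation.leibniz, Derivation.leibniz_pow, smul_eq_mul,
    Derivation.map_algebraMap, nsmul_eq_mul] at deriv_riccati ⊢
  push_cast at deriv_riccati
  linear_combination y * deriv_riccati

variable (D p s f) in
/-- The zeroth order coefficient of the operator intertwined by `Aₙ` with the Sturm–Liouville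
operator, see `crumOp_sturmLiouville`. -/
def crumPotential : ℕ → K
  | 0 => 0
  | n + 1 => crumPotential n + D (s + (n + 1) * D p) + D p * crumRate D f n +
      2 * (p * D (crumRate D f n))

theorem riccati_of_intertwining {n : ℕ} {q r : K} {μ : k} (hφ : crumOp D f n (f n) ≠ 0)
    (eigen : p * D (D (crumOp D f n (f n))) + q * D (crumOp D f n (f n)) +
      r * crumOp D f n (f n) = μ • crumOp D f n (f n)) :
    p * (D (crumRate D f n) + crumRate D f n ^ 2) + q * crumRate D f n + r =
      algebraMap k K μ := by
  have rate := crumRate_mul D f hφ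
  have deriv_rate := congrArg D rate
  rw [Derivation.leibniz, smul_eq_mul, smul_eq_mul] at deriv_rate
  rw [Algebra.smul_def] at eigen
  refine mul_right_cancel₀ hφ ?_
  linear_combination eigen + p * deriv_rate + (q + p * crumRate D f n) * rate

theorem crumOp_sturmLiouville {n : ℕ} (h : IsCrumSystem D p s f Λ n) (y : K) :
    crumOp D f n (sturmLiouville D p s y) = p * D (D (crumOp D f n y)) +
      (s + (n + 1) * D p) * D (crumOp D f n y) + crumPotential D p s f n * crumOp D f n y := by
  induction n generalizing y with
  | zero => simp [crumOp_zero, sturmLiouville_apply, crumPotential]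
  | succ n ih =>
    have ih := ih (h.mono n.le_succ)
    have eigen := (ih (f n)).symm.trans (crumOp_sturmLiouville_self h n.lt_succ_self)
    rw [← neg_smul] at eigen
    have riccati := riccati_of_intertwining (h.ne_zero n n.lt_succ_self) eigen
    rw [crumOp_succ, ih, darboux_step riccati, ← crumOp_succ, crumPotential]
    push_cast
    ring

theorem crumRate_riccati {n i : ℕ} (h : IsCrumSystem D p s f Λ n) (hi : i < n) :
    p * (D (crumRate D f i) + crumRate D f i ^ 2) + (s + (i + 1) * D p) * crumRate D f i +
      crumPotential D p s f i = -algebraMap k K (Λ i) := by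
  have eigen := (crumOp_sturmLiouville (h.mono hi.le) (f i)).symm.trans
    (crumOp_sturmLiouville_self h hi)
  rw [← neg_smul] at eigen
  rw [riccati_of_intertwining (h.ne_zero i hi) eigen, map_neg]

section Eigenfunction

variable {n : ℕ} {l : k} {u v w : K}

theorem mul_deriv_crumOp_succ (h : IsCrumSystem D p s f Λ n)
    (hu : sturmLiouville D p s u = -(l • u)) {i : ℕ} (hi : i < n) :
    p * D (crumOp D f (i + 1) u) =
      -(s + (i + 1) * D p + p * crumRate D f i) * crumOp D f (i + 1) u -
        (l - Λ i) • crumOp D f i u := by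
  have eigen := crumOp_sturmLiouville (h.mono hi.le) u
  rw [hu, map_neg, map_smul] at eigen
  have riccati := crumRate_riccati h hi
  simp only [crumOp_succ, map_sub, Derivation.leibniz, smul_eq_mul, Algebra.smul_def] at eigen ⊢
  linear_combination -eigen - crumOp D f i u * riccati

variable (D p f w u) in
/-- The multiplier `p^n w Aₙ u` turning the Crum operator `Aₙ` of a Sturm–Liouville system into
one whose adjoint maps it back to a multiple of `w u`. -/
def crumMultiplier (n : ℕ) : K := p ^ n * w * crumOp D f n u

theorem deriv_crumMultiplier_succ (h : IsCrumSystem D p s f Λ n) (hw : p * D w = s * w)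
    (hu : sturmLiouville D p s u = -(l • u)) {i : ℕ} (hi : i < n) :
    D (crumMultiplier D p f u w (i + 1)) =
      -(crumRate D f i * crumMultiplier D p f u w (i + 1)) -
        (l - Λ i) • crumMultiplier D p f u w i := by
  have step := mul_deriv_crumOp_succ h hu hi
  simp only [crumMultiplier, Derivation.leibniz, Derivation.leibniz_pow, smul_eq_mul,
    nsmul_eq_mul, Nat.add_sub_cancel, Nat.cast_add, Nat.cast_one]
  rw [Algebra.smul_def] at step ⊢
  linear_combination p ^ i * w * step + p ^ i * crumOp D f (i + 1) u * hw

theorem crumOp_wronskian (h : IsCrumSystem D p s f Λ n)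
    (hu : sturmLiouville D p s u = -(l • u)) (hv : sturmLiouville D p s v = -(l • v))
    {i : ℕ} (hi : i ≤ n) :
    p ^ i * (crumOp D f i v * D (crumOp D f i u) - D (crumOp D f i v) * crumOp D f i u) =
      (∏ j ∈ range i, (l - Λ j)) • (v * D u - D v * u) := by
  induction i with
  | zero => simp [crumOp_zero]
  | succ i ih =>
    have hi' : i < n := hi
    have ih := ih hi'.le
    have step_u := mul_deriv_crumOp_succ h hu hi'
    have step_v := mul_deriv_crumOp_succ h hv hi'
    simp only [prod_range_succ, Algebra.smul_def, map_mul] at ih step_u step_v ⊢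
    rw [crumOp_succ D f i u, crumOp_succ D f i v] at *
    linear_combination algebraMap k K (l - Λ i) * ih +
      p ^ i * (D (crumOp D f i v) - crumRate D f i * crumOp D f i v) * step_u -
      p ^ i * (D (crumOp D f i u) - crumRate D f i * crumOp D f i u) * step_v

-- The factor `l - Λₘ = 0` kills the levels below `m`, and `Aᵢ fₘ = 0` those above.
theorem crumConcomitant_apply_self (h : IsCrumSystem D p s f Λ n)
    (hu : sturmLiouville D p s u = -(l • u)) {m : ℕ} (hm : m < n)
    (hfm : sturmLiouville D p s (f m) = -(l • f m)) (hΛ : Λ m = l) :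
    crumConcomitant D f (crumMultiplier D p f u w) (fun i => l - Λ i) n (f m) =
      (∏ i ∈ (range n).erase m, (l - Λ i)) • (p * w * (f m * D u - D (f m) * u)) := by
  have base : crumConcomitant D f (crumMultiplier D p f u w) (fun i => l - Λ i) (m + 1) (f m) =
      (∏ i ∈ range m, (l - Λ i)) • (p * w * (f m * D u - D (f m) * u)) := by
    have wronskian := crumOp_wronskian h hu hfm hm.le
    have rate := crumRate_mul D f (h.ne_zero m hm)
    rw [crumConcomitant_succ, hΛ, sub_self, zero_smul, add_zero, crumMultiplier, crumOp_succ]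
    rw [Algebra.smul_def] at wronskian ⊢
    linear_combination p * w * wronskian - p ^ (m + 1) * w * crumOp D f m u * rate
  suffices ∀ i, m < i → i ≤ n →
      crumConcomitant D f (crumMultiplier D p f u w) (fun i => l - Λ i) i (f m) =
        (∏ j ∈ (range i).erase m, (l - Λ j)) • (p * w * (f m * D u - D (f m) * u)) from
    this n hm le_rfl
  intro i hmi
  induction i, hmi using Nat.le_induction with
  | base =>
    intro _
    rw [base, range_add_one, erase_insert notMem_range_self]
  | succ i hmi ih =>
    intro hi
    rw [crumConcomitant_succ, crumOp_apply_of_lt D f hmi, mul_zero, zero_add, ih (by lia),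
      smul_smul, range_add_one, erase_insert_of_ne (by lia), prod_insert (by simp)]

end Eigenfunction

end SturmLiouville

noncomputable section RationalFunctions

open Polynomial

/-- The derivation of `𝕜(X)` extending the derivative of polynomials. It is transported along the
isomorphism `𝕜(X) ⊗ Ω[𝕜[X]⁄𝕜] ≃ Ω[𝕜(X)⁄𝕜]`, available because localizations are formally étale. -/
def ratDeriv (𝕜 : Type*) [Field 𝕜] : Derivation 𝕜 (RatFunc 𝕜) (RatFunc 𝕜) :=
  haveI : Algebra.FormallyEtale 𝕜[X] (RatFunc 𝕜) :=
    Algebra.FormallyEtale.of_isLocalization (nonZeroDivisors 𝕜[X])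
  ((((Algebra.linearMap 𝕜[X] (RatFunc 𝕜)).compDer
      (derivative' (R := 𝕜))).liftKaehlerDifferential.liftBaseChange (RatFunc 𝕜)) ∘ₗ
    (KaehlerDifferential.tensorKaehlerEquivOfFormallyEtale 𝕜 𝕜[X]
      (RatFunc 𝕜)).symm.toLinearMap).compDer (KaehlerDifferential.D 𝕜 (RatFunc 𝕜))

section Field

variable {𝕜 : Type*} [Field 𝕜]

theorem ratDeriv_algebraMap (P : 𝕜[X]) :
    ratDeriv 𝕜 (algebraMap 𝕜[X] (RatFunc 𝕜) P) = algebraMap 𝕜[X] (RatFunc 𝕜) (derivative P) := by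
  have : Algebra.FormallyEtale 𝕜[X] (RatFunc 𝕜) :=
    Algebra.FormallyEtale.of_isLocalization (nonZeroDivisors 𝕜[X])
  simp [ratDeriv, KaehlerDifferential.tensorKaehlerEquivOfFormallyEtale_symm_D_algebraMap]

theorem iterate_ratDeriv_algebraMap (j : ℕ) (P : 𝕜[X]) :
    (ratDeriv 𝕜)^[j] (algebraMap 𝕜[X] (RatFunc 𝕜) P) =
      algebraMap 𝕜[X] (RatFunc 𝕜) (derivative^[j] P) :=
  (Function.Semiconj.iterate_right (f := algebraMap 𝕜[X] (RatFunc 𝕜))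
    (fun P => (ratDeriv_algebraMap P).symm) j P).symm

/-- The rational functions without a pole at `c`. -/
def regularAt (c : 𝕜) : Subring (RatFunc 𝕜) where
  carrier := {z | z.denom.eval c ≠ 0}
  mul_mem' {y z} hy hz h := mul_ne_zero hy hz <| by
    simpa using eval_eq_zero_of_dvd_of_eval_eq_zero (RatFunc.denom_mul_dvd y z) h
  one_mem' := by simp
  add_mem' {y z} hy hz h := mul_ne_zero hy hz <| by
    simpa using eval_eq_zero_of_dvd_of_eval_eq_zero (RatFunc.denom_add_dvd y z) h
  zero_mem' := by simp
  neg_mem' {z} hz h := hz <| eval_eq_zero_of_dvd_of_eval_eq_zero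
    ((RatFunc.denom_dvd z.denom_ne_zero).2 ⟨-z.num, by simp [neg_div]⟩) h

variable {c : 𝕜} {y z : RatFunc 𝕜} {P Q : 𝕜[X]}

theorem mem_regularAt_of_mul_eq (hQ : Q.eval c ≠ 0)
    (h : z * algebraMap 𝕜[X] (RatFunc 𝕜) Q = algebraMap 𝕜[X] (RatFunc 𝕜) P) :
    z ∈ regularAt c := by
  have hQ0 : Q ≠ 0 := by rintro rfl; simp at hQ
  have hdvd : z.denom ∣ Q := (RatFunc.denom_dvd hQ0).2
    ⟨P, by rw [← h, mul_div_cancel_right₀ _ (RatFunc.algebraMap_ne_zero hQ0)]⟩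
  exact fun h0 => hQ (eval_eq_zero_of_dvd_of_eval_eq_zero hdvd h0)

theorem algebraMap_mem_regularAt (P : 𝕜[X]) (c : 𝕜) :
    algebraMap 𝕜[X] (RatFunc 𝕜) P ∈ regularAt c :=
  mem_regularAt_of_mul_eq (P := P) (Q := 1) (by simp) (by simp)

theorem inv_algebraMap_mem_regularAt (hQ : Q.eval c ≠ 0) :
    (algebraMap 𝕜[X] (RatFunc 𝕜) Q)⁻¹ ∈ regularAt c :=
  mem_regularAt_of_mul_eq (P := 1) hQ <| by
    rw [map_one, inv_mul_cancel₀ (RatFunc.algebraMap_ne_zero (by rintro rfl; simp at hQ))]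

theorem mul_denom_eq_num (z : RatFunc 𝕜) :
    z * algebraMap 𝕜[X] (RatFunc 𝕜) z.denom = algebraMap 𝕜[X] (RatFunc 𝕜) z.num := by
  rw [← eq_div_iff (RatFunc.algebraMap_ne_zero z.denom_ne_zero), z.num_div_denom]

theorem ratDeriv_mul_denom_sq (z : RatFunc 𝕜) :
    ratDeriv 𝕜 z * algebraMap 𝕜[X] (RatFunc 𝕜) (z.denom ^ 2) =
      algebraMap 𝕜[X] (RatFunc 𝕜) (derivative z.num * z.denom - z.num * derivative z.denom) := by
  have deriv_eq := congrArg (ratDeriv 𝕜) (mul_denom_eq_num z)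
  rw [Derivation.leibniz, ratDeriv_algebraMap, ratDeriv_algebraMap, smul_eq_mul, smul_eq_mul]
    at deriv_eq
  simp only [map_sub, map_mul, map_pow]
  linear_combination algebraMap 𝕜[X] (RatFunc 𝕜) z.denom * deriv_eq -
    algebraMap 𝕜[X] (RatFunc 𝕜) (derivative z.denom) * mul_denom_eq_num z

theorem ratDeriv_mem_regularAt (hz : z ∈ regularAt c) : ratDeriv 𝕜 z ∈ regularAt c :=
  mem_regularAt_of_mul_eq (by rw [eval_pow]; exact pow_ne_zero 2 hz) (ratDeriv_mul_denom_sq z)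

theorem eval_ratFunc_add (hy : y ∈ regularAt c) (hz : z ∈ regularAt c) :
    (y + z).eval (RingHom.id 𝕜) c = y.eval (RingHom.id 𝕜) c + z.eval (RingHom.id 𝕜) c :=
  RatFunc.eval_add _ _ (by rwa [eval₂_id]) (by rwa [eval₂_id])

theorem eval_ratFunc_mul (hy : y ∈ regularAt c) (hz : z ∈ regularAt c) :
    (y * z).eval (RingHom.id 𝕜) c = y.eval (RingHom.id 𝕜) c * z.eval (RingHom.id 𝕜) c :=
  RatFunc.eval_mul _ _ (by rwa [eval₂_id]) (by rwa [eval₂_id])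

theorem eval_ratFunc_eq_div (hQ : Q.eval c ≠ 0)
    (h : z * algebraMap 𝕜[X] (RatFunc 𝕜) Q = algebraMap 𝕜[X] (RatFunc 𝕜) P) :
    z.eval (RingHom.id 𝕜) c = P.eval c / Q.eval c := by
  have h' := congrArg (RatFunc.eval (RingHom.id 𝕜) c) h
  rw [eval_ratFunc_mul (mem_regularAt_of_mul_eq hQ h) (algebraMap_mem_regularAt Q c)] at h'
  rw [eq_div_iff hQ]
  simpa [eval₂_id] using h'

/-- `z` vanishes at `c` to order at least `e`. -/
def VanishesToOrder (c : 𝕜) (e : ℕ) (z : RatFunc 𝕜) : Prop :=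
  ∃ y ∈ regularAt c, z = algebraMap 𝕜[X] (RatFunc 𝕜) ((X - C c) ^ e) * y

theorem vanishesToOrder_zero_iff : VanishesToOrder c 0 z ↔ z ∈ regularAt c := by
  simp [VanishesToOrder]

theorem vanishesToOrder_zero (e : ℕ) : VanishesToOrder c e (0 : RatFunc 𝕜) :=
  ⟨0, (regularAt c).zero_mem, by simp⟩

theorem VanishesToOrder.sub {e : ℕ} (hy : VanishesToOrder c e y) (hz : VanishesToOrder c e z) :
    VanishesToOrder c e (y - z) := by
  obtain ⟨y, hy, rfl⟩ := hy
  obtain ⟨z, hz, rfl⟩ := hz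
  exact ⟨y - z, (regularAt c).sub_mem hy hz, (mul_sub _ _ _).symm⟩

theorem VanishesToOrder.add {e : ℕ} (hy : VanishesToOrder c e y) (hz : VanishesToOrder c e z) :
    VanishesToOrder c e (y + z) := by
  obtain ⟨y, hy, rfl⟩ := hy
  obtain ⟨z, hz, rfl⟩ := hz
  exact ⟨y + z, (regularAt c).add_mem hy hz, (mul_add _ _ _).symm⟩

theorem VanishesToOrder.sum {ι : Type*} {s : Finset ι} {g : ι → RatFunc 𝕜} {e : ℕ}
    (h : ∀ i ∈ s, VanishesToOrder c e (g i)) : VanishesToOrder c e (∑ i ∈ s, g i) :=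
  sum_induction g (VanishesToOrder c e) (fun _ _ => .add) (vanishesToOrder_zero e) h

theorem VanishesToOrder.mul {d e : ℕ} (hy : VanishesToOrder c d y) (hz : VanishesToOrder c e z) :
    VanishesToOrder c (d + e) (y * z) := by
  obtain ⟨y, hy, rfl⟩ := hy
  obtain ⟨z, hz, rfl⟩ := hz
  exact ⟨y * z, (regularAt c).mul_mem hy hz, by rw [pow_add, map_mul]; ring⟩

theorem VanishesToOrder.mono {d e : ℕ} (hz : VanishesToOrder c e z) (h : d ≤ e) :
    VanishesToOrder c d z := by
  obtain ⟨y, hy, rfl⟩ := hz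
  refine ⟨_, (regularAt c).mul_mem (algebraMap_mem_regularAt ((X - C c) ^ (e - d)) c) hy, ?_⟩
  rw [← mul_assoc, ← map_mul, ← pow_add, Nat.add_sub_cancel' h]

theorem VanishesToOrder.ratDeriv {e : ℕ} (hz : VanishesToOrder c e z) :
    VanishesToOrder c (e - 1) (ratDeriv 𝕜 z) := by
  obtain ⟨y, hy, rfl⟩ := hz
  rw [Derivation.leibniz, ratDeriv_algebraMap, derivative_pow, smul_eq_mul, smul_eq_mul]
  refine .add (.mono ⟨_, ratDeriv_mem_regularAt hy, rfl⟩ (Nat.sub_le e 1)) ?_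
  refine ⟨algebraMap 𝕜[X] (RatFunc 𝕜) (C (e : 𝕜)) * y,
    (regularAt c).mul_mem (algebraMap_mem_regularAt _ c) hy, ?_⟩
  simp only [derivative_sub, derivative_X, derivative_C, sub_zero, mul_one, map_mul]
  ring

theorem VanishesToOrder.iterate_ratDeriv {e : ℕ} (hz : VanishesToOrder c e z) (j : ℕ) :
    VanishesToOrder c (e - j) ((_root_.ratDeriv 𝕜)^[j] z) := by
  induction j with
  | zero => exact hz
  | succ j ih => exact Function.iterate_succ_apply' (_root_.ratDeriv 𝕜) j z ▸ ih.ratDeriv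

theorem vanishesToOrder_algebraMap {e : ℕ} (h : (X - C c) ^ e ∣ P) :
    VanishesToOrder c e (algebraMap 𝕜[X] (RatFunc 𝕜) P) := by
  obtain ⟨Q, rfl⟩ := h
  exact ⟨_, algebraMap_mem_regularAt Q c, map_mul _ _ _⟩

theorem VanishesToOrder.mem_regularAt {e : ℕ} (hz : VanishesToOrder c e z) : z ∈ regularAt c :=
  vanishesToOrder_zero_iff.1 (hz.mono e.zero_le)

theorem VanishesToOrder.eval_eq_zero (hz : VanishesToOrder c 1 z) :
    z.eval (RingHom.id 𝕜) c = 0 := by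
  obtain ⟨y, hy, rfl⟩ := hz
  rw [eval_ratFunc_mul (algebraMap_mem_regularAt _ c) hy, RatFunc.eval_algebraMap]
  simp

end Field

section Calculus

theorem hasDerivAt_eval_ratFunc {𝕜 : Type*} [NontriviallyNormedField 𝕜] {z : RatFunc 𝕜} {x : 𝕜}
    (hz : z ∈ regularAt x) :
    HasDerivAt (fun x => z.eval (RingHom.id 𝕜) x) ((ratDeriv 𝕜 z).eval (RingHom.id 𝕜) x) x := by
  have deriv_eq := eval_ratFunc_eq_div (by rw [eval_pow]; exact pow_ne_zero 2 hz)
    (ratDeriv_mul_denom_sq z)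
  rw [deriv_eq]
  simp only [RatFunc.eval, eval₂_id, eval_sub, eval_mul, eval_pow]
  exact (z.num.hasDerivAt x).fun_div (z.denom.hasDerivAt x) hz

theorem intervalIntegrable_eval_ratDeriv {a b : ℝ} {z : RatFunc ℝ}
    (hz : ∀ x ∈ Set.uIcc a b, z ∈ regularAt x) :
    IntervalIntegrable (fun x => (ratDeriv ℝ z).eval (RingHom.id ℝ) x) volume a b :=
  ContinuousOn.intervalIntegrable fun x hx => (hasDerivAt_eval_ratFunc
    (ratDeriv_mem_regularAt (hz x hx))).continuousAt.continuousWithinAt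

theorem integral_ratDeriv {a b : ℝ} {z : RatFunc ℝ} (hz : ∀ x ∈ Set.uIcc a b, z ∈ regularAt x) :
    ∫ x in a..b, (ratDeriv ℝ z).eval (RingHom.id ℝ) x =
      z.eval (RingHom.id ℝ) b - z.eval (RingHom.id ℝ) a :=
  intervalIntegral.integral_eq_sub_of_hasDerivAt
    (fun x hx => hasDerivAt_eval_ratFunc (hz x hx)) (intervalIntegrable_eval_ratDeriv hz)

end Calculus

end RationalFunctions

noncomputable section JacobiConcomitant

open Polynomial

section Regularity

variable {𝕜 : Type*} [Field 𝕜] {f γ : ℕ → RatFunc 𝕜} {c : ℕ → 𝕜} {n e : ℕ} {x : 𝕜}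

theorem concomitantCoeff_vanishesToOrder
    (hγ : ∀ i < n, ratDeriv 𝕜 (γ (i + 1)) =
      -(crumRate (ratDeriv 𝕜) f i * γ (i + 1)) - c i • γ i)
    (hγx : VanishesToOrder x (n - e) (γ n))
    (hcoeff : ∀ j, crumCoeff (ratDeriv 𝕜) f n j ∈ regularAt x) (j : ℕ) :
    VanishesToOrder x (j + 1 - e) (concomitantCoeff (ratDeriv 𝕜) f γ c n j) := by
  rcases le_or_gt n j with h | h
  · exact concomitantCoeff_of_le (ratDeriv 𝕜) f γ c h ▸ vanishesToOrder_zero _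
  induction h' : n - j generalizing j with
  | zero => lia
  | succ d ih =>
    rw [eq_sub_of_add_eq (concomitantCoeff_add_deriv hγ j)]
    refine .sub ((hγx.mul (vanishesToOrder_zero_iff.2 (hcoeff _))).mono (by lia)) ?_
    rcases (Nat.succ_le_of_lt h).eq_or_lt with h1 | h1
    · rw [concomitantCoeff_of_le _ _ _ _ h1.ge, map_zero]
      exact vanishesToOrder_zero _
    · exact (ih (j + 1) h1 (by lia)).ratDeriv.mono (by lia)

theorem crumConcomitant_vanishesToOrder
    (hγ : ∀ i < n, ratDeriv 𝕜 (γ (i + 1)) =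
      -(crumRate (ratDeriv 𝕜) f i * γ (i + 1)) - c i • γ i)
    (hγx : VanishesToOrder x (n - e) (γ n))
    (hcoeff : ∀ j, crumCoeff (ratDeriv 𝕜) f n j ∈ regularAt x) {v : RatFunc 𝕜} {d : ℕ}
    (hv : VanishesToOrder x d v) :
    VanishesToOrder x (d + 1 - e) (crumConcomitant (ratDeriv 𝕜) f γ c n v) := by
  rw [crumConcomitant_eq_sum _ _ _ _ le_rfl]
  exact .sum fun j _ => ((concomitantCoeff_vanishesToOrder hγ hγx hcoeff j).mul
    (hv.iterate_ratDeriv j)).mono (by lia)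

end Regularity

/-- The Jacobi operator `y ↦ (1 - x²) y″ + (B - A - (A + B + 2) x) y′`. -/
def jacobiOp (A B : ℝ) : ℝ[X] →ₗ[ℝ] ℝ[X] :=
  LinearMap.mulLeft ℝ (1 - X ^ 2) ∘ₗ derivative ∘ₗ derivative +
    LinearMap.mulLeft ℝ (C (B - A) - C (A + B + 2) * X) ∘ₗ derivative

theorem jacobiOp_apply (A B : ℝ) (y : ℝ[X]) : jacobiOp A B y =
    (1 - X ^ 2) * derivative (derivative y) + (C (B - A) - C (A + B + 2) * X) * derivative y :=
  rfl

/-- The polynomial `s = (1 - x²) w′ / w` for the Jacobi weight `w = (1 - x)^A (1 + x)^B`. -/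
def jacobiDrift (A B : ℝ) : ℝ[X] := C (B - A) - C (A + B) * X

theorem algebraMap_ratFunc_smul {𝕜 : Type*} [Field 𝕜] (c : 𝕜) (P : 𝕜[X]) :
    algebraMap 𝕜[X] (RatFunc 𝕜) (c • P) = c • algebraMap 𝕜[X] (RatFunc 𝕜) P :=
  map_smul (IsScalarTower.toAlgHom 𝕜 𝕜[X] (RatFunc 𝕜)) c P

theorem algebraMap_jacobiOp (A B : ℝ) (y : ℝ[X]) :
    algebraMap ℝ[X] (RatFunc ℝ) (jacobiOp A B y) =
      sturmLiouville (ratDeriv ℝ) (algebraMap ℝ[X] (RatFunc ℝ) (1 - X ^ 2))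
        (algebraMap ℝ[X] (RatFunc ℝ) (jacobiDrift A B)) (algebraMap ℝ[X] (RatFunc ℝ) y) := by
  simp only [sturmLiouville_apply, ratDeriv_algebraMap, ← map_mul, ← map_add, jacobiOp_apply]
  congr 2
  simp only [jacobiDrift, derivative_sub, derivative_one, derivative_X_sq, C_add, C_sub]
  ring

/-- The Jacobi weight `(1 - x)^{-a} (1 + x)^{-b}` as a rational function. -/
def jacobiWeight (a b : ℕ) : RatFunc ℝ :=
  (algebraMap ℝ[X] (RatFunc ℝ) ((1 - X) ^ a * (1 + X) ^ b))⁻¹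

theorem one_sub_X_ne_zero : (1 - X : ℝ[X]) ≠ 0 := fun h => by simpa using congrArg (eval 0) h

theorem one_add_X_ne_zero : (1 + X : ℝ[X]) ≠ 0 := fun h => by simpa using congrArg (eval 0) h

theorem algebraMap_mul_jacobiWeight (a b : ℕ) (P : ℝ[X]) :
    algebraMap ℝ[X] (RatFunc ℝ) ((1 - X) ^ a * (1 + X) ^ b * P) * jacobiWeight a b =
      algebraMap ℝ[X] (RatFunc ℝ) P := by
  rw [map_mul, mul_right_comm, jacobiWeight, mul_inv_cancel₀, one_mul]
  exact RatFunc.algebraMap_ne_zero (mul_ne_zero (pow_ne_zero a one_sub_X_ne_zero)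
    (pow_ne_zero b one_add_X_ne_zero))

theorem mul_derivative_one_sub_pow_mul_one_add_pow (a b : ℕ) :
    (1 - X ^ 2) * derivative ((1 - X) ^ a * (1 + X) ^ b) =
      -(jacobiDrift (-a) (-b) * ((1 - X) ^ a * (1 + X) ^ b)) := by
  have hL : (1 - X) * derivative (R := ℝ) ((1 - X) ^ a) = -((a : ℝ[X]) * (1 - X) ^ a) := by
    cases a <;> simp [derivative_pow]; ring
  have hR : (1 + X) * derivative (R := ℝ) ((1 + X) ^ b) = (b : ℝ[X]) * (1 + X) ^ b := by
    cases b <;> simp [derivative_pow]; ring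
  simp only [derivative_mul, jacobiDrift, C_sub, C_add, C_neg, C_eq_natCast]
  linear_combination (1 + X) * (1 + X) ^ b * hL + (1 - X) * (1 - X) ^ a * hR

theorem mul_ratDeriv_jacobiWeight (a b : ℕ) :
    algebraMap ℝ[X] (RatFunc ℝ) (1 - X ^ 2) * ratDeriv ℝ (jacobiWeight a b) =
      algebraMap ℝ[X] (RatFunc ℝ) (jacobiDrift (-a) (-b)) * jacobiWeight a b := by
  have hw := algebraMap_mul_jacobiWeight a b 1
  have hg := congrArg (algebraMap ℝ[X] (RatFunc ℝ))
    (mul_derivative_one_sub_pow_mul_one_add_pow a b)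
  rw [mul_one, map_one] at hw
  rw [jacobiWeight, Derivation.leibniz_inv, ratDeriv_algebraMap, smul_eq_mul, ← jacobiWeight]
  rw [map_mul, map_neg, map_mul _ (jacobiDrift _ _)] at hg
  linear_combination -jacobiWeight a b ^ 2 * hg +
    algebraMap ℝ[X] (RatFunc ℝ) (jacobiDrift (-a) (-b)) * jacobiWeight a b * hw

theorem algebraMap_det_wronskianMatrix {𝕜 : Type*} [Field 𝕜] (g : ℕ → 𝕜[X]) (n : ℕ) :
    algebraMap 𝕜[X] (RatFunc 𝕜) (wronskianMatrix derivative g n).det =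
      (wronskianMatrix (ratDeriv 𝕜) (fun i => algebraMap 𝕜[X] (RatFunc 𝕜) (g i)) n).det := by
  rw [RingHom.map_det]
  congr 1
  ext i j
  simp [wronskianMatrix, iterate_ratDeriv_algebraMap]

theorem crumOp_mul_det_wronskianMatrix {𝕜 : Type*} [Field 𝕜] (g : ℕ → 𝕜[X]) (n : ℕ) (v : 𝕜[X]) :
    crumOp (ratDeriv 𝕜) (fun i => algebraMap 𝕜[X] (RatFunc 𝕜) (g i)) n
        (algebraMap 𝕜[X] (RatFunc 𝕜) v) *
        algebraMap 𝕜[X] (RatFunc 𝕜) (wronskianMatrix derivative g n).det =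
      algebraMap 𝕜[X] (RatFunc 𝕜)
        (wronskianMatrix derivative (Function.update g n v) (n + 1)).det := by
  rw [mul_comm, algebraMap_det_wronskianMatrix, algebraMap_det_wronskianMatrix,
    ← det_wronskianMatrix_update]
  congr 2
  exact (Function.comp_update (algebraMap 𝕜[X] (RatFunc 𝕜)) g n v).symm

/-- Polynomials `f₀, …, f_{N-1}` on which the Jacobi operator with parameters `-a, -b` is
triangular with diagonal entries `-Λᵢ`, with Wronskian free of zeros on `[-1, 1]`, and numerous
enough that `(1 - x²)^N` cancels the poles of the Jacobi weight. -/
structure IsJacobiSystem (a b N : ℕ) (f : ℕ → ℝ[X]) (Λ : ℕ → ℝ) : Prop where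
  le_left : a ≤ N
  le_right : b ≤ N
  triangular : ∀ i < N,
    jacobiOp (-a) (-b) (f i) + Λ i • f i ∈ Submodule.span ℝ (f '' Set.Iio i)
  wronskian_ne_zero : ∀ x ∈ Set.Icc (-1 : ℝ) 1, (wronskianMatrix derivative f N).det.eval x ≠ 0

/-- The multiplier `(1 - x²)ⁿ (1 - x)^{-a} (1 + x)^{-b} Aₙ u`, with `Aₙ` the Crum operator of the
polynomials `f`. -/
def jacobiMultiplier (a b : ℕ) (f : ℕ → ℝ[X]) (u : ℝ[X]) : ℕ → RatFunc ℝ :=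
  crumMultiplier (ratDeriv ℝ) (algebraMap ℝ[X] (RatFunc ℝ) (1 - X ^ 2))
    (fun i => algebraMap ℝ[X] (RatFunc ℝ) (f i)) (algebraMap ℝ[X] (RatFunc ℝ) u)
    (jacobiWeight a b)

/-- The bilinear concomitant of the Crum operator of `f` with the eigenfunction `u` of eigenvalue
`-l`, as a function of the second argument. -/
def jacobiConcomitant (a b N : ℕ) (f : ℕ → ℝ[X]) (Λ : ℕ → ℝ) (u : ℝ[X]) (l : ℝ) :
    ℝ[X] →ₗ[ℝ] RatFunc ℝ :=
  crumConcomitant (ratDeriv ℝ) (fun i => algebraMap ℝ[X] (RatFunc ℝ) (f i))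
    (jacobiMultiplier a b f u) (fun i => l - Λ i) N ∘ₗ
      (IsScalarTower.toAlgHom ℝ ℝ[X] (RatFunc ℝ)).toLinearMap

namespace IsJacobiSystem

variable {a b N : ℕ} {f : ℕ → ℝ[X]} {Λ : ℕ → ℝ}

theorem det_wronskianMatrix_ne_zero (h : IsJacobiSystem a b N f Λ) :
    (wronskianMatrix (ratDeriv ℝ) (fun i => algebraMap ℝ[X] (RatFunc ℝ) (f i)) N).det ≠ 0 := by
  rw [← algebraMap_det_wronskianMatrix]
  refine RatFunc.algebraMap_ne_zero fun h0 => h.wronskian_ne_zero 0 (by simp) ?_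
  rw [h0, eval_zero]

theorem isCrumSystem (h : IsJacobiSystem a b N f Λ) :
    IsCrumSystem (ratDeriv ℝ) (algebraMap ℝ[X] (RatFunc ℝ) (1 - X ^ 2))
      (algebraMap ℝ[X] (RatFunc ℝ) (jacobiDrift (-a) (-b)))
      (fun i => algebraMap ℝ[X] (RatFunc ℝ) (f i)) Λ N where
  triangular i hi := by
    have := Submodule.mem_map_of_mem
      (f := (IsScalarTower.toAlgHom ℝ ℝ[X] (RatFunc ℝ)).toLinearMap) (h.triangular i hi)
    rw [Submodule.map_span, ← Set.image_comp] at this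
    rw [← algebraMap_jacobiOp, ← algebraMap_ratFunc_smul, ← map_add]
    exact this
  ne_zero _ := crumOp_self_ne_zero _ _ h.det_wronskianMatrix_ne_zero

theorem crumCoeff_mem_regularAt (h : IsJacobiSystem a b N f Λ) {x : ℝ}
    (hx : x ∈ Set.Icc (-1 : ℝ) 1) (j : ℕ) :
    crumCoeff (ratDeriv ℝ) (fun i => algebraMap ℝ[X] (RatFunc ℝ) (f i)) N j ∈ regularAt x := by
  refine crumCoeff_mem _ _ (fun i _ j => ?_) h.det_wronskianMatrix_ne_zero ?_ j
  · exact iterate_ratDeriv_algebraMap j (f i) ▸ algebraMap_mem_regularAt _ _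
  · exact algebraMap_det_wronskianMatrix f N ▸
      inv_algebraMap_mem_regularAt (h.wronskian_ne_zero x hx)

variable {u v : ℝ[X]} {l : ℝ}

theorem crumOp_mem_regularAt (h : IsJacobiSystem a b N f Λ) {x : ℝ}
    (hx : x ∈ Set.Icc (-1 : ℝ) 1) (v : ℝ[X]) :
    crumOp (ratDeriv ℝ) (fun i => algebraMap ℝ[X] (RatFunc ℝ) (f i)) N
      (algebraMap ℝ[X] (RatFunc ℝ) v) ∈ regularAt x :=
  mem_regularAt_of_mul_eq (h.wronskian_ne_zero x hx) (crumOp_mul_det_wronskianMatrix f N v)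

theorem jacobiMultiplier_eq (h : IsJacobiSystem a b N f Λ) (u : ℝ[X]) :
    jacobiMultiplier a b f u N =
      algebraMap ℝ[X] (RatFunc ℝ) ((1 - X) ^ (N - a) * (1 + X) ^ (N - b)) *
        crumOp (ratDeriv ℝ) (fun i => algebraMap ℝ[X] (RatFunc ℝ) (f i)) N
          (algebraMap ℝ[X] (RatFunc ℝ) u) := by
  obtain ⟨c, rfl⟩ := Nat.exists_eq_add_of_le h.le_left
  obtain ⟨d, hd⟩ := Nat.exists_eq_add_of_le h.le_right
  rw [jacobiMultiplier, crumMultiplier, ← algebraMap_mul_jacobiWeight a b ((1 - X) ^ _ * _),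
    ← map_pow]
  congr 3
  rw [show (1 - X ^ 2 : ℝ[X]) = (1 - X) * (1 + X) by ring, mul_pow, hd, Nat.add_sub_cancel_left,
    ← hd, Nat.add_sub_cancel_left, pow_add, hd, pow_add]
  ring

theorem ratDeriv_jacobiMultiplier_succ (h : IsJacobiSystem a b N f Λ)
    (hu : jacobiOp (-a) (-b) u = -(l • u)) (i : ℕ) (hi : i < N) :
    ratDeriv ℝ (jacobiMultiplier a b f u (i + 1)) =
      -(crumRate (ratDeriv ℝ) (fun i => algebraMap ℝ[X] (RatFunc ℝ) (f i)) i *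
        jacobiMultiplier a b f u (i + 1)) - (l - Λ i) • jacobiMultiplier a b f u i := by
  refine deriv_crumMultiplier_succ h.isCrumSystem (mul_ratDeriv_jacobiWeight a b) ?_ hi
  rw [← algebraMap_jacobiOp, hu, map_neg, algebraMap_ratFunc_smul]

theorem jacobiConcomitant_vanishesToOrder (h : IsJacobiSystem a b N f Λ)
    (hu : jacobiOp (-a) (-b) u = -(l • u)) {x : ℝ} (hx : x ∈ Set.Icc (-1 : ℝ) 1) {d e : ℕ}
    (hw : (X - C x) ^ (N - e) ∣ (1 - X) ^ (N - a) * (1 + X) ^ (N - b))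
    (hv : (X - C x) ^ d ∣ v) :
    VanishesToOrder x (d + 1 - e) (jacobiConcomitant a b N f Λ u l v) := by
  refine crumConcomitant_vanishesToOrder (h.ratDeriv_jacobiMultiplier_succ hu) ?_
    (h.crumCoeff_mem_regularAt hx) (vanishesToOrder_algebraMap hv)
  rw [h.jacobiMultiplier_eq]
  exact (vanishesToOrder_algebraMap hw).mul
    (vanishesToOrder_zero_iff.2 (h.crumOp_mem_regularAt hx u))

theorem jacobiConcomitant_mem_regularAt (h : IsJacobiSystem a b N f Λ)
    (hu : jacobiOp (-a) (-b) u = -(l • u)) {x : ℝ} (hx : x ∈ Set.Icc (-1 : ℝ) 1) (v : ℝ[X]) :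
    jacobiConcomitant a b N f Λ u l v ∈ regularAt x :=
  (h.jacobiConcomitant_vanishesToOrder (d := 0) (e := N) hu hx (by simp) (by simp)).mem_regularAt

theorem eval_jacobiConcomitant_add (h : IsJacobiSystem a b N f Λ)
    (hu : jacobiOp (-a) (-b) u = -(l • u)) {x : ℝ} (hx : x ∈ Set.Icc (-1 : ℝ) 1) (v w : ℝ[X]) :
    (jacobiConcomitant a b N f Λ u l (v + w)).eval (RingHom.id ℝ) x =
      (jacobiConcomitant a b N f Λ u l v).eval (RingHom.id ℝ) x +
        (jacobiConcomitant a b N f Λ u l w).eval (RingHom.id ℝ) x := by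
  rw [map_add, eval_ratFunc_add (h.jacobiConcomitant_mem_regularAt hu hx v)
    (h.jacobiConcomitant_mem_regularAt hu hx w)]

theorem eval_jacobiConcomitant_smul (h : IsJacobiSystem a b N f Λ)
    (hu : jacobiOp (-a) (-b) u = -(l • u)) {x : ℝ} (hx : x ∈ Set.Icc (-1 : ℝ) 1) (r : ℝ)
    (v : ℝ[X]) :
    (jacobiConcomitant a b N f Λ u l (r • v)).eval (RingHom.id ℝ) x =
      r * (jacobiConcomitant a b N f Λ u l v).eval (RingHom.id ℝ) x := by
  rw [map_smul, RatFunc.smul_eq_C_mul, ← RatFunc.algebraMap_C,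
    eval_ratFunc_mul (algebraMap_mem_regularAt (C r) x)
    (h.jacobiConcomitant_mem_regularAt hu hx v)]
  simp

theorem eval_jacobiConcomitant_one_eq_zero (h : IsJacobiSystem a b N f Λ)
    (hu : jacobiOp (-a) (-b) u = -(l • u)) (hv : (1 - X) ^ a ∣ v) :
    (jacobiConcomitant a b N f Λ u l v).eval (RingHom.id ℝ) 1 = 0 := by
  have hdvd (k : ℕ) : (X - C 1 : ℝ[X]) ^ k ∣ (1 - X) ^ k :=
    pow_dvd_pow_of_dvd ⟨-1, by rw [C_1]; ring⟩ k
  refine VanishesToOrder.eval_eq_zero (.mono (h.jacobiConcomitant_vanishesToOrder hu (by simp)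
    (e := a) (dvd_mul_of_dvd_left (hdvd _) _) ((hdvd a).trans hv)) (by lia))

theorem eval_jacobiConcomitant_neg_one_eq_zero (h : IsJacobiSystem a b N f Λ)
    (hu : jacobiOp (-a) (-b) u = -(l • u)) (hv : (1 + X) ^ b ∣ v) :
    (jacobiConcomitant a b N f Λ u l v).eval (RingHom.id ℝ) (-1) = 0 := by
  have hlin : (X - C (-1) : ℝ[X]) = 1 + X := by rw [C_neg, C_1]; ring
  refine VanishesToOrder.eval_eq_zero (.mono (h.jacobiConcomitant_vanishesToOrder hu (by simp)
    (e := b) (dvd_mul_of_dvd_right ?_ _) (hlin ▸ hv)) (by lia))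
  rw [hlin]

theorem jacobiConcomitant_apply_self (h : IsJacobiSystem a b N f Λ)
    (hu : jacobiOp (-a) (-b) u = -(l • u)) {m : ℕ} (hm : m < N)
    (hfm : jacobiOp (-a) (-b) (f m) = -(l • f m)) (hΛ : Λ m = l) {W : ℝ[X]} (ha : a ≠ 0)
    (hb : b ≠ 0) (hW : f m * derivative u - derivative (f m) * u =
      (1 - X) ^ (a - 1) * (1 + X) ^ (b - 1) * W) :
    jacobiConcomitant a b N f Λ u l (f m) =
      (∏ i ∈ (range N).erase m, (l - Λ i)) • algebraMap ℝ[X] (RatFunc ℝ) W := by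
  have eigen {y : ℝ[X]} (hy : jacobiOp (-a) (-b) y = -(l • y)) :
      sturmLiouville (ratDeriv ℝ) (algebraMap ℝ[X] (RatFunc ℝ) (1 - X ^ 2))
        (algebraMap ℝ[X] (RatFunc ℝ) (jacobiDrift (-a) (-b))) (algebraMap ℝ[X] (RatFunc ℝ) y) =
        -(l • algebraMap ℝ[X] (RatFunc ℝ) y) := by
    rw [← algebraMap_jacobiOp, hy, map_neg, algebraMap_ratFunc_smul]
  refine (crumConcomitant_apply_self h.isCrumSystem (eigen hu) hm (eigen hfm) hΛ).trans ?_
  rw [ratDeriv_algebraMap, ratDeriv_algebraMap, ← map_mul, ← map_mul, ← map_sub, hW,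
    mul_right_comm, ← map_mul, ← algebraMap_mul_jacobiWeight a b W]
  obtain ⟨a, rfl⟩ := Nat.exists_eq_succ_of_ne_zero ha
  obtain ⟨b, rfl⟩ := Nat.exists_eq_succ_of_ne_zero hb
  congr 3
  simp only [Nat.succ_eq_add_one, Nat.add_sub_cancel]
  ring

theorem ratDeriv_jacobiConcomitant_mul_sq (h : IsJacobiSystem a b N f Λ)
    (hu : jacobiOp (-a) (-b) u = -(l • u)) {g : ℝ[X]}
    (hg : (∏ i ∈ range N, (l - Λ i)) • (u * v) = (1 - X) ^ a * (1 + X) ^ b * g) :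
    (ratDeriv ℝ (jacobiConcomitant a b N f Λ u l v) + algebraMap ℝ[X] (RatFunc ℝ) g) *
        algebraMap ℝ[X] (RatFunc ℝ) ((wronskianMatrix derivative f N).det ^ 2) =
      algebraMap ℝ[X] (RatFunc ℝ) ((1 - X) ^ (N - a) * (1 + X) ^ (N - b) *
        (wronskianMatrix derivative (Function.update f N u) (N + 1)).det *
        (wronskianMatrix derivative (Function.update f N v) (N + 1)).det) := by
  have deriv_eq : ratDeriv ℝ (jacobiConcomitant a b N f Λ u l v) = _ :=
    deriv_crumConcomitant (h.ratDeriv_jacobiMultiplier_succ hu) (algebraMap ℝ[X] (RatFunc ℝ) v)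
  have lower : (∏ i ∈ range N, (l - Λ i)) • (jacobiWeight a b * algebraMap ℝ[X] (RatFunc ℝ) u *
      algebraMap ℝ[X] (RatFunc ℝ) v) = algebraMap ℝ[X] (RatFunc ℝ) g := by
    rw [← algebraMap_mul_jacobiWeight a b g, ← hg, algebraMap_ratFunc_smul, map_mul,
      smul_mul_assoc, mul_comm (_ * _) (jacobiWeight a b), mul_assoc]
  rw [deriv_eq, h.jacobiMultiplier_eq, jacobiMultiplier, crumMultiplier, pow_zero, one_mul,
    crumOp_zero, lower, sub_add_cancel, map_mul _ (_ * _ * _), map_mul _ (_ * _) (Matrix.det _),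
    ← crumOp_mul_det_wronskianMatrix f N u, ← crumOp_mul_det_wronskianMatrix f N v, map_pow]
  ring

theorem integral_wronskian_mul_wronskian (h : IsJacobiSystem a b N f Λ)
    (hu : jacobiOp (-a) (-b) u = -(l • u)) {g : ℝ[X]}
    (hg : (∏ i ∈ range N, (l - Λ i)) • (u * v) = (1 - X) ^ a * (1 + X) ^ b * g) :
    ∫ x in (-1 : ℝ)..1, (1 - x) ^ (N - a) * (1 + x) ^ (N - b) *
        (wronskianMatrix derivative (Function.update f N u) (N + 1)).det.eval x *
        (wronskianMatrix derivative (Function.update f N v) (N + 1)).det.eval x /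
        (wronskianMatrix derivative f N).det.eval x ^ 2 =
      (∫ x in (-1 : ℝ)..1, g.eval x) +
        (jacobiConcomitant a b N f Λ u l v).eval (RingHom.id ℝ) 1 -
        (jacobiConcomitant a b N f Λ u l v).eval (RingHom.id ℝ) (-1) := by
  have regular (x : ℝ) (hx : x ∈ Set.uIcc (-1 : ℝ) 1) :
      jacobiConcomitant a b N f Λ u l v ∈ regularAt x :=
    h.jacobiConcomitant_mem_regularAt hu (Set.uIcc_of_le (by norm_num : (-1 : ℝ) ≤ 1) ▸ hx) v
  rw [add_sub_assoc, ← integral_ratDeriv regular, add_comm (∫ x in (-1 : ℝ)..1, g.eval x),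
    ← intervalIntegral.integral_add (intervalIntegrable_eval_ratDeriv regular)
      (g.continuous.intervalIntegrable _ _)]
  refine intervalIntegral.integral_congr fun x hx => ?_
  have hx' := Set.uIcc_of_le (by norm_num : (-1 : ℝ) ≤ 1) ▸ hx
  have eval_eq := eval_ratFunc_eq_div
    (by rw [eval_pow]; exact pow_ne_zero 2 (h.wronskian_ne_zero x hx'))
    (h.ratDeriv_jacobiConcomitant_mul_sq hu hg)
  rw [eval_ratFunc_add (ratDeriv_mem_regularAt (regular x hx)) (algebraMap_mem_regularAt g x),
    RatFunc.eval_algebraMap] at eval_eq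
  simpa [eval₂_id] using eval_eq.symm

theorem eval_jacobiConcomitant_apply_self_one_eq (h : IsJacobiSystem a b N f Λ)
    (hu : jacobiOp (-a) (-b) u = -(l • u)) {m : ℕ} (hm : m < N) (hΛ : Λ m = l) :
    (jacobiConcomitant a b N f Λ u l (f m)).eval (RingHom.id ℝ) 1 =
      (jacobiConcomitant a b N f Λ u l (f m)).eval (RingHom.id ℝ) (-1) := by
  have prod_eq_zero : ∏ i ∈ range N, (l - Λ i) = 0 :=
    prod_eq_zero (mem_range.2 hm) (sub_eq_zero.2 hΛ.symm)
  have det_eq_zero :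
      (wronskianMatrix derivative (Function.update f N (f m)) (N + 1)).det = 0 := by
    refine Matrix.det_zero_of_row_eq (i := ⟨m, by lia⟩) (j := Fin.last N) (Fin.ne_of_lt hm) ?_
    funext j
    simp [wronskianMatrix, hm.ne]
  have integral_eq := h.integral_wronskian_mul_wronskian hu (v := f m) (g := 0)
    (by simp [prod_eq_zero])
  simp only [det_eq_zero, eval_zero, mul_zero, zero_div, intervalIntegral.integral_zero,
    zero_add] at integral_eq
  exact sub_eq_zero.1 integral_eq.symm

theorem eval_jacobiConcomitant_one_sub_neg_one (h : IsJacobiSystem a b N f Λ)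
    (hu : jacobiOp (-a) (-b) u = -(l • u)) {q : ℝ[X]} (hq : jacobiOp (-a) (-b) q = -(l • q))
    (hq1 : (1 - X) ^ a ∣ q) (huq : (1 + X) ^ b ∣ u - q) {m : ℕ} (hm : m < N) (hΛ : Λ m = l)
    {κ c : ℝ} (hfm : f m = κ • (c • u + q)) (hκ : κ ≠ 0) (hc : c ≠ 0) (hc1 : c + 1 ≠ 0)
    (ha : a ≠ 0) (hb : b ≠ 0) {W : ℝ[X]}
    (hW : q * derivative u - derivative q * u = (1 - X) ^ (a - 1) * (1 + X) ^ (b - 1) * W) :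
    (jacobiConcomitant a b N f Λ u l u).eval (RingHom.id ℝ) 1 -
        (jacobiConcomitant a b N f Λ u l u).eval (RingHom.id ℝ) (-1) =
      (∏ i ∈ (range N).erase m, (l - Λ i)) * W.eval 1 / (c * (c + 1)) := by
  have one_mem : (1 : ℝ) ∈ Set.Icc (-1 : ℝ) 1 := by simp
  have neg_one_mem : (-1 : ℝ) ∈ Set.Icc (-1 : ℝ) 1 := by simp
  have eigen : jacobiOp (-a) (-b) (f m) = -(l • f m) := by
    rw [hfm, map_smul, map_add, map_smul, hu, hq]
    module
  have wronskian : f m * derivative u - derivative (f m) * u =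
      (1 - X) ^ (a - 1) * (1 + X) ^ (b - 1) * (κ • W) := by
    simp only [hfm, smul_eq_C_mul, derivative_C_mul, derivative_add]
    linear_combination C κ * hW
  have apply_self := h.jacobiConcomitant_apply_self hu hm eigen hΛ ha hb wronskian
  have self_at_one := congrArg (RatFunc.eval (RingHom.id ℝ) 1) apply_self
  rw [← algebraMap_ratFunc_smul, RatFunc.eval_algebraMap, Algebra.algebraMap_self_apply,
    eval₂_id, eval_smul, eval_smul] at self_at_one
  have self_at_neg_one := h.eval_jacobiConcomitant_apply_self_one_eq hu hm hΛ
  have q_at_neg_one := h.eval_jacobiConcomitant_neg_one_eq_zero hu huq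
  rw [sub_eq_add_neg, ← neg_one_smul ℝ q, h.eval_jacobiConcomitant_add hu neg_one_mem,
    h.eval_jacobiConcomitant_smul hu neg_one_mem] at q_at_neg_one
  simp only [hfm, h.eval_jacobiConcomitant_smul hu one_mem,
    h.eval_jacobiConcomitant_smul hu neg_one_mem, h.eval_jacobiConcomitant_add hu one_mem,
    h.eval_jacobiConcomitant_add hu neg_one_mem, h.eval_jacobiConcomitant_one_eq_zero hu hq1,
    add_zero, smul_eq_mul] at self_at_one self_at_neg_one
  have at_one := mul_left_cancel₀ hκ (self_at_one.trans (mul_left_comm _ _ _))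
  have at_neg_one := mul_left_cancel₀ hκ self_at_neg_one
  rw [eq_div_iff (mul_ne_zero hc hc1)]
  linear_combination at_one + c * at_neg_one - c * q_at_neg_one

end IsJacobiSystem

end JacobiConcomitant

noncomputable section JacobiPolynomials

open Polynomial

theorem genBinom_zero_right (z : ℝ) : genBinom z 0 = 1 := by
  simp [genBinom]

theorem genBinom_succ_mul (z : ℝ) (k : ℕ) :
    genBinom z (k + 1) * (k + 1) = genBinom z k * (z - k) := by
  rw [genBinom, genBinom, prod_range_succ, Nat.factorial_succ, Nat.cast_mul, Nat.cast_succ]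
  field_simp

theorem genBinom_natCast (m k : ℕ) : genBinom m k = m.choose k := by
  induction k with
  | zero => simp [genBinom]
  | succ k ih =>
    refine mul_right_cancel₀ (Nat.cast_add_one_ne_zero k) ?_
    rw [genBinom_succ_mul, ih]
    rcases lt_or_ge m k with hm | hm
    · simp [Nat.choose_eq_zero_of_lt hm, Nat.choose_eq_zero_of_lt (hm.trans k.lt_succ_self)]
    · rw [← Nat.cast_sub hm]
      exact_mod_cast (Nat.choose_succ_right_eq m k).symm

theorem genBinom_neg_natCast_add_one (m k : ℕ) :
    genBinom (-(m + 1)) k = (-1) ^ k * (m + k).choose k := by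
  induction k with
  | zero => simp [genBinom]
  | succ k ih =>
    refine mul_right_cancel₀ (Nat.cast_add_one_ne_zero k) ?_
    have choose_succ : ((m + k + 1).choose (k + 1) : ℝ) * (k + 1) =
        (m + k + 1) * (m + k).choose k := by
      exact_mod_cast (Nat.add_one_mul_choose_eq (m + k) k).symm
    rw [genBinom_succ_mul, ih, ← add_assoc, mul_assoc ((-1) ^ (k + 1)), choose_succ]
    ring

/-- The Jacobi polynomial `P_n^{A,B}` as an element of `ℝ[X]`; see `eval_jacobiPoly`. -/
def jacobiPoly (A B : ℝ) (n : ℕ) : ℝ[X] :=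
  C (2⁻¹ ^ n) * ∑ p ∈ antidiagonal n,
    C (genBinom (n + A) p.1 * genBinom (n + B) p.2) * ((X - 1) ^ p.2 * (X + 1) ^ p.1)

theorem eval_jacobiPoly (A B : ℝ) (n : ℕ) (x : ℝ) :
    (jacobiPoly A B n).eval x = jacobiP A B n x := by
  simp [jacobiPoly, jacobiP, eval_finsetSum, mul_assoc,
    Finset.Nat.sum_antidiagonal_eq_sum_range_succ_mk]

theorem jacobiPoly_zero (A B : ℝ) : jacobiPoly A B 0 = 1 := by
  simp [jacobiPoly, genBinom]

theorem natDegree_jacobiPoly_le (A B : ℝ) (n : ℕ) : (jacobiPoly A B n).natDegree ≤ n := by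
  refine (natDegree_C_mul_le _ _).trans (natDegree_sum_le_of_forall_le _ _ fun p hp => ?_)
  refine (natDegree_C_mul_le _ _).trans ((natDegree_mul_le_of_le (m := p.2) (n := p.1) ?_ ?_).trans
    (by rw [add_comm, mem_antidiagonal.1 hp]))
  · simpa using natDegree_pow_le_of_le p.2 (natDegree_X_sub_C_le (1 : ℝ))
  · simpa using natDegree_pow_le_of_le p.1 (natDegree_X_add_C (1 : ℝ)).le

theorem eval_one_jacobiPoly (A B : ℝ) (n : ℕ) :
    (jacobiPoly A B n).eval 1 = genBinom (n + A) n := by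
  rw [jacobiPoly, eval_C_mul, eval_finsetSum, sum_eq_single (n, 0)]
  · simp only [genBinom_zero_right, eval_mul, eval_C, eval_pow, eval_add, eval_X, eval_one,
      inv_pow, one_add_one_eq_two, pow_zero]
    field_simp
  · rintro ⟨j, k⟩ hjk hne
    have hk : k ≠ 0 := fun hk => hne (by simp_all)
    simp [hk]
  · simp

theorem eval_neg_one_jacobiPoly (A B : ℝ) (n : ℕ) :
    (jacobiPoly A B n).eval (-1) = (-1) ^ n * genBinom (n + B) n := by
  rw [jacobiPoly, eval_C_mul, eval_finsetSum, sum_eq_single (0, n)]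
  · simp only [genBinom_zero_right, eval_mul, eval_C, eval_pow, eval_sub, eval_X, eval_one,
      inv_pow, pow_zero, show (-1 : ℝ) - 1 = -1 * 2 by norm_num, mul_pow]
    field_simp
  · rintro ⟨j, k⟩ hjk hne
    have hj : j ≠ 0 := fun hj => hne (by simp_all)
    simp [hj]
  · simp

theorem derivative_jacobiPoly_succ (A B : ℝ) (n : ℕ) :
    derivative (jacobiPoly A B (n + 1)) =
      C ((n + A + B + 2) / 2) * jacobiPoly (A + 1) (B + 1) n := by
  have derivative_term (c : ℝ) (k j : ℕ) :
      derivative (C c * ((X - 1) ^ k * (X + 1) ^ j)) =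
        C (c * k) * ((X - 1) ^ (k - 1) * (X + 1) ^ j) +
          C (c * j) * ((X - 1) ^ k * (X + 1) ^ (j - 1)) := by
    simp [derivative_mul, derivative_pow]
    ring
  simp only [jacobiPoly, derivative_C_mul, derivative_sum, derivative_term, sum_add_distrib]
  rw [Finset.Nat.sum_antidiagonal_succ', Finset.Nat.sum_antidiagonal_succ (n := n)]
  simp only [Nat.cast_zero, mul_zero, C_0, zero_mul, zero_add, Nat.add_sub_cancel,
    ← sum_add_distrib, mul_sum]
  refine sum_congr rfl fun p hp => ?_
  obtain rfl := mem_antidiagonal.1 hp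
  simp only [← mul_assoc, ← C_mul, ← add_mul, mul_add, ← C_add]
  congr 3
  have hA := genBinom_succ_mul (((p.1 + p.2 + 1 : ℕ) : ℝ) + A) p.1
  have hB := genBinom_succ_mul (((p.1 + p.2 + 1 : ℕ) : ℝ) + B) p.2
  push_cast at hA hB ⊢
  rw [show (p.1 + p.2 + (A + 1) : ℝ) = p.1 + p.2 + 1 + A by ring,
    show (p.1 + p.2 + (B + 1) : ℝ) = p.1 + p.2 + 1 + B by ring]
  linear_combination 2⁻¹ ^ (p.1 + p.2 + 1) * (genBinom (p.1 + p.2 + 1 + A) p.1 * hB +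
    genBinom (p.1 + p.2 + 1 + B) p.2 * hA)

/-- The raising operator `Y ↦ (1 - x²) Y′ + (B - A - (A + B + 2) x) Y`, which is
`w⁻¹ ((1 - x²) w Y)′` for the Jacobi weight `w = (1 - x)^A (1 + x)^B`. -/
def jacobiRaise (A B : ℝ) : ℝ[X] →ₗ[ℝ] ℝ[X] :=
  LinearMap.mulLeft ℝ (1 - X ^ 2) ∘ₗ derivative +
    LinearMap.mulLeft ℝ (C (B - A) - C (A + B + 2) * X)

theorem jacobiRaise_apply (A B : ℝ) (y : ℝ[X]) : jacobiRaise A B y =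
    (1 - X ^ 2) * derivative y + (C (B - A) - C (A + B + 2) * X) * y :=
  rfl

theorem jacobiRaise_sub_one_pow_mul_add_one_pow (A B : ℝ) (k j : ℕ) :
    jacobiRaise A B ((X - 1) ^ k * (X + 1) ^ j) =
      -(C (k + A + 1) * ((X - 1) ^ k * (X + 1) ^ (j + 1)) +
        C (j + B + 1) * ((X - 1) ^ (k + 1) * (X + 1) ^ j)) := by
  have hC2 : C (2 : ℝ) = (2 : ℝ[X]) := rfl
  rcases k with _ | k <;> rcases j with _ | j <;>
    simp [jacobiRaise_apply, derivative_mul, derivative_pow, hC2] <;> ring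

theorem natCast_mul_sum_antidiagonal_succ {R : Type*} [CommSemiring R] (n : ℕ) (F : ℕ × ℕ → R) :
    ((n + 1 : ℕ) : R) * ∑ p ∈ antidiagonal (n + 1), F p =
      ∑ p ∈ antidiagonal n, (((p.1 + 1 : ℕ) : R) * F (p.1 + 1, p.2) +
        ((p.2 + 1 : ℕ) : R) * F (p.1, p.2 + 1)) := by
  have weights : ∑ p ∈ antidiagonal (n + 1), ((n + 1 : ℕ) : R) * F p =
      ∑ p ∈ antidiagonal (n + 1), ((p.1 : R) * F p + (p.2 : R) * F p) :=
    sum_congr rfl fun p hp => by rw [← add_mul, ← Nat.cast_add, mem_antidiagonal.1 hp]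
  rw [mul_sum, weights, sum_add_distrib, Finset.Nat.sum_antidiagonal_succ,
    Finset.Nat.sum_antidiagonal_succ' (n := n)]
  simp [sum_add_distrib]

theorem jacobiRaise_jacobiPoly (A B : ℝ) (n : ℕ) :
    jacobiRaise A B (jacobiPoly (A + 1) (B + 1) n) =
      -(C (2 * (n + 1 : ℝ)) * jacobiPoly A B (n + 1)) := by
  have scale : C (2 * (n + 1 : ℝ)) * C (2⁻¹ ^ (n + 1)) = C (2⁻¹ ^ n) * ((n + 1 : ℕ) : ℝ[X]) := by
    rw [← C_eq_natCast, ← C_mul, ← C_mul]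
    congr 1
    push_cast
    ring
  rw [jacobiPoly, jacobiPoly, ← smul_eq_C_mul, map_smul, map_sum, ← mul_assoc (C _) (C _), scale,
    mul_assoc, natCast_mul_sum_antidiagonal_succ, smul_eq_C_mul, ← mul_neg, ← sum_neg_distrib]
  congr 1
  refine sum_congr rfl fun p hp => ?_
  obtain rfl := mem_antidiagonal.1 hp
  rw [← smul_eq_C_mul, map_smul, jacobiRaise_sub_one_pow_mul_add_one_pow, smul_eq_C_mul, mul_neg,
    mul_add, ← C_eq_natCast, ← C_eq_natCast]
  simp only [← mul_assoc, ← C_mul]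
  have hA := genBinom_succ_mul (((p.1 + p.2 + 1 : ℕ) : ℝ) + A) p.1
  have hB := genBinom_succ_mul (((p.1 + p.2 + 1 : ℕ) : ℝ) + B) p.2
  push_cast at hA hB ⊢
  rw [show (p.1 + p.2 + (A + 1) : ℝ) = p.1 + p.2 + 1 + A by ring,
    show (p.1 + p.2 + (B + 1) : ℝ) = p.1 + p.2 + 1 + B by ring]
  congr 5
  · linear_combination -genBinom (p.1 + p.2 + 1 + B) p.2 * hA
  · linear_combination -genBinom (p.1 + p.2 + 1 + A) p.1 * hB

theorem jacobiOp_jacobiPoly (A B : ℝ) (n : ℕ) :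
    jacobiOp A B (jacobiPoly A B n) = -(lam A B n • jacobiPoly A B n) := by
  rcases n with _ | n
  · simp [jacobiPoly_zero, jacobiOp_apply, lam]
  change jacobiRaise A B (derivative (jacobiPoly A B (n + 1))) = _
  rw [derivative_jacobiPoly_succ, ← smul_eq_C_mul, map_smul, jacobiRaise_jacobiPoly, smul_neg,
    ← smul_eq_C_mul, smul_smul, lam]
  congr 2
  push_cast
  ring

/-! ### The norm of the Jacobi polynomials -/

/-- The functional `G ↦ ∫_{-1}^{1} G(x) dx` on polynomials. -/
def polyIntegral : ℝ[X] →ₗ[ℝ] ℝ where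
  toFun G := ∫ x in (-1 : ℝ)..1, G.eval x
  map_add' G H := by
    simpa using intervalIntegral.integral_add (G.continuous.intervalIntegrable _ _)
      (H.continuous.intervalIntegrable _ _)
  map_smul' c G := by simp

theorem polyIntegral_apply (G : ℝ[X]) : polyIntegral G = ∫ x in (-1 : ℝ)..1, G.eval x :=
  rfl

theorem polyIntegral_derivative (G : ℝ[X]) :
    polyIntegral (derivative G) = G.eval 1 - G.eval (-1) :=
  intervalIntegral.integral_eq_sub_of_hasDerivAt (fun x _ => G.hasDerivAt x)
    ((derivative G).continuous.intervalIntegrable _ _)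

theorem derivative_weight_mul (A B : ℕ) (y : ℝ[X]) :
    derivative ((1 - X) ^ (A + 1) * (1 + X) ^ (B + 1) * y) =
      (1 - X) ^ A * (1 + X) ^ B * jacobiRaise A B y := by
  have hC2 : C (2 : ℝ) = (2 : ℝ[X]) := rfl
  simp [jacobiRaise_apply, derivative_mul, derivative_pow, hC2]
  ring

theorem polyIntegral_weight (A B : ℕ) :
    polyIntegral ((1 - X) ^ A * (1 + X) ^ B) =
      2 ^ (A + B + 1) * A.factorial * B.factorial / (A + B + 1).factorial := by
  induction A generalizing B with
  | zero =>
    have h := polyIntegral_derivative ((1 + X) ^ (B + 1))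
    have expand : derivative ((1 + X) ^ (B + 1) : ℝ[X]) = (B + 1 : ℝ) • (1 + X) ^ B := by
      simp [derivative_pow, smul_eq_C_mul]
    rw [expand, map_smul] at h
    refine mul_left_cancel₀ (show (B + 1 : ℝ) ≠ 0 by positivity) ?_
    rw [pow_zero, one_mul, ← smul_eq_mul, h]
    simp [one_add_one_eq_two, Nat.factorial_succ]
    field_simp
  | succ A ih =>
    have h := polyIntegral_derivative ((1 - X) ^ (A + 1) * (1 + X) ^ (B + 1))
    have expand : derivative ((1 - X) ^ (A + 1) * (1 + X) ^ (B + 1) : ℝ[X]) =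
        (B + 1 : ℝ) • ((1 - X) ^ (A + 1) * (1 + X) ^ B) -
          (A + 1 : ℝ) • ((1 - X) ^ A * (1 + X) ^ (B + 1)) := by
      simp [derivative_mul, derivative_pow, smul_eq_C_mul]
      ring
    rw [expand, map_sub, map_smul, map_smul, ih] at h
    simp only [smul_eq_mul, eval_mul, eval_pow, eval_sub, eval_add, eval_one, eval_X, sub_self,
      add_neg_cancel, ne_eq, Nat.succ_ne_zero, not_false_eq_true, zero_pow, zero_mul, mul_zero,
      sub_eq_zero] at h
    refine mul_left_cancel₀ (show (B + 1 : ℝ) ≠ 0 by positivity) ?_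
    rw [h, show A + 1 + B + 1 = A + (B + 1) + 1 by ring, Nat.factorial_succ A, Nat.factorial_succ B]
    push_cast
    ring

theorem polyIntegral_weight_mul_jacobiPoly_sq_succ (A B n : ℕ) :
    2 * (n + 1) * polyIntegral ((1 - X) ^ A * (1 + X) ^ B * jacobiPoly A B (n + 1) ^ 2) =
      (n + A + B + 2) / 2 * polyIntegral ((1 - X) ^ (A + 1) * (1 + X) ^ (B + 1) *
        jacobiPoly (A + 1) (B + 1) n ^ 2) := by
  have parts := polyIntegral_derivative ((1 - X) ^ (A + 1) * (1 + X) ^ (B + 1) *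
    jacobiPoly (A + 1) (B + 1) n * jacobiPoly A B (n + 1))
  have expand : derivative ((1 - X) ^ (A + 1) * (1 + X) ^ (B + 1) *
      jacobiPoly (A + 1) (B + 1) n * jacobiPoly A B (n + 1)) =
      ((n + A + B + 2) / 2 : ℝ) • ((1 - X) ^ (A + 1) * (1 + X) ^ (B + 1) *
        jacobiPoly (A + 1) (B + 1) n ^ 2) -
      (2 * (n + 1) : ℝ) • ((1 - X) ^ A * (1 + X) ^ B * jacobiPoly A B (n + 1) ^ 2) := by
    rw [derivative_mul, derivative_weight_mul, jacobiRaise_jacobiPoly, derivative_jacobiPoly_succ,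
      smul_eq_C_mul, smul_eq_C_mul]
    ring
  rw [expand, map_sub, map_smul, map_smul] at parts
  simp at parts
  linarith

theorem polyIntegral_weight_mul_jacobiPoly_sq (A B n : ℕ) :
    polyIntegral ((1 - X) ^ A * (1 + X) ^ B * jacobiPoly A B n ^ 2) =
      2 ^ (A + B + 1) / (2 * n + A + B + 1) * ((n + A).factorial * (n + B).factorial /
        (n.factorial * (n + A + B).factorial)) := by
  induction n generalizing A B with
  | zero =>
    rw [jacobiPoly_zero, one_pow, mul_one, polyIntegral_weight, Nat.factorial_succ]
    push_cast
    simp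
    field_simp
  | succ n ih =>
    have step := polyIntegral_weight_mul_jacobiPoly_sq_succ A B n
    have ih' := ih (A + 1) (B + 1)
    push_cast at ih'
    rw [ih'] at step
    refine mul_left_cancel₀ (show (2 * (n + 1) : ℝ) ≠ 0 by positivity) ?_
    rw [step, show n + (A + 1) + (B + 1) = n + 1 + A + B + 1 by ring, Nat.factorial_succ n,
      Nat.factorial_succ (n + 1 + A + B), show n + (A + 1) = n + 1 + A by ring,
      show n + (B + 1) = n + 1 + B by ring]
    push_cast
    field_simp
    ring

end JacobiPolynomials

noncomputable section NegativeParameters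

open Polynomial

theorem jacobiPoly_neg_neg (a b m : ℕ) :
    jacobiPoly (-a) (-b) (m + a + b) =
      C ((-1) ^ a * 2⁻¹ ^ (a + b)) * ((1 - X) ^ a * (1 + X) ^ b * jacobiPoly a b m) := by
  have sum_eq : ∑ p ∈ antidiagonal (m + a + b), (C (genBinom ((m + a + b : ℕ) + -(a : ℝ)) p.1 *
        genBinom ((m + a + b : ℕ) + -(b : ℝ)) p.2) * ((X - 1) ^ p.2 * (X + 1) ^ p.1)) =
      (X - 1) ^ a * (X + 1) ^ b * ∑ p ∈ antidiagonal m,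
        C (genBinom (m + (a : ℝ)) p.1 * genBinom (m + (b : ℝ)) p.2) *
          ((X - 1) ^ p.2 * (X + 1) ^ p.1) := by
    have hb : ((m + a + b : ℕ) + -(a : ℝ)) = (m + b : ℕ) := by push_cast; ring
    have ha : ((m + a + b : ℕ) + -(b : ℝ)) = (m + a : ℕ) := by push_cast; ring
    simp only [ha, hb, ← Nat.cast_add, genBinom_natCast, mul_sum]
    refine (sum_of_injOn (fun p => (p.1 + b, p.2 + a)) ?_ ?_ ?_ ?_).symm
    · rintro ⟨j, k⟩ - ⟨j', k'⟩ -
      simp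
    · rintro ⟨j, k⟩
      simp only [mem_coe, HasAntidiagonal.mem_antidiagonal]
      lia
    · rintro ⟨j, k⟩ hjk hnot
      have hjk := mem_antidiagonal.1 hjk
      have out : m + b < j ∨ m + a < k := by
        by_contra! hle
        refine hnot ⟨(j - b, k - a), ?_, ?_⟩ <;> simp at hjk hle ⊢ <;> lia
      rcases out with h | h <;> simp [Nat.choose_eq_zero_of_lt h]
    · rintro ⟨j, k⟩ hjk
      obtain rfl := mem_antidiagonal.1 hjk
      rw [mul_comm ((j + k + a).choose j : ℝ),
        ← Nat.choose_symm_of_eq_add (show j + k + b = (j + b) + k by ring),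
        ← Nat.choose_symm_of_eq_add (show j + k + a = j + (k + a) by ring)]
      ring
  have neg_pow : (X - 1 : ℝ[X]) ^ a = C ((-1) ^ a) * (1 - X) ^ a := by
    rw [C_pow, ← mul_pow]
    simp
  rw [jacobiPoly, sum_eq, neg_pow, jacobiPoly, show m + a + b = a + b + m by ring, pow_add, C_mul,
    C_mul]
  ring

theorem one_sub_pow_dvd_jacobiPoly {a b n : ℕ} (hn : a + b ≤ n) :
    (1 - X) ^ a ∣ jacobiPoly (-a) (-b) n := by
  obtain ⟨m, rfl⟩ : ∃ m, n = m + a + b := ⟨n - (a + b), by lia⟩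
  rw [jacobiPoly_neg_neg, mul_assoc]
  exact (dvd_mul_right _ _).mul_left _

theorem one_add_pow_dvd_jacobiPoly {a b n : ℕ} (hn : a + b ≤ n) :
    (1 + X) ^ b ∣ jacobiPoly (-a) (-b) n := by
  obtain ⟨m, rfl⟩ : ∃ m, n = m + a + b := ⟨n - (a + b), by lia⟩
  rw [jacobiPoly_neg_neg, mul_right_comm, ← mul_assoc]
  exact dvd_mul_left _ _

theorem exists_jacobiPoly_sq_eq_and_polyIntegral_eq {a b n : ℕ} (hn : a + b ≤ n) :
    ∃ g : ℝ[X], jacobiPoly (-a) (-b) n ^ 2 = (1 - X) ^ a * (1 + X) ^ b * g ∧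
      polyIntegral g = 2 / 2 ^ (a + b) / (2 * n - a - b + 1) *
        ((n - b).factorial * (n - a).factorial / ((n - a - b).factorial * n.factorial)) := by
  obtain ⟨m, rfl⟩ : ∃ m, n = m + a + b := ⟨n - (a + b), by lia⟩
  refine ⟨((2⁻¹ ^ (a + b)) ^ 2 : ℝ) • ((1 - X) ^ a * (1 + X) ^ b * jacobiPoly a b m ^ 2), ?_, ?_⟩
  · have sign : ((-1 : ℝ[X]) ^ a) ^ 2 = 1 := by rw [pow_right_comm, neg_one_sq, one_pow]
    rw [jacobiPoly_neg_neg, smul_eq_C_mul]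
    simp only [C_mul, C_pow, C_neg, C_1]
    linear_combination (C 2⁻¹ ^ (a + b)) ^ 2 *
      ((1 - X) ^ a * (1 + X) ^ b * jacobiPoly a b m) ^ 2 * sign
  · rw [map_smul, polyIntegral_weight_mul_jacobiPoly_sq, Nat.add_sub_cancel,
      show m + a + b - a = m + b by lia, Nat.add_sub_cancel]
    push_cast
    rw [show (2 * (m + a + b) - a - b + 1 : ℝ) = 2 * m + a + b + 1 by ring]
    simp only [smul_eq_mul, inv_pow, pow_succ]
    field_simp

/-! ### Local exponents at the endpoints -/

theorem jacobiOp_one_sub_pow_mul (A B : ℝ) (k : ℕ) (y : ℝ[X]) :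
    jacobiOp A B ((1 - X) ^ k * y) =
      C (2 * k * (k + A)) * ((1 - X) ^ (k - 1) * y) +
        (1 - X) ^ k * (jacobiOp (A + 2 * k) B y - C (k * (k + A + B + 1)) * y) := by
  have hC2 : C (2 : ℝ) = (2 : ℝ[X]) := rfl
  simp only [jacobiOp_apply]
  rcases k with _ | _ | k <;> simp [derivative_mul, derivative_pow, hC2] <;> ring

theorem jacobiOp_comp_neg_X (A B : ℝ) (y : ℝ[X]) :
    jacobiOp A B (y.comp (-X)) = (jacobiOp B A y).comp (-X) := by
  simp only [jacobiOp_apply, derivative_comp]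
  simp [derivative_comp, add_comm]
  ring

-- The indicial equation at `1` has the roots `0` and `-A`.
theorem add_eq_zero_of_jacobiOp_one_sub_pow_mul_eq {A B l : ℝ} {k : ℕ} {g : ℝ[X]} (hk : k ≠ 0)
    (hg : g.eval 1 ≠ 0) (h : jacobiOp A B ((1 - X) ^ k * g) = -(l • ((1 - X) ^ k * g))) :
    k + A = 0 := by
  obtain ⟨k, rfl⟩ := Nat.exists_eq_succ_of_ne_zero hk
  rw [jacobiOp_one_sub_pow_mul, smul_eq_C_mul, Nat.succ_eq_add_one, Nat.add_sub_cancel] at h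
  have divided : C (2 * ((k + 1 : ℕ) : ℝ) * (((k + 1 : ℕ) : ℝ) + A)) * g =
      (1 - X) * (C (((k + 1 : ℕ) : ℝ) * ((k + 1 : ℕ) + A + B + 1)) * g -
        jacobiOp (A + 2 * ((k + 1 : ℕ) : ℝ)) B g - C l * g) := by
    refine mul_left_cancel₀ (pow_ne_zero k one_sub_X_ne_zero) ?_
    linear_combination h
  have indicial := congrArg (eval 1) divided
  simp only [eval_mul, eval_C, eval_sub, eval_one, eval_X, sub_self, zero_mul] at indicial
  exact (mul_eq_zero.1 ((mul_eq_zero.1 indicial).resolve_right hg)).resolve_left (by positivity)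

theorem one_sub_pow_dvd_of_jacobiOp_eq {a : ℕ} {B l : ℝ} {y : ℝ[X]}
    (hy : jacobiOp (-a) B y = -(l • y)) (hy1 : y.eval 1 = 0) : (1 - X) ^ a ∣ y := by
  rcases eq_or_ne y 0 with rfl | hy0
  · exact dvd_zero _
  obtain ⟨g, hg, hndvd⟩ := exists_eq_pow_rootMultiplicity_mul_and_not_dvd y hy0 1
  have hk : rootMultiplicity 1 y ≠ 0 := ((rootMultiplicity_pos hy0).2 hy1).ne'
  set k := rootMultiplicity 1 y
  have hy' : y = (1 - X) ^ k * ((-1) ^ k * g) := by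
    rw [hg, ← mul_assoc, ← mul_pow]
    simp
  have hg1 : ((-1) ^ k * g).eval 1 ≠ 0 := by
    simpa [dvd_iff_isRoot, IsRoot] using mt dvd_iff_isRoot.2 hndvd
  rw [hy'] at hy
  have hka : (k : ℝ) = a := by
    linear_combination add_eq_zero_of_jacobiOp_one_sub_pow_mul_eq hk hg1 hy
  rw [hy', Nat.cast_inj.1 hka]
  exact dvd_mul_right _ _

theorem one_add_pow_dvd_of_jacobiOp_eq {b : ℕ} {A l : ℝ} {y : ℝ[X]}
    (hy : jacobiOp A (-b) y = -(l • y)) (hy1 : y.eval (-1) = 0) : (1 + X) ^ b ∣ y := by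
  have reflected : (1 - X) ^ b ∣ y.comp (-X) := by
    refine one_sub_pow_dvd_of_jacobiOp_eq (B := A) (l := l) ?_ (by simpa [eval_comp] using hy1)
    rw [jacobiOp_comp_neg_X, hy]
    simp
  obtain ⟨g, hg⟩ := reflected
  refine ⟨g.comp (-X), ?_⟩
  have := congrArg (fun p : ℝ[X] => p.comp (-X)) hg
  simpa [comp_assoc] using this

theorem lam_sub_lam (A B x y : ℝ) : lam A B x - lam A B y = (x - y) * (x + y + A + B + 1) := by
  simp only [lam]
  ring

theorem lam_eq_lam_of_add_eq {a b n k : ℕ} (h : n + k + 1 = a + b) :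
    lam (-a) (-b) n = lam (-a) (-b) k := by
  have h' : (n + k + 1 : ℝ) = a + b := by exact_mod_cast h
  rw [← sub_eq_zero, lam_sub_lam]
  linear_combination (n - k : ℝ) * h'

/-- `((1 - x) / 2)^a P_m^{a,-b}(x)`, the eigenfunction of `jacobiOp (-a) (-b)` with exponent `a`
at `1`. -/
def jacobiSecond (a b m : ℕ) : ℝ[X] := (C 2⁻¹ * (1 - X)) ^ a * jacobiPoly a (-b) m

theorem jacobiSecond_eq (a b m : ℕ) :
    jacobiSecond a b m = (2⁻¹ ^ a : ℝ) • ((1 - X) ^ a * jacobiPoly a (-b) m) := by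
  rw [jacobiSecond, mul_pow, ← C_pow, smul_eq_C_mul, mul_assoc]

theorem one_sub_pow_dvd_jacobiSecond (a b m : ℕ) : (1 - X) ^ a ∣ jacobiSecond a b m :=
  jacobiSecond_eq a b m ▸ dvd_smul_of_dvd _ (dvd_mul_right _ _)

theorem jacobiOp_jacobiSecond {a b m n : ℕ} (h : n + m + 1 = b) :
    jacobiOp (-a) (-b) (jacobiSecond a b m) = -(lam (-a) (-b) n • jacobiSecond a b m) := by
  have eigenvalue : lam (-a) (-b) n = lam a (-b) m + a * (1 - b) := by
    simp only [lam, ← h]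
    push_cast
    ring
  rw [jacobiSecond_eq, map_smul, jacobiOp_one_sub_pow_mul, show -(a : ℝ) + 2 * a = a by ring,
    jacobiOp_jacobiPoly, eigenvalue, add_neg_cancel, mul_zero, C_0, zero_mul, zero_add]
  simp only [smul_eq_C_mul, C_add, C_mul, C_sub, C_neg, C_1, C_0]
  ring

end NegativeParameters

noncomputable section JordanBlock

open Polynomial Filter Topology

theorem poch_succ (z : ℝ) (m : ℕ) : poch z (m + 1) = poch z m * (z + m) :=
  prod_range_succ _ _

theorem poch_neg_natCast_eq_zero {u j : ℕ} (h : u < j) : poch (-u) j = 0 :=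
  prod_eq_zero (mem_range.2 h) (neg_add_cancel _)

theorem poch_one_sub_natCast_ne_zero {a j : ℕ} (h : j < a) : poch (-a + 1) j ≠ 0 := by
  refine prod_ne_zero_iff.2 fun i hi => ?_
  have hia : (i + 1 : ℝ) < a := by exact_mod_cast (Nat.succ_lt_succ (mem_range.1 hi)).trans_le h
  linarith

theorem differentiable_poch_sub (c : ℝ) (j : ℕ) : Differentiable ℝ fun s => poch (c - s) j := by
  unfold poch
  fun_prop

/-- The coefficient of `((1 - x) / 2)^j` in `₂F₁(-u, u - s + A + B + 1; A - s + 1; (1 - x) / 2)`. -/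
def hypCoeff (A B : ℝ) (u : ℕ) (s : ℝ) (j : ℕ) : ℝ :=
  poch (-u) j * poch (u - s + A + B + 1) j / (poch (A - s + 1) j * j.factorial)

theorem hypCoeff_eq_zero (A B s : ℝ) {u j : ℕ} (h : u < j) : hypCoeff A B u s j = 0 := by
  rw [hypCoeff, poch_neg_natCast_eq_zero h, zero_mul, zero_div]

theorem hypCoeff_succ {A B s : ℝ} {u j : ℕ} (h : poch (A - s + 1) (j + 1) ≠ 0) :
    (j + 1) * (j + 1 + A - s) * hypCoeff A B u s (j + 1) =
      (j - u) * (j + u - s + A + B + 1) * hypCoeff A B u s j := by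
  rw [poch_succ] at h
  have hj := left_ne_zero_of_mul h
  have hlast := right_ne_zero_of_mul h
  simp only [hypCoeff, poch_succ, Nat.factorial_succ, Nat.cast_mul, Nat.cast_add_one]
  field_simp
  ring

variable {a b u : ℕ} {B : ℝ}

theorem differentiableAt_hypCoeff (hu : u < a) (j : ℕ) :
    DifferentiableAt ℝ (fun s => hypCoeff (-a) B u s j) 0 := by
  rcases lt_or_ge u j with hj | hj
  · simp only [hypCoeff_eq_zero _ _ _ hj]
    exact differentiableAt_const _
  · unfold hypCoeff
    simp only [sub_add_eq_add_sub]
    refine .div ((differentiable_poch_sub _ j _).const_mul _)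
      ((differentiable_poch_sub _ j _).mul_const _) (mul_ne_zero ?_ (by positivity))
    rw [sub_zero]
    exact poch_one_sub_natCast_ne_zero (hj.trans_lt hu)

theorem eventually_hypCoeff_succ (hu : u < a) (j : ℕ) :
    ∀ᶠ s in 𝓝 0, (j + 1) * (j + 1 + -a - s) * hypCoeff (-a) B u s (j + 1) =
      (j - u) * (j + u - s + -a + B + 1) * hypCoeff (-a) B u s j := by
  rcases lt_trichotomy u j with hj | rfl | hj
  · simp [hypCoeff_eq_zero, hj, hj.trans (Nat.lt_succ_self j)]
  · simp [hypCoeff_eq_zero]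
  · have hne : ∀ᶠ s in 𝓝 (0 : ℝ), poch (-a + 1 - s) (j + 1) ≠ 0 := by
      refine (differentiable_poch_sub _ _).continuous.continuousAt.eventually_ne ?_
      rw [sub_zero]
      exact poch_one_sub_natCast_ne_zero (lt_of_le_of_lt hj hu)
    filter_upwards [hne] with s hs
    exact hypCoeff_succ (by rwa [sub_add_eq_add_sub])

theorem deriv_hypCoeff_succ (hu : u < a) (j : ℕ) :
    (j + 1) * (j + 1 + -a) * deriv (hypCoeff (-a) B u · (j + 1)) 0 -
        (j + 1) * hypCoeff (-a) B u 0 (j + 1) =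
      (j - u) * (j + u + -a + B + 1) * deriv (hypCoeff (-a) B u · j) 0 -
        (j - u) * hypCoeff (-a) B u 0 j := by
  have hasDeriv (p q : ℝ) (k : ℕ) : HasDerivAt (fun s => p * (q - s) * hypCoeff (-a) B u s k)
      (p * q * deriv (hypCoeff (-a) B u · k) 0 - p * hypCoeff (-a) B u 0 k) 0 := by
    refine ((((hasDerivAt_id' (0 : ℝ)).const_sub q).const_mul p).fun_mul
      (differentiableAt_hypCoeff (B := B) hu k).hasDerivAt).congr_deriv ?_
    ring
  have recurrence : (fun s => ((j : ℝ) + 1) * (j + 1 + -a - s) * hypCoeff (-a) B u s (j + 1))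
      =ᶠ[𝓝 0] fun s => (j - u) * (j + u + -a + B + 1 - s) * hypCoeff (-a) B u s j := by
    filter_upwards [eventually_hypCoeff_succ (B := B) hu j] with s hs
    rw [hs]
    ring
  exact (hasDeriv _ _ _).unique ((hasDeriv _ _ _).congr_of_eventuallyEq recurrence)

theorem hypCoeff_zero_eq_of_add_eq {v : ℕ} (h : u + v + 1 = a + b) :
    hypCoeff (-a) (-b) u 0 = hypCoeff (-a) (-b) v 0 := by
  have h' : (u + v + 1 : ℝ) = a + b := by exact_mod_cast h
  funext j
  rw [hypCoeff, hypCoeff, show (u - 0 + -a + -b + 1 : ℝ) = -v by linear_combination h',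
    show (v - 0 + -a + -b + 1 : ℝ) = -u by linear_combination h', mul_comm (poch (-u) j)]

/-- The polynomial `∑_{j < N} c_j ((1 - x) / 2)^j`. -/
def polyAtOne (N : ℕ) : (ℕ → ℝ) →ₗ[ℝ] ℝ[X] where
  toFun c := ∑ j ∈ range N, c j • (C 2⁻¹ * (1 - X)) ^ j
  map_add' c d := by simp only [Pi.add_apply, add_smul, sum_add_distrib]
  map_smul' r c := by simp only [Pi.smul_apply, smul_eq_mul, mul_smul, smul_sum, RingHom.id_apply]

theorem polyAtOne_apply (N : ℕ) (c : ℕ → ℝ) :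
    polyAtOne N c = ∑ j ∈ range N, c j • (C 2⁻¹ * (1 - X)) ^ j := rfl

theorem eval_polyAtOne (N : ℕ) (c : ℕ → ℝ) (x : ℝ) :
    (polyAtOne N c).eval x = ∑ j ∈ range N, c j * ((1 - x) / 2) ^ j := by
  simp [polyAtOne_apply, eval_finsetSum, div_eq_inv_mul]

theorem natDegree_polyAtOne_lt {N : ℕ} (hN : 0 < N) (c : ℕ → ℝ) :
    (polyAtOne N c).natDegree < N := by
  have hbase : (C 2⁻¹ * (1 - X) : ℝ[X]).natDegree ≤ 1 := by compute_degree
  suffices (polyAtOne N c).natDegree ≤ N - 1 by lia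
  rw [polyAtOne_apply]
  refine natDegree_sum_le_of_forall_le _ _ fun j hj => ?_
  refine (natDegree_smul_le _ _).trans ((natDegree_pow_le_of_le j hbase).trans ?_)
  have := mem_range.1 hj
  lia

theorem jacobiOp_half_one_sub_pow (A B : ℝ) (j : ℕ) :
    jacobiOp A B ((C 2⁻¹ * (1 - X)) ^ j) = (j * (j + A)) • (C 2⁻¹ * (1 - X)) ^ (j - 1) -
      (j * (j + A + B + 1)) • (C 2⁻¹ * (1 - X)) ^ j := by
  have scale (k : ℕ) : (C 2⁻¹ * (1 - X) : ℝ[X]) ^ k = (2⁻¹ ^ k : ℝ) • (1 - X) ^ k := by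
    rw [mul_pow, ← C_pow, smul_eq_C_mul]
  have h := jacobiOp_one_sub_pow_mul A B j 1
  rw [mul_one, mul_one, mul_one] at h
  rw [scale, scale, map_smul, h, jacobiOp_apply]
  rcases j with _ | j
  · simp
  · have half : C (2⁻¹ : ℝ) * 2 = 1 := by
      rw [show (2 : ℝ[X]) = C 2 from rfl, ← C_mul]
      norm_num
    simp only [smul_eq_C_mul, derivative_one, Nat.add_sub_cancel, C_mul, pow_succ]
    rw [show C (2 : ℝ) = (2 : ℝ[X]) from rfl]
    simp only [derivative_zero]
    linear_combination C (2⁻¹ ^ j) * C ((j + 1 : ℕ) : ℝ) * C ((j + 1 : ℕ) + A) * (1 - X) ^ j * half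

-- Truncation at `a` is harmless because the exponent difference at `1` is `a`.
theorem jacobiOp_polyAtOne (a : ℕ) (B : ℝ) (c : ℕ → ℝ) :
    jacobiOp (-a) B (polyAtOne a c) = polyAtOne a fun j =>
      (j + 1) * (j + 1 + -a) * c (j + 1) - j * (j + -a + B + 1) * c j := by
  have shift (z : ℝ[X]) : ∑ j ∈ range a, (c j * (j * (j + -a)) : ℝ) • z ^ (j - 1) =
      ∑ j ∈ range a, ((j + 1) * (j + 1 + -a) * c (j + 1) : ℝ) • z ^ j := by
    have h := (sum_range_succ (fun j => (c j * (j * (j + -a)) : ℝ) • z ^ (j - 1)) a).symm.trans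
      (sum_range_succ' _ a)
    simp only [add_neg_cancel, mul_zero, zero_smul, add_zero, Nat.add_sub_cancel,
      CharP.cast_eq_zero, zero_mul] at h
    rw [h]
    refine sum_congr rfl fun j _ => ?_
    push_cast
    ring_nf
  simp only [polyAtOne_apply, map_sum, map_smul, jacobiOp_half_one_sub_pow, smul_sub, smul_smul,
    sum_sub_distrib, shift, sub_smul, mul_comm (c _) (_ * (_ + _ + _ + _))]

theorem jacobiOp_polyAtOne_hypCoeff (hu : u < a) :
    jacobiOp (-a) B (polyAtOne a (hypCoeff (-a) B u 0)) =
      -(lam (-a) B u • polyAtOne a (hypCoeff (-a) B u 0)) := by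
  rw [jacobiOp_polyAtOne, ← map_smul, ← map_neg]
  congr 1
  funext j
  have recurrence := (eventually_hypCoeff_succ (B := B) hu j).self_of_nhds
  simp only [Pi.neg_apply, Pi.smul_apply, smul_eq_mul, lam]
  linear_combination recurrence

theorem jacobiOp_polyAtOne_deriv_hypCoeff (hu : u < a) :
    jacobiOp (-a) B (polyAtOne a fun j => deriv (hypCoeff (-a) B u · j) 0) +
        lam (-a) B u • polyAtOne a (fun j => deriv (hypCoeff (-a) B u · j) 0) =
      polyAtOne a fun j =>
        (j + 1) * hypCoeff (-a) B u 0 (j + 1) - (j - u) * hypCoeff (-a) B u 0 j := by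
  rw [jacobiOp_polyAtOne, ← map_smul, ← map_add]
  congr 1
  funext j
  have recurrence := deriv_hypCoeff_succ (B := B) hu j
  simp only [Pi.add_apply, Pi.smul_apply, smul_eq_mul, lam]
  linear_combination recurrence

theorem genBinom_sub_natCast_ne_zero {a v : ℕ} (h : v < a) : genBinom (v + -a) v ≠ 0 := by
  obtain ⟨t, rfl⟩ : ∃ t, a = v + t + 1 := ⟨a - v - 1, by lia⟩
  rw [show (v + -((v + t + 1 : ℕ) : ℝ)) = -(t + 1) by push_cast; ring,
    genBinom_neg_natCast_add_one]
  exact mul_ne_zero (by simp) (by exact_mod_cast (Nat.choose_pos (Nat.le_add_left v t)).ne')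

theorem eq_zero_of_jacobiOp_eq_of_natDegree_lt {l : ℝ} {y : ℝ[X]}
    (hy : jacobiOp (-a) B y = -(l • y)) (hy1 : y.eval 1 = 0) (hdeg : y.natDegree < a) : y = 0 := by
  by_contra hy0
  have hle := natDegree_le_of_dvd (one_sub_pow_dvd_of_jacobiOp_eq hy hy1) hy0
  rw [natDegree_pow, ← neg_sub X, natDegree_neg, ← C_1, natDegree_X_sub_C, mul_one] at hle
  lia

theorem polyAtOne_hypCoeff_mem_span (hu : u < a) :
    polyAtOne a (hypCoeff (-a) B u 0) ∈ Submodule.span ℝ {jacobiPoly (-a) B u} := by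
  have hP : (jacobiPoly (-a) B u).eval 1 ≠ 0 := by
    rw [eval_one_jacobiPoly]
    exact genBinom_sub_natCast_ne_zero hu
  set y := polyAtOne a (hypCoeff (-a) B u 0)
  set P := jacobiPoly (-a) B u
  have hdiff : y - (y.eval 1 / P.eval 1) • P = 0 := by
    refine eq_zero_of_jacobiOp_eq_of_natDegree_lt (a := a) (B := B) (l := lam (-a) B u) ?_ ?_ ?_
    · rw [map_sub, map_smul, jacobiOp_polyAtOne_hypCoeff hu, jacobiOp_jacobiPoly, smul_sub,
        smul_neg, smul_comm]
      abel
    · simp [hP]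
    · refine (natDegree_sub_le _ _).trans_lt (max_lt (natDegree_polyAtOne_lt (by lia) _) ?_)
      exact (natDegree_smul_le _ _).trans_lt ((natDegree_jacobiPoly_le _ _ _).trans_lt hu)
  exact Submodule.mem_span_singleton.2 ⟨_, (sub_eq_zero.1 hdiff).symm⟩

/-- The `s`-derivative at `0` of the difference of the hypergeometric polynomials with indices `n`
and `v`. -/
def jordanPoly (a b n v : ℕ) : ℝ[X] :=
  polyAtOne a (fun j => deriv (hypCoeff (-a) (-b) n · j) 0) -
    polyAtOne a (fun j => deriv (hypCoeff (-a) (-b) v · j) 0)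

-- For `n + v + 1 = a + b` both hypergeometric polynomials agree at `s = 0`.
theorem jacobiOp_jordanPoly_mem_span {n v : ℕ} (h : n + v + 1 = a + b) (hn : n < a) (hv : v < a) :
    jacobiOp (-a) (-b) (jordanPoly a b n v) + lam (-a) (-b) n • jordanPoly a b n v ∈
      Submodule.span ℝ {jacobiPoly (-a) (-b) v} := by
  have key : jacobiOp (-a) (-b) (jordanPoly a b n v) + lam (-a) (-b) n • jordanPoly a b n v =
      (n - v : ℝ) • polyAtOne a (hypCoeff (-a) (-b) v 0) := by
    have hD := jacobiOp_polyAtOne_deriv_hypCoeff (B := -b) hn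
    have hE := jacobiOp_polyAtOne_deriv_hypCoeff (B := -b) hv
    rw [← lam_eq_lam_of_add_eq h] at hE
    rw [jordanPoly, map_sub, smul_sub, sub_add_sub_comm, hD, hE, hypCoeff_zero_eq_of_add_eq h,
      ← map_sub, ← map_smul]
    congr 1
    funext j
    simp only [Pi.sub_apply, Pi.smul_apply, smul_eq_mul]
    ring
  rw [key]
  exact Submodule.smul_mem _ _ (polyAtOne_hypCoeff_mem_span hv)

end JordanBlock

noncomputable section ModifiedJacobi

open Polynomial

/-- The normalizing constant of `φ_u^{-a,-b}`. -/
def phiScale (a b u : ℕ) : ℝ :=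
  poch (-a + 1) (max u (a + b - 1 - u)) / (max u.factorial (a + b - 1 - u).factorial : ℕ)

theorem phiScale_reflect {a b u : ℕ} (h : u < a + b) :
    phiScale a b (a + b - 1 - u) = phiScale a b u := by
  rw [phiScale, phiScale, show a + b - 1 - (a + b - 1 - u) = u by lia, max_comm (a + b - 1 - u),
    max_comm (a + b - 1 - u).factorial]

theorem deriv_phiJ {a b u : ℕ} (hu : u < a) (x : ℝ) :
    deriv (fun s => phiJ (-a) (-b) u s x) 0 =
      phiScale a b u * (polyAtOne a fun j => deriv (hypCoeff (-a) (-b) u · j) 0).eval x := by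
  have phiJ_eq (s : ℝ) : phiJ (-a) (-b) u s x =
      phiScale a b u * ∑ j ∈ range a, hypCoeff (-a) (-b) u s j * ((1 - x) / 2) ^ j := by
    have truncate : ∑ j ∈ range (u + 1), hypCoeff (-a) (-b) u s j * ((1 - x) / 2) ^ j =
        ∑ j ∈ range a, hypCoeff (-a) (-b) u s j * ((1 - x) / 2) ^ j :=
      sum_subset (range_mono hu) fun j _ hj => by
        rw [hypCoeff_eq_zero _ _ _ (by simpa using hj), zero_mul]
    rw [← truncate, phiJ, phiScale,
      show (- -(a : ℤ) - -(b : ℤ) - (u : ℤ) - 1).toNat = a + b - 1 - u by lia]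
    simp [hypCoeff]
  have term (j : ℕ) (_ : j ∈ range a) : DifferentiableAt ℝ
      (fun s => hypCoeff (-a) (-b) u s j * ((1 - x) / 2) ^ j) 0 :=
    (differentiableAt_hypCoeff hu j).mul_const _
  simp only [phiJ_eq]
  rw [deriv_const_mul _ (.fun_sum term), deriv_fun_sum term, eval_polyAtOne]
  exact congrArg _ (sum_congr rfl fun j _ =>
    deriv_mul_const (differentiableAt_hypCoeff hu j) _)

/-- The scalar in front of the middle range of the polynomials `P̂_n^{-a,-b;M}`. -/
def hatScale (a b n : ℕ) : ℝ :=
  (-1) ^ (-(b : ℤ) + n) *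
    ((n - a).factorial * (n - b).factorial * (a + b - 1 - n).factorial) / n.factorial

theorem hatScale_ne_zero (a b n : ℕ) : hatScale a b n ≠ 0 := by
  have : (-1 : ℝ) ^ (-(b : ℤ) + n) ≠ 0 := zpow_ne_zero _ (by norm_num)
  unfold hatScale
  positivity

/-- `P̂_n^{-a,-b;M}` as an element of `ℝ[X]`. -/
def jacobiHat (a b : ℕ) (M : ℕ → ℝ) (n : ℕ) : ℝ[X] :=
  if a + b ≤ 2 * n ∧ n < a then phiScale a b n • jordanPoly a b n (a + b - 1 - n)
  else if a ≤ n ∧ n < a + b then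
    hatScale a b n •
      ((M (n - a) - 1)⁻¹ • jacobiPoly (-a) (-b) (a + b - 1 - n) + jacobiSecond a b (n - a))
  else jacobiPoly (-a) (-b) n

variable {a b n : ℕ} {M : ℕ → ℝ}

theorem jacobiHat_of_jordan (hn : a + b ≤ 2 * n) (hna : n < a) :
    jacobiHat a b M n = phiScale a b n • jordanPoly a b n (a + b - 1 - n) :=
  if_pos ⟨hn, hna⟩

theorem jacobiHat_of_le_of_lt (hn : a ≤ n) (hn' : n < a + b) :
    jacobiHat a b M n = hatScale a b n •
      ((M (n - a) - 1)⁻¹ • jacobiPoly (-a) (-b) (a + b - 1 - n) + jacobiSecond a b (n - a)) := by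
  rw [jacobiHat, if_neg (by lia), if_pos ⟨hn, hn'⟩]

theorem jacobiHat_of_two_mul_lt (hba : b ≤ a) (hn : 2 * n < a + b) :
    jacobiHat a b M n = jacobiPoly (-a) (-b) n := by
  rw [jacobiHat, if_neg (by lia), if_neg (by lia)]

theorem jacobiHat_of_add_le (hn : a + b ≤ n) : jacobiHat a b M n = jacobiPoly (-a) (-b) n := by
  rw [jacobiHat, if_neg (by lia), if_neg (by lia)]

theorem Phat_eq_eval_jacobiHat (a b : ℕ) (M : ℕ → ℝ) (n : ℕ) :
    Phat (-a) (-b) M n = fun x => (jacobiHat a b M n).eval x := by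
  funext x
  have jordan_iff : (⌈((- -(a : ℤ) - -(b : ℤ) : ℤ) : ℚ) / 2⌉ ≤ (n : ℤ) ∧
      (n : ℤ) ≤ - -(a : ℤ) - 1) ↔ a + b ≤ 2 * n ∧ n < a := by
    refine and_congr ?_ (by lia)
    rw [Int.ceil_le, div_le_iff₀ two_pos]
    norm_cast
    lia
  have middle_iff : (- -(a : ℤ) ≤ (n : ℤ) ∧ (n : ℤ) ≤ - -(a : ℤ) - -(b : ℤ) - 1) ↔
      a ≤ n ∧ n < a + b := by lia
  simp only [Phat, jacobiHat, jordan_iff, middle_iff,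
    show (- -(a : ℤ) - -(b : ℤ) - (n : ℤ) - 1).toNat = a + b - 1 - n by lia,
    show ((n : ℤ) + -(a : ℤ)).toNat = n - a by lia,
    show ((n : ℤ) + -(b : ℤ)).toNat = n - b by lia,
    show (-(a : ℤ) + (n : ℤ)).toNat = n - a by lia, show (- -(a : ℤ)).toNat = a by lia]
  split_ifs with jordan middle
  · rw [deriv_phiJ jordan.2, deriv_phiJ (by lia), phiScale_reflect (by lia), eval_smul, jordanPoly,
      eval_sub, smul_eq_mul, mul_sub]
  · simp [hatScale, jacobiSecond, eval_jacobiPoly, div_eq_inv_mul]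
    ring
  · simp [eval_jacobiPoly]

theorem jacobiOp_jacobiHat (h : ¬(a + b ≤ 2 * n ∧ n < a)) :
    jacobiOp (-a) (-b) (jacobiHat a b M n) = -(lam (-a) (-b) n • jacobiHat a b M n) := by
  rw [jacobiHat, if_neg h]
  split_ifs with middle
  · have hk : n + (a + b - 1 - n) + 1 = a + b := by lia
    rw [lam_eq_lam_of_add_eq hk, map_smul, map_add, map_smul, jacobiOp_jacobiPoly,
      jacobiOp_jacobiSecond (n := a + b - 1 - n) (by lia)]
    module
  · exact jacobiOp_jacobiPoly _ _ _

theorem jacobiOp_jacobiHat_mem_span (hba : b ≤ a) (hn : a + b ≤ 2 * n) (hna : n < a) :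
    jacobiOp (-a) (-b) (jacobiHat a b M n) + lam (-a) (-b) n • jacobiHat a b M n ∈
      Submodule.span ℝ {jacobiHat a b M (a + b - 1 - n)} := by
  rw [jacobiHat_of_jordan hn hna, jacobiHat_of_two_mul_lt hba (by lia), map_smul, smul_comm,
    ← smul_add]
  exact Submodule.smul_mem _ _ (jacobiOp_jordanPoly_mem_span (by lia) hna (by lia))

/-! ### Enumeration of `F` -/

theorem strictMonoOn_nth_mem (F : Finset ℕ) :
    StrictMonoOn (Nat.nth (· ∈ F)) (Set.Iio F.card) := by
  simpa using Nat.nth_strictMonoOn F.finite_toSet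

theorem bijOn_nth_mem (F : Finset ℕ) : Set.BijOn (Nat.nth (· ∈ F)) (Set.Iio F.card) F := by
  have image := Nat.image_nth_Iio_card (p := (· ∈ F)) F.finite_toSet
  rw [finite_toSet_toFinset] at image
  exact ⟨fun i hi => image.subset ⟨i, hi, rfl⟩, (strictMonoOn_nth_mem F).injOn, image.superset⟩

theorem elemOf_eq_nth (F : Finset ℕ) (i : Fin F.card) : elemOf F i = Nat.nth (· ∈ F) i :=
  (congrFun (orderEmbOfFin_unique rfl (fun i => (bijOn_nth_mem F).mapsTo i.2)
    fun i j hij => strictMonoOn_nth_mem F i.2 j.2 hij) i).symm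

theorem prod_range_card_nth_mem (F : Finset ℕ) (φ : ℕ → ℝ) :
    ∏ i ∈ range F.card, φ (Nat.nth (· ∈ F) i) = ∏ f ∈ F, φ f :=
  prod_nbij (Nat.nth (· ∈ F)) (fun _ hi => (bijOn_nth_mem F).mapsTo (mem_range.1 hi))
    (by simpa using (bijOn_nth_mem F).injOn) (by simpa using (bijOn_nth_mem F).surjOn)
    fun _ _ => rfl

theorem prod_erase_nth_mem (F : Finset ℕ) {m : ℕ} (hm : m < F.card) (φ : ℕ → ℝ) :
    ∏ i ∈ (range F.card).erase m, φ (Nat.nth (· ∈ F) i) =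
      ∏ f ∈ F.erase (Nat.nth (· ∈ F) m), φ f := by
  have inj := (bijOn_nth_mem F).injOn
  refine prod_nbij (Nat.nth (· ∈ F)) ?_ ?_ ?_ fun _ _ => rfl
  · intro i hi
    have hi' := mem_erase.1 hi
    have hiF := mem_range.1 hi'.2
    exact mem_erase.2 ⟨fun e => hi'.1 (inj hiF hm e), (bijOn_nth_mem F).mapsTo hiF⟩
  · exact inj.mono fun i hi => mem_range.1 (mem_of_mem_erase hi)
  · intro f hf
    have hf' := mem_erase.1 (mem_coe.1 hf)
    obtain ⟨i, hi, rfl⟩ := (bijOn_nth_mem F).surjOn hf'.2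
    exact ⟨i, mem_coe.2 (mem_erase.2 ⟨fun e => hf'.1 (e ▸ rfl), mem_range.2 hi⟩), rfl⟩

/-- The polynomials `P̂_f^{-a,-b;M}`, `f ∈ F`, in increasing order of `f`. -/
def hatSeq (a b : ℕ) (M : ℕ → ℝ) (F : Finset ℕ) (i : ℕ) : ℝ[X] :=
  jacobiHat a b M (Nat.nth (· ∈ F) i)

theorem iteratedDeriv_eval (p : ℝ[X]) (j : ℕ) :
    iteratedDeriv j (fun x => p.eval x) = fun x => (derivative^[j] p).eval x := by
  induction j with
  | zero => simp
  | succ j ih =>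
    rw [iteratedDeriv_succ, ih, Function.iterate_succ_apply']
    funext x
    exact Polynomial.deriv _

theorem OmegaJ_eq_eval_det (a b : ℕ) (M : ℕ → ℝ) (F : Finset ℕ) (x : ℝ) :
    OmegaJ (-a) (-b) M F x = (wronskianMatrix derivative (hatSeq a b M F) F.card).det.eval x := by
  rw [OmegaJ, ← coe_evalRingHom, RingHom.map_det]
  congr 1
  ext i j
  simp [wronskianMatrix, hatSeq, Phat_eq_eval_jacobiHat, iteratedDeriv_eval, elemOf_eq_nth]

-- The row of `P̂_n` comes first in `exJacobi` and last on the right; squaring removes the sign.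
theorem exJacobi_sq_eq_eval_det_sq (a b : ℕ) (M : ℕ → ℝ) (F : Finset ℕ) (n : ℕ) (x : ℝ) :
    exJacobi (-a) (-b) M F (n + uF F) x ^ 2 =
      (wronskianMatrix derivative (Function.update (hatSeq a b M F) F.card (jacobiHat a b M n))
        (F.card + 1)).det.eval x ^ 2 := by
  rw [← coe_evalRingHom, RingHom.map_det]
  set A : Matrix (Fin (F.card + 1)) (Fin (F.card + 1)) ℝ := Matrix.of fun i j =>
    Fin.cases (iteratedDeriv j (Phat (-a) (-b) M (n + uF F - uF F)) x)
      (fun k => iteratedDeriv j (Phat (-a) (-b) M (elemOf F k)) x) i with hA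
  have rotate : (evalRingHom x).mapMatrix (wronskianMatrix derivative
      (Function.update (hatSeq a b M F) F.card (jacobiHat a b M n)) (F.card + 1)) =
      A.submatrix (finRotate _) id := by
    ext i j
    refine Fin.lastCases ?_ (fun k => ?_) i
    · simp [wronskianMatrix, hA, Phat_eq_eval_jacobiHat, iteratedDeriv_eval]
    · have hk : finRotate (F.card + 1) k.castSucc = k.succ := finRotate_of_lt k.2
      simp [wronskianMatrix, hA, hk, hatSeq, Phat_eq_eval_jacobiHat, iteratedDeriv_eval,
        elemOf_eq_nth, k.2.ne]
  rw [rotate, Matrix.det_permute, mul_pow, sign_finRotate]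
  simp [exJacobi, hA, ← pow_mul]

theorem isJacobiSystem_hatSeq {F : Finset ℕ} (hba : b ≤ a) (hF : Ico b (a + b) ⊆ F)
    (hΩ : ∀ x ∈ Set.Icc (-1 : ℝ) 1, OmegaJ (-a) (-b) M F x ≠ 0) :
    IsJacobiSystem a b F.card (hatSeq a b M F) fun i => lam (-a) (-b) (Nat.nth (· ∈ F) i) := by
  have haF : a ≤ F.card := by simpa using card_le_card hF
  refine ⟨haF, hba.trans haF, fun i hi => ?_, fun x hx => OmegaJ_eq_eval_det a b M F x ▸ hΩ x hx⟩
  unfold hatSeq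
  by_cases h : a + b ≤ 2 * Nat.nth (· ∈ F) i ∧ Nat.nth (· ∈ F) i < a
  · refine Submodule.span_mono ?_ (jacobiOp_jacobiHat_mem_span hba h.1 h.2)
    obtain ⟨j, hj, hji⟩ :=
      (bijOn_nth_mem F).surjOn (hF (mem_Ico.2 ⟨by lia, by lia⟩ : a + b - 1 - Nat.nth (· ∈ F) i ∈ _))
    refine Set.singleton_subset_iff.2 ⟨j, ?_, congrArg _ hji⟩
    exact ((strictMonoOn_nth_mem F).lt_iff_lt hj hi).1 (by lia)
  · rw [jacobiOp_jacobiHat h, neg_add_cancel]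
    exact zero_mem _

end ModifiedJacobi

noncomputable section Norms

open Polynomial

theorem prod_range_add_one (m k : ℕ) :
    ∏ i ∈ range k, (m + i + 1 : ℝ) = (m + k).factorial / m.factorial := by
  rw [eq_div_iff (by positivity), ← Nat.factorial_mul_ascFactorial, Nat.ascFactorial_eq_prod_range]
  push_cast
  rw [mul_comm]
  simp only [add_right_comm]

theorem prod_range_sub_sub (m k : ℕ) :
    ∏ i ∈ range k, (i - m - k : ℝ) = (-1) ^ k * ((m + k).factorial / m.factorial) := by
  rw [← prod_range_add_one, ← prod_range_reflect, ← card_range k, ← prod_const, card_range,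
    ← prod_mul_distrib]
  refine prod_congr rfl fun i hi => ?_
  have hi := mem_range.1 hi
  rw [Nat.cast_sub (by lia), Nat.cast_sub (by lia)]
  push_cast
  ring

section SecondSolution

variable {a b m n t : ℕ}

theorem eval_one_jacobiPoly_neg (h : n + t + 1 = a) (B : ℝ) :
    (jacobiPoly (-a) B n).eval 1 = (-1) ^ n * (t + n).choose n := by
  rw [eval_one_jacobiPoly, ← genBinom_neg_natCast_add_one, ← h]
  push_cast
  ring_nf

theorem eval_neg_one_jacobiPoly_neg (h : n + m + 1 = b) (A : ℝ) :
    (jacobiPoly A (-b) n).eval (-1) = (m + n).choose n := by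
  rw [eval_neg_one_jacobiPoly, ← h, show (n + -(n + m + 1 : ℕ) : ℝ) = -(m + 1) by push_cast; ring,
    genBinom_neg_natCast_add_one, ← mul_assoc, ← mul_pow]
  simp

theorem one_add_pow_dvd_jacobiPoly_sub_jacobiSecond (h : n + m + 1 = b) :
    (1 + X) ^ b ∣ jacobiPoly (-a) (-b) n - jacobiSecond a b m := by
  refine one_add_pow_dvd_of_jacobiOp_eq (A := -a) (l := lam (-a) (-b) n) ?_ ?_
  · rw [map_sub, jacobiOp_jacobiPoly, jacobiOp_jacobiSecond h]
    module
  · have h' : m + n + 1 = b := by lia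
    rw [eval_sub, jacobiSecond, eval_mul, eval_neg_one_jacobiPoly_neg h,
      eval_neg_one_jacobiPoly_neg h', add_comm n m, Nat.choose_symm_add]
    norm_num

theorem jacobiSecond_mul_derivative_sub (a b m : ℕ) (p : ℝ[X]) :
    jacobiSecond (a + 1) b m * derivative p - derivative (jacobiSecond (a + 1) b m) * p =
      (1 - X) ^ a * (C (2⁻¹ ^ (a + 1)) *
        (C (a + 1 : ℝ) * jacobiPoly (a + 1 : ℕ) (-b) m * p + (1 - X) *
          (jacobiPoly (a + 1 : ℕ) (-b) m * derivative p -
            derivative (jacobiPoly (a + 1 : ℕ) (-b) m) * p))) := by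
  rw [jacobiSecond_eq, smul_eq_C_mul, derivative_C_mul, derivative_mul, derivative_pow_succ,
    derivative_sub, derivative_one, derivative_X, C_add, C_1]
  simp only [map_natCast]
  ring

theorem pow_dvd_mul_derivative_sub {R : Type*} [CommRing R] {r p q : R[X]} {k : ℕ}
    (h : r ^ (k + 1) ∣ p - q) : r ^ k ∣ q * derivative p - derivative q * p := by
  have hder := pow_sub_one_dvd_derivative_of_pow_dvd h
  rw [Nat.add_sub_cancel] at hder
  have split : q * derivative p - derivative q * p =
      q * derivative (p - q) - derivative q * (p - q) := by
    rw [derivative_sub]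
    ring
  rw [split]
  exact dvd_sub (hder.mul_left q) (((pow_dvd_pow r k.le_succ).trans h).mul_left _)

theorem isCoprime_one_sub_X_one_add_X : IsCoprime (1 - X : ℝ[X]) (1 + X) := by
  refine ⟨C 2⁻¹, C 2⁻¹, ?_⟩
  rw [← mul_add, sub_add_add_cancel, one_add_one_eq_two, ← C_ofNat, ← C_mul]
  norm_num

theorem exists_wronskian_jacobiSecond_jacobiPoly_eq (hm : n + m + 1 = b) (ht : n + t + 1 = a) :
    ∃ W : ℝ[X], jacobiSecond a b m * derivative (jacobiPoly (-a) (-b) n) -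
        derivative (jacobiSecond a b m) * jacobiPoly (-a) (-b) n =
          (1 - X) ^ (a - 1) * (1 + X) ^ (b - 1) * W ∧
      W.eval 1 = 2 / 2 ^ (a + b) *
        (a * (m + a).choose m * ((-1) ^ n * (t + n).choose n)) := by
  have dvd_sub := one_add_pow_dvd_jacobiPoly_sub_jacobiSecond (a := a) hm
  have eval_second : (jacobiPoly a (-b) m).eval 1 = (m + a).choose m := by
    rw [eval_one_jacobiPoly, ← genBinom_natCast, Nat.cast_add]
  have eval_first := eval_one_jacobiPoly_neg ht (-b)
  obtain ⟨a, rfl⟩ : ∃ a', a = a' + 1 := ⟨n + t, ht.symm⟩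
  obtain ⟨b, rfl⟩ : ∃ b', b = b' + 1 := ⟨n + m, hm.symm⟩
  have factor := jacobiSecond_mul_derivative_sub a (b + 1) m
    (jacobiPoly (-(a + 1 : ℕ)) (-(b + 1 : ℕ)) n)
  obtain ⟨W, hW⟩ := (isCoprime_one_sub_X_one_add_X.pow (m := a) (n := b)).mul_dvd
    ⟨_, factor⟩ (pow_dvd_mul_derivative_sub dvd_sub)
  refine ⟨W, hW, ?_⟩
  have cancelled := mul_left_cancel₀ (pow_ne_zero a one_sub_X_ne_zero)
    ((mul_assoc _ _ W).symm.trans (hW.symm.trans factor))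
  have at_one := congrArg (eval 1) cancelled
  simp only [eval_mul, eval_pow, eval_add, eval_sub, eval_one, eval_X, eval_C, sub_self, zero_mul,
    add_zero, eval_first, eval_second, one_add_one_eq_two] at at_one
  refine mul_left_cancel₀ (pow_ne_zero b two_ne_zero) (at_one.trans ?_)
  push_cast
  simp only [pow_add, inv_pow, pow_one]
  field_simp

end SecondSolution

section Products

variable {a b n : ℕ} {F : Finset ℕ}

theorem prod_UF_neg_neg (hpos : ∀ f ∈ F, 0 < f) (a b : ℕ) (φ : ℤ → ℝ) :
    ∏ u ∈ UF (-a) (-b) F, φ u = ∏ f ∈ F \ Ico b (a + b), φ (f - a - b) := by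
  have UF_eq : UF (-a) (-b) F =
      (F \ Ico b (a + b)).image fun f : ℕ => (f + -(a : ℤ) + -(b : ℤ)) := by
    rw [UF, UFm, UFp, ← image_union]
    congr 1
    ext f
    simp only [mem_union, mem_filter, mem_sdiff, mem_Ico]
    by_cases hf : f ∈ F
    · have := hpos f hf
      simp only [hf, true_and]
      lia
    · simp only [hf, false_and, or_false]
  rw [UF_eq, prod_image fun x _ y _ h => by simpa using h]
  simp only [← sub_eq_add_neg]

theorem prod_lam_sub_lam (a b n : ℕ) (s : Finset ℕ) :
    ∏ f ∈ s, (lam (-a) (-b) n - lam (-a) (-b) f) =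
      (∏ f ∈ s, (n - f : ℝ)) * ∏ f ∈ s, (n + (f - a - b) + 1 : ℝ) := by
  rw [← prod_mul_distrib]
  refine prod_congr rfl fun f _ => ?_
  rw [lam_sub_lam]
  ring

theorem prod_Ico_eq_factorial_div (hn : a + b ≤ n) :
    ∏ f ∈ Ico b (a + b), (n + (f - a - b) + 1 : ℝ) = n.factorial / (n - a).factorial := by
  have factorials := prod_range_add_one (n - a) a
  rw [Nat.sub_add_cancel (by lia)] at factorials
  rw [← factorials, prod_Ico_eq_prod_range, Nat.add_sub_cancel]
  refine prod_congr rfl fun i _ => ?_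
  rw [Nat.cast_sub (by lia)]
  push_cast
  ring

theorem prod_range_eq_factorial_div (hn : a + b ≤ n) :
    ∏ i ∈ range a, (n - a - b + i + 1 : ℝ) = (n - b).factorial / (n - a - b).factorial := by
  have factorials := prod_range_add_one (n - a - b) a
  rw [show n - a - b + a = n - b by lia] at factorials
  rw [← factorials, Nat.cast_sub (by lia), Nat.cast_sub (by lia)]

theorem prod_erase_Ico_mul_eq {m t : ℕ} (hm : n + m + 1 = b) (ht : n + t + 1 = a) :
    (∏ f ∈ (Ico b (a + b)).erase (b + t), (n + (f - a - b) + 1 : ℝ)) *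
        (a * (m + a).choose m * ((-1) ^ n * (t + n).choose n)) =
      -∏ i ∈ range a, (n - a - b + i + 1 : ℝ) := by
  have erase_eq : (Ico b (a + b)).erase (b + t) = Ico b (b + t) ∪ Ico (b + t + 1) (a + b) := by
    ext f
    simp only [mem_erase, mem_union, mem_Ico]
    lia
  have disjoint : Disjoint (Ico b (b + t)) (Ico (b + t + 1) (a + b)) :=
    Ico_disjoint_Ico_consecutive b (b + t) (a + b) |>.mono_right (Ico_subset_Ico_left (by lia))
  have below : ∏ f ∈ Ico b (b + t), (n + (f - a - b) + 1 : ℝ) = (-1) ^ t * t.factorial := by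
    have factorials := prod_range_sub_sub 0 t
    rw [zero_add, Nat.factorial_zero, Nat.cast_one, div_one] at factorials
    rw [← factorials, prod_Ico_eq_prod_range, Nat.add_sub_cancel_left, ← ht]
    refine prod_congr rfl fun i _ => ?_
    push_cast
    ring
  have above : ∏ f ∈ Ico (b + t + 1) (a + b), (n + (f - a - b) + 1 : ℝ) = n.factorial := by
    have factorials := prod_range_add_one 0 n
    rw [zero_add, Nat.factorial_zero, Nat.cast_one, div_one] at factorials
    rw [← factorials, prod_Ico_eq_prod_range, show a + b - (b + t + 1) = n by lia, ← ht]
    refine prod_congr rfl fun i _ => ?_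
    push_cast
    ring
  have whole : ∏ i ∈ range a, (n - a - b + i + 1 : ℝ) =
      (-1) ^ a * ((m + a).factorial / m.factorial) := by
    rw [← prod_range_sub_sub, ← hm]
    refine prod_congr rfl fun i _ => ?_
    push_cast
    ring
  rw [erase_eq, prod_union disjoint, below, above, whole, Nat.cast_add_choose,
    Nat.choose_symm_add.symm, Nat.cast_add_choose, ← ht, Nat.add_comm n t, Nat.factorial_succ,
    pow_succ, pow_add]
  push_cast
  field_simp

theorem prod_erase_eq_prod_sdiff_mul {ι R : Type*} [DecidableEq ι] [CommMonoid R]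
    {s t : Finset ι} (hst : s ⊆ t) {k : ι} (hk : k ∈ s) (φ : ι → R) :
    ∏ i ∈ t.erase k, φ i = (∏ i ∈ t \ s, φ i) * ∏ i ∈ s.erase k, φ i := by
  have sdiff_eq : t.erase k \ s.erase k = t \ s := by
    ext i
    simp only [mem_sdiff, mem_erase]
    grind
  rw [← prod_sdiff (erase_subset_erase k hst), sdiff_eq]

end Products

variable {a b n : ℕ} {M : ℕ → ℝ} {F : Finset ℕ}

theorem wJ_neg_neg (ha : a ≤ F.card) (hb : b ≤ F.card) (M : ℕ → ℝ) (x : ℝ) :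
    wJ (-a) (-b) M F x =
      (1 - x) ^ (F.card - a) * (1 + x) ^ (F.card - b) / OmegaJ (-a) (-b) M F x ^ 2 := by
  rw [wJ, show -(a : ℤ) + F.card = (F.card - a : ℕ) by lia,
    show -(b : ℤ) + F.card = (F.card - b : ℕ) by lia, zpow_natCast, zpow_natCast]

theorem integral_exJacobi_sq_mul_wJ (hba : b ≤ a) (hF : Ico b (a + b) ⊆ F)
    (hΩ : ∀ x ∈ Set.Icc (-1 : ℝ) 1, OmegaJ (-a) (-b) M F x ≠ 0)
    (hn : ¬(a + b ≤ 2 * n ∧ n < a)) {g : ℝ[X]}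
    (hg : (∏ f ∈ F, (lam (-a) (-b) n - lam (-a) (-b) f)) • jacobiHat a b M n ^ 2 =
      (1 - X) ^ a * (1 + X) ^ b * g) :
    ∫ x in (-1 : ℝ)..1, exJacobi (-a) (-b) M F (n + uF F) x ^ 2 * wJ (-a) (-b) M F x =
      polyIntegral g +
        ((jacobiConcomitant a b F.card (hatSeq a b M F)
          (fun i => lam (-a) (-b) (Nat.nth (· ∈ F) i)) (jacobiHat a b M n) (lam (-a) (-b) n)
          (jacobiHat a b M n)).eval (RingHom.id ℝ) 1 -
        (jacobiConcomitant a b F.card (hatSeq a b M F)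
          (fun i => lam (-a) (-b) (Nat.nth (· ∈ F) i)) (jacobiHat a b M n) (lam (-a) (-b) n)
          (jacobiHat a b M n)).eval (RingHom.id ℝ) (-1)) := by
  have system := isJacobiSystem_hatSeq hba hF hΩ
  rw [← prod_range_card_nth_mem F fun f => lam (-a) (-b) n - lam (-a) (-b) f, sq] at hg
  rw [polyIntegral_apply, ← add_sub_assoc,
    ← system.integral_wronskian_mul_wronskian (jacobiOp_jacobiHat hn) hg]
  refine intervalIntegral.integral_congr fun x _ => ?_
  simp only [wJ_neg_neg system.le_left system.le_right, exJacobi_sq_eq_eval_det_sq,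
    OmegaJ_eq_eval_det]
  ring

theorem integral_exJacobi_sq_mul_wJ_of_add_le (hba : b ≤ a) (hpos : ∀ f ∈ F, 0 < f)
    (hF : Ico b (a + b) ⊆ F) (hΩ : ∀ x ∈ Set.Icc (-1 : ℝ) 1, OmegaJ (-a) (-b) M F x ≠ 0)
    (hn : a + b ≤ n) :
    ∫ x in (-1 : ℝ)..1, exJacobi (-a) (-b) M F (n + uF F) x ^ 2 * wJ (-a) (-b) M F x =
      2 / 2 ^ (a + b) * (∏ f ∈ F, (n - f : ℝ)) * (∏ u ∈ UF (-a) (-b) F, (n + u + 1 : ℝ)) *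
        (∏ i ∈ range a, (n - a - b + i + 1 : ℝ)) / (2 * n - a - b + 1) := by
  have system := isJacobiSystem_hatSeq hba hF hΩ
  have jordan : ¬(a + b ≤ 2 * n ∧ n < a) := by lia
  have eigen := jacobiOp_jacobiHat (M := M) jordan
  obtain ⟨g, hg, integral_g⟩ := exists_jacobiPoly_sq_eq_and_polyIntegral_eq hn
  rw [← jacobiHat_of_add_le (M := M) hn] at hg
  rw [integral_exJacobi_sq_mul_wJ hba hF hΩ jordan
      (g := (∏ f ∈ F, (lam (-a) (-b) n - lam (-a) (-b) f)) • g) (by rw [hg, mul_smul_comm]),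
    system.eval_jacobiConcomitant_one_eq_zero eigen
      (jacobiHat_of_add_le (M := M) hn ▸ one_sub_pow_dvd_jacobiPoly hn),
    system.eval_jacobiConcomitant_neg_one_eq_zero eigen
      (jacobiHat_of_add_le (M := M) hn ▸ one_add_pow_dvd_jacobiPoly hn),
    map_smul, integral_g, prod_lam_sub_lam, prod_UF_neg_neg hpos a b (fun u => (n + u + 1 : ℝ)),
    ← prod_sdiff hF (f := fun f : ℕ => (n + (f - a - b) + 1 : ℝ)), prod_Ico_eq_factorial_div hn,
    prod_range_eq_factorial_div hn]
  push_cast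
  simp only [smul_eq_mul, div_eq_mul_inv]
  field_simp
  ring

-- The eigenvalue `λ_n` is attained at `k = a + b - 1 - n ∈ F`, so only the boundary terms survive.
theorem integral_exJacobi_sq_mul_wJ_eq_prod_erase {m t : ℕ} (hba : b ≤ a)
    (hF : Ico b (a + b) ⊆ F) (hΩ : ∀ x ∈ Set.Icc (-1 : ℝ) 1, OmegaJ (-a) (-b) M F x ≠ 0)
    (hm : n + m + 1 = b) (ht : n + t + 1 = a) (hM0 : M m ≠ 0) (hM1 : M m ≠ 1) :
    ∫ x in (-1 : ℝ)..1, exJacobi (-a) (-b) M F (n + uF F) x ^ 2 * wJ (-a) (-b) M F x =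
      2 / 2 ^ (a + b) * ((1 - M m) ^ 2 / M m) *
        (∏ f ∈ F.erase (b + t), (lam (-a) (-b) n - lam (-a) (-b) f)) *
        (a * (m + a).choose m * ((-1) ^ n * (t + n).choose n)) := by
  have system := isJacobiSystem_hatSeq hba hF hΩ
  have hat_eq : jacobiHat a b M n = jacobiPoly (-a) (-b) n :=
    jacobiHat_of_two_mul_lt hba (by lia)
  have partner : lam (-a) (-b) (b + t : ℕ) = lam (-a) (-b) n :=
    lam_eq_lam_of_add_eq (by lia)
  have partner_mem : b + t ∈ F := hF (mem_Ico.2 (by lia))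
  have prod_eq_zero : ∏ f ∈ F, (lam (-a) (-b) n - lam (-a) (-b) f) = 0 :=
    prod_eq_zero partner_mem (by rw [partner, sub_self])
  obtain ⟨i, hi, hik⟩ := (bijOn_nth_mem F).surjOn partner_mem
  have row : hatSeq a b M F i = hatScale a b (b + t) •
      ((M m - 1)⁻¹ • jacobiPoly (-a) (-b) n + jacobiSecond a b m) := by
    rw [hatSeq, hik, jacobiHat_of_le_of_lt (by lia) (by lia), show b + t - a = m by lia,
      show a + b - 1 - (b + t) = n by lia]
  obtain ⟨W, hW, eval_W⟩ := exists_wronskian_jacobiSecond_jacobiPoly_eq hm ht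
  have hM1' : M m - 1 ≠ 0 := sub_ne_zero.2 hM1
  have coeff_add_one : (M m - 1)⁻¹ + 1 = M m / (M m - 1) := by
    field_simp
    ring
  rw [integral_exJacobi_sq_mul_wJ hba hF hΩ (by lia) (g := 0) (by simp [prod_eq_zero]), hat_eq,
    system.eval_jacobiConcomitant_one_sub_neg_one (jacobiOp_jacobiPoly _ _ n)
      (jacobiOp_jacobiSecond hm) (one_sub_pow_dvd_jacobiSecond a b m)
      (one_add_pow_dvd_jacobiPoly_sub_jacobiSecond hm) hi (by rw [hik, partner]) row
      (hatScale_ne_zero a b _) (inv_ne_zero hM1') (coeff_add_one ▸ div_ne_zero hM0 hM1')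
      (by lia) (by lia) hW,
    prod_erase_nth_mem F hi fun f => lam (-a) (-b) n - lam (-a) (-b) f, hik, eval_W,
    coeff_add_one, map_zero]
  field_simp
  ring

theorem integral_exJacobi_sq_mul_wJ_of_lt (hba : b ≤ a) (hM0 : M (b - 1 - n) ≠ 0)
    (hM1 : M (b - 1 - n) ≠ 1) (hpos : ∀ f ∈ F, 0 < f) (hF : Ico b (a + b) ⊆ F)
    (hΩ : ∀ x ∈ Set.Icc (-1 : ℝ) 1, OmegaJ (-a) (-b) M F x ≠ 0) (hn : n < b) :
    ∫ x in (-1 : ℝ)..1, exJacobi (-a) (-b) M F (n + uF F) x ^ 2 * wJ (-a) (-b) M F x =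
      2 / 2 ^ (a + b) * (-(1 - M (b - 1 - n)) ^ 2 / M (b - 1 - n)) * (∏ f ∈ F, (n - f : ℝ)) *
        (∏ u ∈ UF (-a) (-b) F, (n + u + 1 : ℝ)) *
        (∏ i ∈ range a, (n - a - b + i + 1 : ℝ)) / (2 * n - a - b + 1) := by
  have hm : n + (b - 1 - n) + 1 = b := by lia
  obtain ⟨t, ht⟩ : ∃ t, n + t + 1 = a := ⟨a - 1 - n, by lia⟩
  have partner_mem : b + t ∈ Ico b (a + b) := mem_Ico.2 (by lia)
  have sub_partner : (n - (b + t : ℕ) : ℝ) = 2 * n - a - b + 1 := by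
    rw [← ht]
    push_cast
    ring
  have sub_partner_ne_zero : (2 * n - a - b + 1 : ℝ) ≠ 0 := by
    rw [← sub_partner, sub_ne_zero]
    exact Nat.cast_injective.ne (by lia)
  rw [integral_exJacobi_sq_mul_wJ_eq_prod_erase hba hF hΩ hm ht hM0 hM1, prod_lam_sub_lam,
    prod_erase_eq_prod_sdiff_mul hF partner_mem fun f => (n + (f - a - b) + 1 : ℝ),
    prod_UF_neg_neg hpos a b (fun u => (n + u + 1 : ℝ)), ← mul_prod_erase F _ (hF partner_mem),
    sub_partner, eq_div_iff sub_partner_ne_zero]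
  push_cast
  linear_combination 2 / 2 ^ (a + b) * ((1 - M (b - 1 - n)) ^ 2 / M (b - 1 - n)) *
    (∏ f ∈ F.erase (b + t), (n - f : ℝ)) *
    (∏ f ∈ F \ Ico b (a + b), (n + (f - a - b) + 1 : ℝ)) * (2 * n - a - b + 1) *
    prod_erase_Ico_mul_eq hm ht

end Norms

/-- the squared `L²`-norm of the exceptional Jacobi polynomials. -/
theorem exceptional_jacobi_norm
    (α β : ℤ) (M : ℕ → ℝ) (F : Finset ℕ)
    (hαβ : α ≤ β) (hβ : β ≤ -1)
    (hM : ∀ i, M i ≠ 0 ∧ M i ≠ 1)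
    (hFpos : ∀ f ∈ F, 0 < f)
    (hFc : ∀ k : ℕ, -β ≤ (k : ℤ) → (k : ℤ) ≤ -α - β - 1 → k ∈ F)
    (hΩ : ∀ x ∈ Set.Icc (-1 : ℝ) 1, OmegaJ α β M F x ≠ 0)
    (n : ℕ) (hnF : n ∉ F) :
    ∫ x in (-1 : ℝ)..1, (exJacobi α β M F (n + uF F) x) ^ 2 * wJ α β M F x =
      (2 : ℝ) ^ (α + β + 1) *
          (if (n : ℤ) ≤ -β - 1 then
              -(1 - M ((-β - 1 - (n : ℤ)).toNat)) ^ 2 / M ((-β - 1 - (n : ℤ)).toNat)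
            else 1) *
          (∏ f ∈ F, ((n : ℝ) - (f : ℝ))) *
          (∏ u ∈ UF α β F, ((n : ℝ) + ((u : ℤ) : ℝ) + 1)) *
          (∏ i ∈ Finset.range (-α).toNat, ((n : ℝ) + (α : ℝ) + (β : ℝ) + (i : ℝ) + 1)) /
        (2 * (n : ℝ) + (α : ℝ) + (β : ℝ) + 1) := by
  obtain ⟨a, rfl⟩ : ∃ a : ℕ, α = -a := ⟨(-α).toNat, by lia⟩
  obtain ⟨b, rfl⟩ : ∃ b : ℕ, β = -b := ⟨(-β).toNat, by lia⟩
  have hba : b ≤ a := by lia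
  have hF : Ico b (a + b) ⊆ F := fun k hk =>
    have := mem_Ico.1 hk
    hFc k (by lia) (by lia)
  have scale : (2 : ℝ) ^ (-(a : ℤ) + -(b : ℤ) + 1) = 2 / 2 ^ (a + b) := by
    rw [zpow_add_one₀ two_ne_zero, ← neg_add, ← Nat.cast_add, zpow_neg, zpow_natCast,
      inv_mul_eq_div]
  rw [scale]
  simp only [Int.cast_neg, Int.cast_natCast, ← sub_eq_add_neg, neg_neg, Int.toNat_natCast]
  rcases lt_or_ge n b with hn | hn
  · rw [if_pos (by lia), show ((b : ℤ) - 1 - n).toNat = b - 1 - n by lia]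
    exact integral_exJacobi_sq_mul_wJ_of_lt hba (hM _).1 (hM _).2 hFpos hF hΩ hn
  · have hn' : a + b ≤ n := by
      by_contra h
      exact hnF (hF (mem_Ico.2 (by lia)))
    rw [if_neg (by lia), mul_one]
    exact integral_exJacobi_sq_mul_wJ_of_add_le hba hFpos hF hΩ hn'
end

section
/- Let α ≤ β ≤ −1 be negative integers, let M = (M_i)_{i≥0} be real parameters with M_i ∉ {0,1}, and let F be a finite set of positive integers with {−β, …, −α−β−1} ⊆ F. Then for every n ∈ σ_F, lim_{N→+∞} h_n^{α,β,N;M,F}((1−x)N/2) / N^n = υ_n^F · P_n^{α,β;M,F}(x), uniformly on compact subsets of ℂ, where υ_n^F = (−1)^n · 2^{C(n_F+1,2)} · (n−u_F)! · ∏_{f∈F} f!. -/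
open Finset

noncomputable section ExceptionalHahnJacobiComplex

/-- Pochhammer symbol `(z)_m = z (z+1) ⋯ (z+m-1)` (complex variable). -/
def pochC (z : ℂ) (m : ℕ) : ℂ := ∏ i ∈ Finset.range m, (z + (i : ℂ))

/-- Generalized binomial coefficient `C(z, k)` (complex variable). -/
def genBinomC (z : ℂ) (k : ℕ) : ℂ := (∏ i ∈ Finset.range k, (z - (i : ℂ))) / (k.factorial : ℂ)

/-- Hahn polynomial `h_n^{a,b,N}(x)` (complex variable). -/
def hahnC (a b N : ℂ) (n : ℕ) (x : ℂ) : ℂ :=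
  ∑ j ∈ Finset.range (n + 1),
    pochC (-(n : ℂ)) j * pochC (a + b + (n : ℂ) + 1) j * pochC (-N + (j : ℂ)) (n - j) *
      pochC (a + (j : ℂ) + 1) (n - j) * pochC (-x) j / (j.factorial : ℂ)

/-- Jacobi polynomial `P_n^{a,b}(x)` (complex variable). -/
def jacobiC (a b : ℂ) (n : ℕ) (x : ℂ) : ℂ :=
  (2 : ℂ)⁻¹ ^ n * ∑ j ∈ Finset.range (n + 1),
    genBinomC ((n : ℂ) + a) j * genBinomC ((n : ℂ) + b) (n - j) * (x - 1) ^ (n - j) * (x + 1) ^ j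

/-- The function `φ_u^{α,β,N}(s,x)` (complex variables). -/
def phiHC (α β : ℤ) (N : ℂ) (u : ℕ) (s x : ℂ) : ℂ :=
  pochC ((α : ℂ) + 1) (max u (-α - β - (u : ℤ) - 1).toNat) *
    pochC (-N) (max u (-α - β - (u : ℤ) - 1).toNat) *
    ∑ j ∈ Finset.range (u + 1),
      pochC (-(u : ℂ)) j * pochC ((u : ℂ) - s + (α : ℂ) + (β : ℂ) + 1) j * pochC (-x) j /
        (pochC ((α : ℂ) - s + 1) j * pochC (-N) j * (j.factorial : ℂ))

/-- The polynomials `Ĥ_n^{α,β,N;M}(x)` (complex variable). -/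
def HhatC (α β : ℤ) (N : ℂ) (M : ℕ → ℝ) (n : ℕ) (x : ℂ) : ℂ :=
  if ⌈((-α - β : ℤ) : ℚ) / 2⌉ ≤ (n : ℤ) ∧ (n : ℤ) ≤ -α - 1 then
    deriv (fun s : ℂ => phiHC α β N n s x) 0 -
      deriv (fun s : ℂ => phiHC α β N (-α - β - (n : ℤ) - 1).toNat s x) 0
  else if -α ≤ (n : ℤ) ∧ (n : ℤ) ≤ -α - β - 1 then
    (-1 : ℂ) ^ ((β : ℤ) + (n : ℤ)) * ((β + (n : ℤ)).toNat.factorial : ℂ) *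
      (((-α - β - (n : ℤ) - 1).toNat.factorial : ℂ) * pochC (-x) (-α).toNat *
          hahnC (-(α : ℂ)) (β : ℂ) ((α : ℂ) + N) ((α + (n : ℤ)).toNat) (x + (α : ℂ)) +
        (((α + (n : ℤ)).toNat.factorial : ℂ)) *
            pochC (-N - (α : ℂ) - (β : ℂ) - (n : ℂ) - 1) (2 * (n : ℤ) + α + β + 1).toNat /
            ((M ((α + (n : ℤ)).toNat) : ℂ) - 1) *
          hahnC (α : ℂ) (β : ℂ) N ((-α - β - (n : ℤ) - 1).toNat) x)
  else hahnC (α : ℂ) (β : ℂ) N n x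

/-- The function `φ_u^{α,β}(s,x)` (complex variables). -/
def phiJC (α β : ℤ) (u : ℕ) (s x : ℂ) : ℂ :=
  pochC ((α : ℂ) + 1) (max u (-α - β - (u : ℤ) - 1).toNat) /
      ((max u.factorial (-α - β - (u : ℤ) - 1).toNat.factorial : ℕ) : ℂ) *
    ∑ j ∈ Finset.range (u + 1),
      pochC (-(u : ℂ)) j * pochC ((u : ℂ) - s + (α : ℂ) + (β : ℂ) + 1) j /
          (pochC ((α : ℂ) - s + 1) j * (j.factorial : ℂ)) * ((1 - x) / 2) ^ j

/-- The polynomials `P̂_n^{α,β;M}(x)` (complex variable). -/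
def PhatC (α β : ℤ) (M : ℕ → ℝ) (n : ℕ) (x : ℂ) : ℂ :=
  if ⌈((-α - β : ℤ) : ℚ) / 2⌉ ≤ (n : ℤ) ∧ (n : ℤ) ≤ -α - 1 then
    deriv (fun s : ℂ => phiJC α β n s x) 0 -
      deriv (fun s : ℂ => phiJC α β (-α - β - (n : ℤ) - 1).toNat s x) 0
  else if -α ≤ (n : ℤ) ∧ (n : ℤ) ≤ -α - β - 1 then
    (-1 : ℂ) ^ ((β : ℤ) + (n : ℤ)) *
      ((((n : ℤ) + α).toNat.factorial : ℂ) * (((n : ℤ) + β).toNat.factorial : ℂ) *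
        ((-α - β - (n : ℤ) - 1).toNat.factorial : ℂ)) / (n.factorial : ℂ) *
      (((M ((α + (n : ℤ)).toNat) : ℂ) - 1)⁻¹ *
          jacobiC (α : ℂ) (β : ℂ) ((-α - β - (n : ℤ) - 1).toNat) x +
        ((1 - x) / 2) ^ (-α).toNat * jacobiC (-(α : ℂ)) (β : ℂ) ((α + (n : ℤ)).toNat) x)
  else jacobiC (α : ℂ) (β : ℂ) n x

/-- Exceptional Hahn polynomial `h_n^{α,β,N;M,F}(x)` (complex variable). -/
def exHahnC (α β : ℤ) (N : ℂ) (M : ℕ → ℝ) (F : Finset ℕ) (n : ℕ) (x : ℂ) : ℂ :=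
  Matrix.det (Matrix.of fun i j : Fin (F.card + 1) =>
    Fin.cases (HhatC α β N M (n - uF F) (x + ((j : ℕ) : ℂ)))
      (fun k => HhatC α β N M (elemOf F k) (x + ((j : ℕ) : ℂ))) i)

/-- Exceptional Jacobi polynomial `P_n^{α,β;M,F}(x)` (complex variable). -/
def exJacobiC (α β : ℤ) (M : ℕ → ℝ) (F : Finset ℕ) (n : ℕ) (x : ℂ) : ℂ :=
  Matrix.det (Matrix.of fun i j : Fin (F.card + 1) =>
    Fin.cases (iteratedDeriv (j : ℕ) (PhatC α β M (n - uF F)) x)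
      (fun k => iteratedDeriv (j : ℕ) (PhatC α β M (elemOf F k)) x) i)

end ExceptionalHahnJacobiComplex

/-!
Under the substitution `x ↦ (1 - x) N / 2` the unit shifts in the Hahn determinant become shifts by
`h = -2 / N`. Column operations turn the determinant of the shifts `x + j h` into the determinant of
the iterated forward differences, and the `j`-th difference divided by `h ^ j` converges to the
`j`-th derivative along every locally uniformly convergent family of entire functions: by Cauchy's
estimates the derivatives converge, and the mean value inequality compares difference quotients
with them. So the rescaled Casoratian tends to the Wronskian of the entrywise limits.

The entrywise limit is `Ĥ_n / N ^ n → (-1) ^ n n! P̂_n`. It can be read off the hypergeometric sums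
term by term, because `A / N → a` implies `(A)_k / N ^ k → a ^ k`; expanding the Jacobi polynomial
in powers of `(1 - x) / 2` by the Chu–Vandermonde identity identifies the result.
-/

open Filter Topology Bornology Function

section ContinuousConvergence

/-- Continuous convergence of a family of functions `G` to `g` along the filter `l`: the values
`G i y` tend to `g x` as `i` runs along `l` and `y` tends to `x`, jointly. When `l` is nontrivial
this amounts to locally uniform convergence to a continuous limit, but it is stable under algebraic
operations without any boundedness assumption. -/
def TendstoContinuously {ι X Y : Type*} [TopologicalSpace X] [TopologicalSpace Y]
    (G : ι → X → Y) (g : X → Y) (l : Filter ι) : Prop :=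
  ∀ x, Tendsto (fun p : ι × X => G p.1 p.2) (l ×ˢ 𝓝 x) (𝓝 (g x))

namespace TendstoContinuously

variable {ι X Y : Type*} [TopologicalSpace X] {l : Filter ι}

theorem tendsto [TopologicalSpace Y] {G : ι → X → Y} {g : X → Y}
    (hG : TendstoContinuously G g l) (x : X) : Tendsto (G · x) l (𝓝 (g x)) :=
  (hG x).comp (tendsto_id.prodMk tendsto_const_nhds)

protected theorem continuous [TopologicalSpace Y] [RegularSpace Y] [l.NeBot] {G : ι → X → Y}
    {g : X → Y} (hG : TendstoContinuously G g l) : Continuous g := by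
  refine continuous_iff_continuousAt.2 fun x =>
    (closed_nhds_basis (g x)).tendsto_right_iff.2 fun V ⟨hV, hVclosed⟩ => ?_
  have hGV : ∀ᶠ y in 𝓝 x, ∀ᶠ i in l, G i y ∈ V :=
    (eventually_swap_iff.1 ((hG x).eventually hV)).curry
  filter_upwards [hGV] with y hy
  exact hVclosed.mem_of_tendsto (hG.tendsto y) hy

theorem tendstoLocallyUniformly [UniformSpace Y] [l.NeBot] {G : ι → X → Y} {g : X → Y}
    (hG : TendstoContinuously G g l) : TendstoLocallyUniformly G g l := by
  rw [tendstoLocallyUniformly_iff_forall_tendsto]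
  intro x
  have hg : Tendsto (fun p : ι × X => g p.2) (l ×ˢ 𝓝 x) (𝓝 (g x)) :=
    (hG.continuous.tendsto x).comp tendsto_snd
  exact (hg.prodMk_nhds (hG x)).mono_right (nhds_le_uniformity (g x))

theorem tendstoUniformlyOn [UniformSpace Y] [l.NeBot] {G : ι → X → Y} {g : X → Y}
    (hG : TendstoContinuously G g l) {K : Set X} (hK : IsCompact K) :
    TendstoUniformlyOn G g l K :=
  (tendstoLocallyUniformlyOn_iff_tendstoUniformlyOn_of_compact hK).1
    hG.tendstoLocallyUniformly.tendstoLocallyUniformlyOn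

theorem of_tendstoLocallyUniformly [UniformSpace Y] {G : ι → X → Y} {g : X → Y}
    (hG : TendstoLocallyUniformly G g l) (hg : Continuous g) : TendstoContinuously G g l :=
  fun x => tendsto_comp_of_locally_uniform_limit (F := fun p : ι × X => G p.1) hg.continuousAt
    tendsto_snd fun u hu => by
      obtain ⟨t, ht, hGt⟩ := hG u hu x
      exact ⟨t, ht, tendsto_fst.eventually hGt⟩

end TendstoContinuously

end ContinuousConvergence

section Casoratian

theorem det_shift_eq_det_fwdDiff_iter {A R : Type*} [AddCommMonoid A] [CommRing R] {m : ℕ}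
    (h : A) (f : Fin m → A → R) (x : A) :
    (Matrix.of fun i j : Fin m => f i (x + (j : ℕ) • h)).det =
      (Matrix.of fun i j : Fin m => (fwdDiff h)^[j] (f i) x).det := by
  let U : Matrix (Fin m) (Fin m) R := Matrix.of fun k j => ((j : ℕ).choose k : R)
  have hU : U.det = 1 := by
    rw [Matrix.det_of_isUpperTriangular]
    · simp [U]
    · intro k j hkj
      simp only [U, Matrix.of_apply, Nat.choose_eq_zero_of_lt (show (j : ℕ) < k from hkj),
        Nat.cast_zero]
  rw [← mul_one (Matrix.det (Matrix.of fun i j : Fin m => (fwdDiff h)^[j] (f i) x)), ← hU,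
    ← Matrix.det_mul]
  congr 1
  ext i j
  simp only [U, Matrix.mul_apply, Matrix.of_apply]
  rw [Fin.sum_univ_eq_sum_range (fun k => (fwdDiff h)^[k] (f i) x * ((j : ℕ).choose k : R)) m,
    shift_eq_sum_fwdDiff_iter h (f i)]
  refine sum_subset_zero_on_sdiff (range_mono j.isLt) (fun k hk => ?_) fun k _ => ?_
  · rw [Nat.choose_eq_zero_of_lt (by grind), Nat.cast_zero, mul_zero]
  · rw [nsmul_eq_mul, mul_comm]

theorem norm_fwdDiff_div_sub_le {s : Set ℂ} (hs : Convex ℝ s) {f : ℂ → ℂ}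
    (hf : Differentiable ℂ f) {c : ℂ} {C : ℝ} (hC : ∀ y ∈ s, ‖deriv f y - c‖ ≤ C) {x h : ℂ}
    (hx : x ∈ s) (hxh : x + h ∈ s) (hh : h ≠ 0) : ‖fwdDiff h f x / h - c‖ ≤ C := by
  have hderiv (y : ℂ) : HasDerivAt (fun z => f z - c * z) (deriv f y - c) y := by
    simpa using (hf y).hasDerivAt.fun_sub ((hasDerivAt_id y).const_mul c)
  have hmean := hs.norm_image_sub_le_of_norm_hasDerivWithin_le
    (fun y _ => (hderiv y).hasDerivWithinAt) hC hx hxh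
  have hsplit : fwdDiff h f x / h - c = (f (x + h) - c * (x + h) - (f x - c * x)) / h := by
    rw [fwdDiff]
    field_simp
    ring
  rw [add_sub_cancel_left] at hmean
  rwa [hsplit, norm_div, div_le_iff₀ (norm_pos_iff.2 hh)]

variable {ι : Type*} {l : Filter ι} [l.NeBot] {h : ι → ℂ}

namespace TendstoContinuously

variable {G : ι → ℂ → ℂ} {g : ℂ → ℂ}

protected theorem deriv (hG : TendstoContinuously G g l) (hd : ∀ i, Differentiable ℂ (G i)) :
    TendstoContinuously (fun i => deriv (G i)) (deriv g) l := by
  have hunif : TendstoLocallyUniformlyOn G g l Set.univ :=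
    hG.tendstoLocallyUniformly.tendstoLocallyUniformlyOn
  have hdOn : ∀ᶠ i in l, DifferentiableOn ℂ (G i) Set.univ :=
    Eventually.of_forall fun i => (hd i).differentiableOn
  have hg : Differentiable ℂ g :=
    differentiableOn_univ.1 (hunif.differentiableOn hdOn isOpen_univ)
  exact of_tendstoLocallyUniformly
    (tendstoLocallyUniformlyOn_univ.1 (hunif.deriv hdOn isOpen_univ))
    (hg.contDiff.continuous_deriv (n := 1) le_rfl)

theorem fwdDiff_div (hG : TendstoContinuously G g l) (hd : ∀ i, Differentiable ℂ (G i))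
    (hh : Tendsto h l (𝓝[≠] 0)) :
    TendstoContinuously (fun i x => fwdDiff (h i) (G i) x / h i) (deriv g) l := by
  intro x
  rw [Metric.nhds_basis_closedBall.tendsto_right_iff]
  intro ε hε
  obtain ⟨good, hgood, near, hnear, hclose⟩ := eventually_prod_iff.1
    ((hG.deriv hd x).eventually (Metric.closedBall_mem_nhds _ hε))
  obtain ⟨r, hr, hball⟩ := Metric.eventually_nhds_iff_ball.1 hnear
  have hshift : Tendsto (fun p : ι × ℂ => p.2 + h p.1) (l ×ˢ 𝓝 x) (𝓝 x) := by
    simpa using tendsto_snd.add ((hh.mono_right nhdsWithin_le_nhds).comp tendsto_fst)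
  filter_upwards [tendsto_fst.eventually hgood,
    tendsto_snd.eventually (Metric.ball_mem_nhds x hr), hshift (Metric.ball_mem_nhds x hr),
    tendsto_fst.eventually (hh.eventually self_mem_nhdsWithin)] with p hp hy hyh hne
  exact mem_closedBall_iff_norm.2 <| norm_fwdDiff_div_sub_le (convex_ball x r) (hd p.1)
    (fun y hy => mem_closedBall_iff_norm.1 (hclose hp (hball y hy))) hy hyh hne

theorem fwdDiff_iter_div_pow (hG : TendstoContinuously G g l)
    (hd : ∀ i, Differentiable ℂ (G i)) (hh : Tendsto h l (𝓝[≠] 0)) (k : ℕ) :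
    TendstoContinuously (fun i x => (fwdDiff (h i))^[k] (G i) x / h i ^ k)
      (iteratedDeriv k g) l := by
  induction k generalizing G g with
  | zero => simpa using hG
  | succ k ih =>
    have hquot (i : ι) : Differentiable ℂ ((h i)⁻¹ • fwdDiff (h i) (G i)) := by
      have := hd i
      unfold fwdDiff
      fun_prop
    have hlim : TendstoContinuously (fun i => (h i)⁻¹ • fwdDiff (h i) (G i)) (deriv g) l :=
      fun x => (hG.fwdDiff_div hd hh x).congr fun p => div_eq_inv_mul _ _
    rw [iteratedDeriv_succ']
    refine fun x => (ih hlim hquot x).congr fun p => ?_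
    simp only [fwdDiff_iter_const_smul, iterate_succ_apply, Pi.smul_apply, smul_eq_mul, pow_succ']
    field_simp

end TendstoContinuously

theorem sum_val_fin_eq_choose_two (m : ℕ) : ∑ i : Fin m, (i : ℕ) = m.choose 2 := by
  rw [Fin.sum_univ_eq_sum_range (fun i => i) m, sum_range_id, Nat.choose_two_right]

theorem tendstoContinuously_casoratian_div_pow {m : ℕ} {G : Fin m → ι → ℂ → ℂ} {g : Fin m → ℂ → ℂ}
    (hG : ∀ k, TendstoContinuously (G k) (g k) l) (hd : ∀ k i, Differentiable ℂ (G k i))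
    (hh : Tendsto h l (𝓝[≠] 0)) :
    TendstoContinuously
      (fun i x => (Matrix.of fun k j : Fin m => G k i (x + (j : ℕ) • h i)).det / h i ^ m.choose 2)
      (fun x => (Matrix.of fun k j : Fin m => iteratedDeriv j (g k) x).det) l := by
  intro x
  have hentries : Tendsto (fun p : ι × ℂ => Matrix.of fun k j : Fin m =>
      (fwdDiff (h p.1))^[j] (G k p.1) p.2 / h p.1 ^ (j : ℕ)) (l ×ˢ 𝓝 x)
      (𝓝 (Matrix.of fun k j : Fin m => iteratedDeriv j (g k) x)) :=
    tendsto_pi_nhds.2 fun k => tendsto_pi_nhds.2 fun j =>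
      (hG k).fwdDiff_iter_div_pow (hd k) hh j x
  refine (((continuous_id.matrix_det).tendsto _).comp hentries).congr fun p => ?_
  have hscale := Matrix.det_mul_row (fun j : Fin m => (h p.1 ^ (j : ℕ))⁻¹)
    (Matrix.of fun k j : Fin m => (fwdDiff (h p.1))^[j] (G k p.1) p.2)
  rw [prod_inv_distrib, prod_pow_eq_pow_sum, sum_val_fin_eq_choose_two, ← div_eq_inv_mul,
    ← det_shift_eq_det_fwdDiff_iter] at hscale
  simpa only [div_eq_inv_mul, comp_apply, id, Matrix.of_apply] using hscale

end Casoratian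

section JacobiExpansion

theorem pochC_eq_ascPochhammer_eval (z : ℂ) (k : ℕ) : pochC z k = (ascPochhammer ℂ k).eval z := by
  induction k with
  | zero => simp [pochC]
  | succ k ih => rw [ascPochhammer_succ_eval, ← ih, pochC, prod_range_succ, pochC]

theorem genBinomC_eq_ringChoose (z : ℂ) (k : ℕ) : genBinomC z k = Ring.choose z k := by
  rw [Ring.choose_eq_smul, Polynomial.descPochhammer_smeval_eq_ascPochhammer,
    Polynomial.ascPochhammer_smeval_eq_eval, ← descPochhammer_eval_eq_ascPochhammer,
    descPochhammer_eval_eq_prod_range, genBinomC, smul_eq_mul, div_eq_inv_mul]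

theorem pochC_sub_natCast_add_one (z : ℂ) (k : ℕ) :
    pochC (z - k + 1) k = k.factorial * Ring.choose z k := by
  rw [pochC_eq_ascPochhammer_eval, ← descPochhammer_eval_eq_ascPochhammer,
    descPochhammer_eval_eq_prod_range, ← genBinomC_eq_ringChoose, genBinomC,
    mul_div_cancel₀ _ (Nat.cast_ne_zero.2 k.factorial_ne_zero)]

theorem pochC_neg_natCast (n k : ℕ) : pochC (-(n : ℂ)) k = (-1) ^ k * n.descFactorial k := by
  rw [pochC_eq_ascPochhammer_eval, ascPochhammer_eval_neg_eq_descPochhammer,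
    descPochhammer_eval_eq_descFactorial]

theorem sum_choose_mul_choose_mul_choose {R : Type*} [CommRing R] [BinomialRing R] (a b : R)
    {n k : ℕ} (hk : k ≤ n) :
    ∑ s ∈ range (k + 1),
        Ring.choose (n + a) (n - s) * Ring.choose (n + b) s * ((n - s).choose (k - s) : R) =
      Ring.choose (n + a) (n - k) * Ring.choose (a + b + n + k) k := by
  have hvandermonde : Ring.choose (a + b + n + k) k =
      ∑ s ∈ range (k + 1), Ring.choose (n + b) s * Ring.choose (a + k) (k - s) := by
    rw [show a + b + n + k = (n + b) + (a + k) by ring, Ring.add_choose_eq k (Commute.all _ _),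
      Nat.sum_antidiagonal_eq_sum_range_succ
        (fun i j => Ring.choose (n + b) i * Ring.choose (a + k) j)]
  rw [hvandermonde, mul_sum]
  refine sum_congr rfl fun s hs => ?_
  have hs : s ≤ k := by grind
  have htrinomial : Ring.choose (n + a) (n - s) * ((n - s).choose (k - s) : R) =
      Ring.choose (n + a) (n - k) * Ring.choose (a + k) (k - s) := by
    have := Ring.choose_smul_choose (n + a) (show n - k ≤ n - s by omega)
    rwa [show n - s - (n - k) = k - s by omega, Nat.cast_sub hk,
      show (n : R) + a - (n - k) = a + k by ring,
      Nat.choose_symm_of_eq_add (show n - s = n - k + (k - s) by omega),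
      nsmul_eq_mul, mul_comm] at this
  linear_combination Ring.choose (n + b) s * htrinomial

theorem pow_mul_add_one_pow_eq_sum_Ico {R : Type*} [CommSemiring R] (y : R) {n s : ℕ}
    (hs : s ≤ n) :
    y ^ s * (y + 1) ^ (n - s) = ∑ k ∈ Ico s (n + 1), ((n - s).choose (k - s) : R) * y ^ k := by
  rw [sum_Ico_eq_sum_range, add_pow, mul_sum, show n + 1 - s = n - s + 1 by omega]
  refine sum_congr rfl fun k _ => ?_
  rw [Nat.add_sub_cancel_left, one_pow, pow_add]
  ring

theorem jacobiC_eq_sum_pow_mul_pow (a b : ℂ) (n : ℕ) (x : ℂ) :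
    jacobiC a b n x = ∑ s ∈ range (n + 1), Ring.choose (n + a) (n - s) * Ring.choose (n + b) s *
      (((x - 1) / 2) ^ s * ((x - 1) / 2 + 1) ^ (n - s)) := by
  rw [jacobiC, ← sum_range_reflect, mul_sum]
  refine sum_congr rfl fun s hs => ?_
  have hs : s ≤ n := by grind
  have hpow : (2 : ℂ) ^ n = 2 ^ s * 2 ^ (n - s) := by rw [← pow_add, Nat.add_sub_cancel' hs]
  rw [Nat.add_sub_cancel, Nat.sub_sub_self hs, genBinomC_eq_ringChoose, genBinomC_eq_ringChoose,
    show (x - 1) / 2 + 1 = (x + 1) / 2 by ring, div_pow, div_pow, inv_pow, hpow]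
  field_simp

theorem jacobiC_eq_sum_choose_mul_pow (a b : ℂ) (n : ℕ) (x : ℂ) :
    jacobiC a b n x = ∑ k ∈ range (n + 1),
      Ring.choose (n + a) (n - k) * Ring.choose (a + b + n + k) k * ((x - 1) / 2) ^ k := by
  set y := (x - 1) / 2 with hy
  calc jacobiC a b n x
      = ∑ s ∈ range (n + 1), ∑ k ∈ Ico s (n + 1), Ring.choose (n + a) (n - s) *
          Ring.choose (n + b) s * (((n - s).choose (k - s) : ℂ) * y ^ k) := by
        rw [jacobiC_eq_sum_pow_mul_pow]
        refine sum_congr rfl fun s hs => ?_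
        rw [← hy, pow_mul_add_one_pow_eq_sum_Ico y (mem_range_succ_iff.1 hs), mul_sum]
    _ = ∑ k ∈ range (n + 1), ∑ s ∈ range (k + 1), Ring.choose (n + a) (n - s) *
          Ring.choose (n + b) s * (((n - s).choose (k - s) : ℂ) * y ^ k) :=
        sum_comm' fun s k => by grind
    _ = _ := sum_congr rfl fun k hk => by
        rw [← sum_choose_mul_choose_mul_choose a b (mem_range_succ_iff.1 hk), sum_mul]
        exact sum_congr rfl fun s _ => (mul_assoc _ _ _).symm

theorem factorial_mul_jacobiC (a b : ℂ) (n : ℕ) (x : ℂ) :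
    n.factorial * jacobiC a b n x = ∑ k ∈ range (n + 1),
      pochC (-(n : ℂ)) k * pochC (a + b + n + 1) k * pochC (a + k + 1) (n - k) *
        ((1 - x) / 2) ^ k / k.factorial := by
  rw [jacobiC_eq_sum_choose_mul_pow, mul_sum]
  refine sum_congr rfl fun k hk => ?_
  have hk : k ≤ n := mem_range_succ_iff.1 hk
  have hsum : pochC (a + b + n + 1) k = k.factorial * Ring.choose (a + b + n + k) k := by
    rw [← pochC_sub_natCast_add_one]
    ring_nf
  have htail : pochC (a + k + 1) (n - k) = (n - k).factorial * Ring.choose (n + a) (n - k) := by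
    rw [← pochC_sub_natCast_add_one, Nat.cast_sub hk]
    ring_nf
  have hsign : ((x - 1) / 2) ^ k = (-1) ^ k * ((1 - x) / 2) ^ k := by
    rw [← mul_pow]
    ring
  have hk0 : (k.factorial : ℂ) ≠ 0 := Nat.cast_ne_zero.2 k.factorial_ne_zero
  rw [hsum, htail, hsign, pochC_neg_natCast, ← Nat.factorial_mul_descFactorial hk, Nat.cast_mul]
  field_simp

end JacobiExpansion

section HahnLimit

variable {ι : Type*} {l : Filter ι} {N A X : ι → ℂ} {a : ℂ}

theorem tendsto_self_div_self (hN : Tendsto N l (cobounded ℂ)) :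
    Tendsto (fun i => N i / N i) l (𝓝 1) :=
  tendsto_const_nhds.congr' <| (hN.eventually_ne_cobounded 0).mono fun _ h => (div_self h).symm

theorem tendsto_const_div_zero (hN : Tendsto N l (cobounded ℂ)) (c : ℂ) :
    Tendsto (fun i => c / N i) l (𝓝 0) := by
  simpa only [div_eq_mul_inv, mul_zero, comp_apply] using
    (tendsto_inv₀_cobounded.comp hN).const_mul c

theorem tendsto_add_const_div (hN : Tendsto N l (cobounded ℂ))
    (hA : Tendsto (fun i => A i / N i) l (𝓝 a)) (c : ℂ) :
    Tendsto (fun i => (A i + c) / N i) l (𝓝 a) := by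
  simpa only [add_div, add_zero] using hA.add (tendsto_const_div_zero hN c)

theorem tendsto_neg_div (hA : Tendsto (fun i => A i / N i) l (𝓝 a)) :
    Tendsto (fun i => -A i / N i) l (𝓝 (-a)) := by
  simpa only [neg_div] using hA.neg

theorem tendsto_pochC_div_pow (hN : Tendsto N l (cobounded ℂ))
    (hA : Tendsto (fun i => A i / N i) l (𝓝 a)) (k : ℕ) :
    Tendsto (fun i => pochC (A i) k / N i ^ k) l (𝓝 (a ^ k)) := by
  have hprod := tendsto_finsetProd (range k) fun (j : ℕ) _ => tendsto_add_const_div hN hA (j : ℂ)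
  simpa only [pochC, prod_div_distrib, prod_const, card_range] using hprod

theorem tendsto_hahnC_div_pow (hN : Tendsto N l (cobounded ℂ))
    (hA : Tendsto (fun i => A i / N i) l (𝓝 1)) {x : ℂ}
    (hX : Tendsto (fun i => X i / N i) l (𝓝 ((1 - x) / 2))) (a b : ℂ) (n : ℕ) :
    Tendsto (fun i => hahnC a b (A i) n (X i) / N i ^ n) l
      (𝓝 ((-1) ^ n * n.factorial * jacobiC a b n x)) := by
  simp only [hahnC, mul_assoc ((-1 : ℂ) ^ n), factorial_mul_jacobiC, sum_div, mul_sum]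
  refine tendsto_finsetSum _ fun k hk => ?_
  have hk : k ≤ n := mem_range_succ_iff.1 hk
  have hpow (z : ℂ) : z ^ n = z ^ (n - k) * z ^ k := by rw [← pow_add, Nat.sub_add_cancel hk]
  have hfactors := (tendsto_pochC_div_pow hN
    (tendsto_add_const_div hN (tendsto_neg_div hA) k) (n - k)).mul
    (tendsto_pochC_div_pow hN (tendsto_neg_div hX) k)
  convert hfactors.const_mul (pochC (-(n : ℂ)) k * pochC (a + b + n + 1) k *
    pochC (a + k + 1) (n - k) / k.factorial) using 2 with i
  · rw [hpow]
    ring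
  · rw [hpow, neg_pow ((1 - x) / 2)]
    ring

theorem tendsto_hahnC_combination_div_pow (hN : Tendsto N l (cobounded ℂ)) {x : ℂ}
    (hX : Tendsto (fun i => X i / N i) l (𝓝 ((1 - x) / 2))) (a b c μ : ℂ) {n p q r t : ℕ}
    (hpq : p + q = n) (htr : t + r = n) :
    Tendsto (fun i =>
      (r.factorial * pochC (-X i) p * hahnC (-a) b (a + N i) q (X i + a) +
        q.factorial * pochC (-N i + c) t / μ * hahnC a b (N i) r (X i)) / N i ^ n) l
      (𝓝 ((-1) ^ n * (q.factorial * r.factorial) *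
        (μ⁻¹ * jacobiC a b r x + ((1 - x) / 2) ^ p * jacobiC (-a) b q x))) := by
  have hself := tendsto_self_div_self hN
  have hleft := (tendsto_pochC_div_pow hN (tendsto_neg_div hX) p).mul
    (tendsto_hahnC_div_pow hN (tendsto_add_const_div hN hself a)
      (tendsto_add_const_div hN hX a) (-a) b q)
  have hright := (tendsto_pochC_div_pow hN
    (tendsto_add_const_div hN (tendsto_neg_div hself) c) t).mul
    (tendsto_hahnC_div_pow hN hself hX a b r)
  have hpow₁ (z : ℂ) : z ^ n = z ^ p * z ^ q := by rw [← hpq, pow_add]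
  have hpow₂ (z : ℂ) : z ^ n = z ^ t * z ^ r := by rw [← htr, pow_add]
  convert (hleft.const_mul (r.factorial : ℂ)).add (hright.const_mul (q.factorial / μ)) using 2
    with i
  · rw [add_div]
    congr 1
    · rw [hpow₁, add_comm a]
      ring
    · rw [hpow₂]
      ring
  · rw [mul_add, add_comm]
    congr 1
    · rw [hpow₁, neg_pow ((1 - x) / 2)]
      ring
    · rw [hpow₂]
      ring

end HahnLimit

section PhiDerivative

/-- The `s`-dependent factor `(u-s+α+β+1)_j / (α-s+1)_j` of the `j`-th term of the hypergeometric
sums defining both `phiHC` and `phiJC`. -/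
noncomputable def phiRatio (α β : ℤ) (u j : ℕ) (s : ℂ) : ℂ :=
  pochC ((u : ℂ) - s + (α : ℂ) + (β : ℂ) + 1) j / pochC ((α : ℂ) - s + 1) j

/-- The normalizing index `m = max(u, -α-β-u-1)` of `phiHC` and `phiJC`. -/
abbrev phiDegree (α β : ℤ) (u : ℕ) : ℕ := max u (-α - β - (u : ℤ) - 1).toNat

variable {α : ℤ} (β : ℤ) {u j : ℕ}

theorem differentiableAt_phiRatio_zero (hu : (u : ℤ) ≤ -α - 1) (hj : j ≤ u) :
    DifferentiableAt ℂ (phiRatio α β u j) 0 := by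
  have hden : pochC ((α : ℂ) - 0 + 1) j ≠ 0 := by
    refine prod_ne_zero_iff.2 fun i hi => ?_
    have : α + 1 + i ≠ 0 := by grind
    rw [sub_zero]
    exact_mod_cast this
  unfold phiRatio
  refine DifferentiableAt.div ?_ ?_ hden <;>
  · unfold pochC
    fun_prop

theorem deriv_sum_mul_phiRatio_zero (hu : (u : ℤ) ≤ -α - 1) (w : ℕ → ℂ) :
    deriv (fun s => ∑ j ∈ range (u + 1), w j * phiRatio α β u j s) 0 =
      ∑ j ∈ range (u + 1), w j * deriv (phiRatio α β u j) 0 := by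
  rw [deriv_fun_sum fun j hj =>
    (differentiableAt_phiRatio_zero β hu (mem_range_succ_iff.1 hj)).const_mul _]
  exact sum_congr rfl fun j _ => deriv_const_mul_field _

theorem deriv_phiHC (hu : (u : ℤ) ≤ -α - 1) (N x : ℂ) :
    deriv (fun s => phiHC α β N u s x) 0 =
      pochC (α + 1) (phiDegree α β u) * pochC (-N) (phiDegree α β u) *
        ∑ j ∈ range (u + 1), pochC (-(u : ℂ)) j / j.factorial * (pochC (-x) j / pochC (-N) j) *
          deriv (phiRatio α β u j) 0 := by
  rw [← deriv_sum_mul_phiRatio_zero β hu, ← deriv_const_mul_field]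
  congr 1 with s
  rw [phiHC]
  congr 1
  refine sum_congr rfl fun j _ => ?_
  rw [phiRatio]
  ring

theorem deriv_phiJC (hu : (u : ℤ) ≤ -α - 1) (x : ℂ) :
    deriv (fun s => phiJC α β u s x) 0 =
      pochC (α + 1) (phiDegree α β u) / (phiDegree α β u).factorial *
        ∑ j ∈ range (u + 1), pochC (-(u : ℂ)) j / j.factorial * ((1 - x) / 2) ^ j *
          deriv (phiRatio α β u j) 0 := by
  rw [← deriv_sum_mul_phiRatio_zero β hu, ← deriv_const_mul_field]
  congr 1 with s
  rw [phiJC, Nat.monotone_factorial.map_max]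
  congr 1
  refine sum_congr rfl fun j _ => ?_
  rw [phiRatio]
  ring

theorem tendsto_deriv_phiHC_div_pow {ι : Type*} {l : Filter ι} {N X : ι → ℂ}
    (hN : Tendsto N l (cobounded ℂ)) {x : ℂ}
    (hX : Tendsto (fun i => X i / N i) l (𝓝 ((1 - x) / 2))) (hu : (u : ℤ) ≤ -α - 1) :
    Tendsto (fun i => deriv (fun s => phiHC α β (N i) u s (X i)) 0 / N i ^ phiDegree α β u) l
      (𝓝 ((-1) ^ phiDegree α β u * (phiDegree α β u).factorial *
        deriv (fun s => phiJC α β u s x) 0)) := by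
  simp only [deriv_phiHC β hu, deriv_phiJC β hu]
  have hnegN (k : ℕ) : Tendsto (fun i => pochC (-N i) k / N i ^ k) l (𝓝 ((-1) ^ k)) :=
    tendsto_pochC_div_pow hN (tendsto_neg_div (tendsto_self_div_self hN)) k
  have hquot (j : ℕ) :
      Tendsto (fun i => pochC (-X i) j / pochC (-N i) j) l (𝓝 (((1 - x) / 2) ^ j)) := by
    have hdiv := (tendsto_pochC_div_pow hN (tendsto_neg_div hX) j).div (hnegN j)
      (pow_ne_zero j (neg_ne_zero.2 one_ne_zero))
    rw [← div_pow, neg_div_neg_eq, div_one] at hdiv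
    refine hdiv.congr' ((hN.eventually_ne_cobounded 0).mono fun i hi => ?_)
    exact div_div_div_cancel_right₀ (pow_ne_zero j hi) _ _
  have hsum := tendsto_finsetSum (range (u + 1)) fun j _ =>
    ((hquot j).const_mul (pochC (-(u : ℂ)) j / j.factorial)).mul_const
      (deriv (phiRatio α β u j) 0)
  have hfactorial : ((phiDegree α β u).factorial : ℂ) ≠ 0 :=
    Nat.cast_ne_zero.2 (Nat.factorial_ne_zero _)
  convert ((hnegN (phiDegree α β u)).const_mul (pochC (α + 1) (phiDegree α β u))).mul hsum
    using 2 with i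
  · ring
  · field_simp

end PhiDerivative

section HhatLimit

theorem ceil_intCast_div_two_le_iff (k n : ℤ) : ⌈(k : ℚ) / 2⌉ ≤ n ↔ k ≤ 2 * n := by
  rw [Int.ceil_le, div_le_iff₀' two_pos]
  exact_mod_cast Iff.rfl

theorem differentiable_hahnC (a b N : ℂ) (n : ℕ) : Differentiable ℂ (hahnC a b N n) := by
  unfold hahnC pochC
  fun_prop

theorem differentiable_HhatC (α : ℤ) {β : ℤ} (hβ : β ≤ -1) (N : ℂ) (M : ℕ → ℝ) (n : ℕ) :
    Differentiable ℂ (HhatC α β N M n) := by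
  unfold HhatC
  simp only [ceil_intCast_div_two_le_iff]
  split_ifs with hlow hmid
  · simp only [deriv_phiHC β (show (n : ℤ) ≤ -α - 1 by omega),
      deriv_phiHC β (show ((-α - β - (n : ℤ) - 1).toNat : ℤ) ≤ -α - 1 by omega)]
    unfold pochC
    fun_prop
  · have hleft := (differentiable_hahnC (-α) β (α + N) (α + n).toNat).comp
      (differentiable_id.add_const (α : ℂ))
    have hright := differentiable_hahnC α β N (-α - β - n - 1).toNat
    unfold pochC
    fun_prop
  · exact differentiable_hahnC _ _ _ _

theorem tendsto_HhatC_div_pow {α β : ℤ} (hαβ : α ≤ β) (hβ : β ≤ -1) (M : ℕ → ℝ) (n : ℕ)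
    {ι : Type*} {l : Filter ι} {N X : ι → ℂ} (hN : Tendsto N l (cobounded ℂ)) {x : ℂ}
    (hX : Tendsto (fun i => X i / N i) l (𝓝 ((1 - x) / 2))) :
    Tendsto (fun i => HhatC α β (N i) M n (X i) / N i ^ n) l
      (𝓝 ((-1) ^ n * n.factorial * PhatC α β M n x)) := by
  unfold HhatC PhatC
  simp only [ceil_intCast_div_two_le_iff]
  split_ifs with hlow hmid
  · have hderiv := tendsto_deriv_phiHC_div_pow β hN hX (show (n : ℤ) ≤ -α - 1 by omega)
    have hderiv' := tendsto_deriv_phiHC_div_pow β hN hX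
      (show ((-α - β - (n : ℤ) - 1).toNat : ℤ) ≤ -α - 1 by omega)
    rw [show phiDegree α β n = n by unfold phiDegree; omega] at hderiv
    rw [show phiDegree α β (-α - β - (n : ℤ) - 1).toNat = n by unfold phiDegree; omega] at hderiv'
    simpa only [sub_div, mul_sub] using hderiv.sub hderiv'
  · have hcomb := tendsto_hahnC_combination_div_pow hN hX α β (-α - β - n - 1)
      (M (α + n).toNat - 1) (show (-α).toNat + (α + n).toNat = n by omega)
      (show (2 * n + α + β + 1).toNat + (-α - β - n - 1).toNat = n by omega)
    have hfactorial : (n.factorial : ℂ) ≠ 0 := Nat.cast_ne_zero.2 n.factorial_ne_zero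
    convert hcomb.const_mul ((-1) ^ (β + n) * ((β + n).toNat.factorial : ℂ)) using 2 with i
    · ring_nf
    · rw [add_comm (n : ℤ), add_comm (n : ℤ)]
      field_simp
  · exact tendsto_hahnC_div_pow hN (tendsto_self_div_self hN) hX _ _ _

end HhatLimit

section RowDegrees

/-- The degrees of the polynomials in the rows of the determinants `exHahnC` and `exJacobiC`:
`n - u_F` for the first row, followed by the elements of `F` in increasing order. -/
noncomputable def rowDegree (F : Finset ℕ) (n : ℕ) : Fin (F.card + 1) → ℕ :=
  Fin.cases (n - uF F) (elemOf F)

theorem exHahnC_eq_det_rowDegree (α β : ℤ) (N : ℂ) (M : ℕ → ℝ) (F : Finset ℕ) (n : ℕ) (x : ℂ) :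
    exHahnC α β N M F n x =
      (Matrix.of fun i j : Fin (F.card + 1) =>
        HhatC α β N M (rowDegree F n i) (x + (j : ℕ))).det := by
  rw [exHahnC]
  congr 2 with i j
  cases i using Fin.cases <;> rfl

theorem exJacobiC_eq_det_rowDegree (α β : ℤ) (M : ℕ → ℝ) (F : Finset ℕ) (n : ℕ) (x : ℂ) :
    exJacobiC α β M F n x = (Matrix.of fun i j : Fin (F.card + 1) =>
      iteratedDeriv j (PhatC α β M (rowDegree F n i)) x).det := by
  rw [exJacobiC]
  congr 2 with i j
  cases i using Fin.cases <;> rfl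

@[to_additive]
theorem prod_rowDegree {R : Type*} [CommMonoid R] (F : Finset ℕ) (n : ℕ) (g : ℕ → R) :
    ∏ i, g (rowDegree F n i) = g (n - uF F) * ∏ f ∈ F, g f := by
  rw [Fin.prod_univ_succ, ← prod_coe_sort F]
  exact congrArg _ ((F.orderIsoOfFin rfl).toEquiv.prod_comp fun f : F => g f)

theorem choose_two_card_succ_le_sum {F : Finset ℕ} (hF : ∀ f ∈ F, 0 < f) :
    (F.card + 1).choose 2 ≤ ∑ f ∈ F, f := by
  induction F using induction_on_max with
  | empty => simp
  | insert a s hmax ih =>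
    have hcard : s.card + 1 ≤ a := by
      have hsub : s ⊆ Ioo 0 a := fun f hf =>
        mem_Ioo.2 ⟨hF f (mem_insert_of_mem hf), hmax f hf⟩
      have := card_le_card hsub
      have := hF a (mem_insert_self a s)
      grind [Nat.card_Ioo]
    have ha : a ∉ s := fun h => (hmax a h).false
    rw [card_insert_of_notMem ha, sum_insert ha, Nat.choose_succ_succ', Nat.choose_one_right]
    exact Nat.add_le_add hcard (ih fun f hf => hF f (mem_insert_of_mem hf))

theorem sum_rowDegree_eq {F : Finset ℕ} (hF : ∀ f ∈ F, 0 < f) {n : ℕ} (hn : uF F ≤ n) :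
    ∑ i, rowDegree F n i = n + (F.card + 1).choose 2 := by
  have hle := choose_two_card_succ_le_sum hF
  rw [sum_rowDegree F n fun f => f]
  unfold uF at hn ⊢
  omega

end RowDegrees

section ExceptionalLimit

variable {α β : ℤ} (M : ℕ → ℝ)

theorem tendstoContinuously_HhatC_div_pow (hαβ : α ≤ β) (hβ : β ≤ -1) (f : ℕ) :
    TendstoContinuously (fun N x => HhatC α β N M f ((1 - x) * N / 2) / N ^ f)
      (fun x => (-1) ^ f * f.factorial * PhatC α β M f x) (cobounded ℂ) := by
  intro x
  have hlim : Tendsto (fun p : ℂ × ℂ => (1 - p.2) / 2) (cobounded ℂ ×ˢ 𝓝 x) (𝓝 ((1 - x) / 2)) :=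
    (tendsto_snd.const_sub 1).div_const 2
  refine tendsto_HhatC_div_pow hαβ hβ M f tendsto_fst
    (hlim.congr' ((tendsto_fst.eventually_ne_cobounded 0).mono fun p hp => ?_))
  field_simp

theorem differentiable_HhatC_div_pow (hβ : β ≤ -1) (f : ℕ) (N : ℂ) :
    Differentiable ℂ fun x => HhatC α β N M f ((1 - x) * N / 2) / N ^ f := by
  have hH := differentiable_HhatC α hβ N M f
  fun_prop

theorem exHahnC_div_pow_eq_casoratian {F : Finset ℕ} (hF : ∀ f ∈ F, 0 < f) {n : ℕ}
    (hn : uF F ≤ n) {N : ℂ} (hN : N ≠ 0) (x : ℂ) :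
    exHahnC α β N M F n ((1 - x) * N / 2) / N ^ n = (-2) ^ (F.card + 1).choose 2 *
      ((Matrix.of fun i j : Fin (F.card + 1) =>
        HhatC α β N M (rowDegree F n i) ((1 - (x + (j : ℕ) • (-2 / N))) * N / 2) /
          N ^ rowDegree F n i).det / (-2 / N) ^ (F.card + 1).choose 2) := by
  have hshift (j : ℕ) : (1 - (x + j • (-2 / N))) * N / 2 = (1 - x) * N / 2 + j := by
    rw [nsmul_eq_mul]
    field_simp
    ring
  have hscale := Matrix.det_mul_column (fun i => (N ^ rowDegree F n i)⁻¹)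
    (Matrix.of fun i j : Fin (F.card + 1) =>
      HhatC α β N M (rowDegree F n i) ((1 - x) * N / 2 + (j : ℕ)))
  rw [prod_inv_distrib, prod_pow_eq_pow_sum, sum_rowDegree_eq hF hn,
    ← exHahnC_eq_det_rowDegree] at hscale
  simp only [hshift, div_eq_inv_mul _ (N ^ rowDegree F n _)]
  simp only [Matrix.of_apply] at hscale
  rw [hscale, pow_add, div_pow]
  field_simp

theorem wronskian_eq_mul_exJacobiC {F : Finset ℕ} (hF : ∀ f ∈ F, 0 < f) {n : ℕ} (hn : uF F ≤ n)
    (x : ℂ) :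
    (-2) ^ (F.card + 1).choose 2 * (Matrix.of fun i j : Fin (F.card + 1) =>
      iteratedDeriv j (fun x => (-1) ^ rowDegree F n i * (rowDegree F n i).factorial *
        PhatC α β M (rowDegree F n i) x) x).det =
      ((-1) ^ n * 2 ^ (F.card + 1).choose 2 * (n - uF F).factorial * ∏ f ∈ F, (f.factorial : ℂ)) *
        exJacobiC α β M F n x := by
  have hscale := Matrix.det_mul_column
    (fun i => (-1 : ℂ) ^ rowDegree F n i * (rowDegree F n i).factorial)
    (Matrix.of fun i j : Fin (F.card + 1) => iteratedDeriv j (PhatC α β M (rowDegree F n i)) x)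
  have hsign : (-1 : ℂ) ^ (F.card + 1).choose 2 * (-2) ^ (F.card + 1).choose 2 =
      2 ^ (F.card + 1).choose 2 := by
    rw [← mul_pow]
    norm_num
  rw [prod_mul_distrib, prod_pow_eq_pow_sum, sum_rowDegree_eq hF hn,
    prod_rowDegree F n fun f => (f.factorial : ℂ), ← exJacobiC_eq_det_rowDegree] at hscale
  simp only [iteratedDeriv_const_mul_field]
  simp only [Matrix.of_apply] at hscale
  rw [hscale, ← hsign, pow_add]
  ring

end ExceptionalLimit

theorem exceptional_hahn_to_jacobi_limit_general
    (α β : ℤ) (M : ℕ → ℝ) (F : Finset ℕ) (hαβ : α ≤ β) (hβ : β ≤ -1) (_hM : ∀ i, M i ≠ 1)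
    (hFpos : ∀ f ∈ F, 0 < f) (n : ℕ) (hn : uF F ≤ n) (K : Set ℂ) (hK : IsCompact K) :
    TendstoUniformlyOn (fun N x => exHahnC α β N M F n ((1 - x) * N / 2) / N ^ n)
      (fun x => ((-1) ^ n * 2 ^ (F.card + 1).choose 2 * (n - uF F).factorial *
        ∏ f ∈ F, (f.factorial : ℂ)) * exJacobiC α β M F n x) (cobounded ℂ) K := by
  have hcasoratian := tendstoContinuously_casoratian_div_pow
    (fun k => tendstoContinuously_HhatC_div_pow M hαβ hβ (rowDegree F n k))
    (fun k => differentiable_HhatC_div_pow M hβ (rowDegree F n k))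
    (tendsto_nhdsWithin_iff.2 ⟨tendsto_const_div_zero tendsto_id (-2),
      (eventually_ne_cobounded 0).mono fun N hN => div_ne_zero (by norm_num) hN⟩)
  refine TendstoContinuously.tendstoUniformlyOn (fun x => ?_) hK
  have hlim := (hcasoratian x).const_mul ((-2) ^ (F.card + 1).choose 2)
  rw [wronskian_eq_mul_exJacobiC M hFpos hn] at hlim
  refine hlim.congr' ((tendsto_fst.eventually_ne_cobounded 0).mono fun p hp => ?_)
  exact (exHahnC_div_pow_eq_casoratian M hFpos hn hp p.2).symm

/-- the exceptional Jacobi polynomials as limits of the exceptional Hahn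
polynomials, uniformly on compact subsets of `ℂ`. -/
theorem exceptional_hahn_to_jacobi_limit
    (α β : ℤ) (M : ℕ → ℝ) (F : Finset ℕ)
    (hαβ : α ≤ β) (hβ : β ≤ -1)
    (hM : ∀ i, M i ≠ 0 ∧ M i ≠ 1)
    (hFpos : ∀ f ∈ F, 0 < f)
    (hFc : ∀ k : ℕ, -β ≤ (k : ℤ) → (k : ℤ) ≤ -α - β - 1 → k ∈ F)
    (n : ℕ) (hn : inSigma F n) (K : Set ℂ) (hK : IsCompact K) :
    TendstoUniformlyOn
      (fun (N : ℝ) (x : ℂ) => exHahnC α β (N : ℂ) M F n ((1 - x) * (N : ℂ) / 2) / (N : ℂ) ^ n)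
      (fun x : ℂ =>
        ((-1 : ℂ) ^ n * 2 ^ (F.card + 1).choose 2 * ((n - uF F).factorial : ℂ) *
            ∏ f ∈ F, (f.factorial : ℂ)) * exJacobiC α β M F n x)
      Filter.atTop K := by
  intro V hV
  exact (RCLike.tendsto_ofReal_atTop_cobounded ℂ).eventually
    (exceptional_hahn_to_jacobi_limit_general α β M F hαβ hβ (fun i => (hM i).2) hFpos n hn.1 K hK
      V hV)
end
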